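/- arXiv:1301.7528 — 3 statements merged into one kernel-verified Lean document; each statement's English description precedes it below -/
import Mathlib

section
/- Let λ be a cardinal ≥ ω₂ and assume SSR(λ). Then for every weakly full stationary X ⊆ [λ]^ω there exists I ⊆ λ with |I| = ℵ₁ and ω₁ ⊆ I such that X ∩ [J]^ω is stationary in [J]^ω for every J ⊆ λ with I ⊆ J and sup⁺(J) = sup⁺(I). -/
open Set Cardinal Ordinal

noncomputable section

def omega1 : Ordinal.{0} := (aleph 1).ord
def omega2 : Ordinal.{0} := (aleph 2).ord

/-- `[A]^ω`: countably infinite subsets of `A`. -/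
def sOmega {α : Type*} (A : Set α) : Set (Set α) :=
  {x | x ⊆ A ∧ x.Countable ∧ x.Infinite}

/-- club subsets of `[A]^ω`. -/
def IsClubOmega {α : Type*} (A : Set α) (C : Set (Set α)) : Prop :=
  C ⊆ sOmega A ∧ (∀ x ∈ sOmega A, ∃ y ∈ C, x ⊆ y) ∧
    ∀ f : ℕ → Set α, (∀ n, f n ∈ C) → (∀ n, f n ⊆ f (n + 1)) → (⋃ n, f n) ∈ C

/-- stationary subsets of `[A]^ω`. -/
def IsStationaryOmega {α : Type*} (A : Set α) (S : Set (Set α)) : Prop :=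
  ∀ C, IsClubOmega A C → (S ∩ C).Nonempty

/-- `x ⊑ y` : `y` is an `ω₁`-extension of `x`. -/
def sqsubseteq (x y : Set Ordinal) : Prop :=
  x ⊆ y ∧ x ∩ Iio omega1 = y ∩ Iio omega1

/-- `S ⊆ [λ]^ω` is full if it is closed under `ω₁`-extensions. -/
def IsFull (lam : Ordinal) (S : Set (Set Ordinal)) : Prop :=
  ∀ x ∈ S, ∀ y ∈ sOmega (Iio lam), sqsubseteq x y → y ∈ S

/-- The semi-stationary reflection principle at `λ`. -/
def SSR (lam : Ordinal) : Prop :=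
  ∀ S : Set (Set Ordinal), S ⊆ sOmega (Iio lam) → IsFull lam S →
    IsStationaryOmega (Iio lam) S →
      ∃ I : Set Ordinal, I ⊆ Iio lam ∧ Iio omega1 ⊆ I ∧ #I = aleph 1 ∧
        IsStationaryOmega I (S ∩ sOmega I)

/-- `sup⁺(x) = sup {α + 1 : α ∈ x}`. -/
def supPlus (x : Set Ordinal) : Ordinal := sSup ((· + 1) '' x)

/-- `x ⊑* y`. -/
def sqsubseteqStar (lam : Ordinal) (x y : Set Ordinal) : Prop :=
  sqsubseteq x y ∧ supPlus x = supPlus y ∧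
    ∀ γ ∈ x, γ < lam → γ.cof = aleph 1 → supPlus (x ∩ Iio γ) = supPlus (y ∩ Iio γ)

/-- `X ⊆ [λ]^ω` is weakly full if it is upward closed under `⊑*`. -/
def IsWeaklyFull (lam : Ordinal) (X : Set (Set Ordinal)) : Prop :=
  ∀ x ∈ X, ∀ y ∈ sOmega (Iio lam), sqsubseteqStar lam x y → y ∈ X


section helpers

open Classical

/-- `F` is a good closure function on `A`. -/
def GoodFn {α : Type*} (A : Set α) (F : Finset α → Set α) : Prop :=
  ∀ e : Finset α, (e : Set α) ⊆ A → F e ⊆ A ∧ (F e).Countable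

def ClosedFn {α : Type*} (F : Finset α → Set α) (x : Set α) : Prop :=
  ∀ e : Finset α, (e : Set α) ⊆ x → F e ⊆ x

lemma finset_sub_iUnion {α : Type*} (f : ℕ → Set α) (hf : ∀ n, f n ⊆ f (n + 1))
    (e : Finset α) (he : (e : Set α) ⊆ ⋃ n, f n) : ∃ n, (e : Set α) ⊆ f n := by
  have hm : Monotone f := monotone_nat_of_le_succ hf
  induction e using Finset.induction_on with
  | empty => exact ⟨0, by simp⟩
  | insert a s ha ih =>
    rw [Finset.coe_insert, Set.insert_subset_iff] at he
    obtain ⟨n, hn⟩ := ih he.2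
    obtain ⟨m, hm'⟩ := Set.mem_iUnion.1 he.1
    refine ⟨max n m, ?_⟩
    rw [Finset.coe_insert, Set.insert_subset_iff]
    exact ⟨hm (le_max_right n m) hm', hn.trans (hm (le_max_left n m))⟩

def stepFn {α : Type*} (F : Finset α → Set α) (x : Set α) : Set α :=
  x ∪ ⋃ e ∈ {e : Finset α | (e : Set α) ⊆ x}, F e

def clFn {α : Type*} (F : Finset α → Set α) (x : Set α) : Set α :=
  ⋃ n : ℕ, (stepFn F)^[n] x

lemma countable_finsets {α : Type*} {x : Set α} (hx : x.Countable) :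
    {e : Finset α | (e : Set α) ⊆ x}.Countable := by
  have h := Set.countable_ofPred_finite_subset hx
  have : {e : Finset α | (e : Set α) ⊆ x} =
      (fun e : Finset α => (e : Set α)) ⁻¹' {t | t.Finite ∧ t ⊆ x} := by
    ext e; simp
  rw [this]
  exact h.preimage Finset.coe_injective

lemma subset_clFn {α : Type*} (F : Finset α → Set α) (x : Set α) : x ⊆ clFn F x :=
  Set.subset_iUnion (fun n : ℕ => (stepFn F)^[n] x) 0

lemma closed_clFn {α : Type*} (F : Finset α → Set α) (x : Set α) : ClosedFn F (clFn F x) := by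
  intro e he
  obtain ⟨n, hn⟩ := finset_sub_iUnion _ (fun n => by
    rw [Function.iterate_succ_apply']
    exact Set.subset_union_left) e he
  refine Set.Subset.trans ?_ (Set.subset_iUnion (fun n : ℕ => (stepFn F)^[n] x) (n + 1))
  rw [Function.iterate_succ_apply']
  refine Set.Subset.trans ?_ Set.subset_union_right
  exact Set.subset_biUnion_of_mem (u := F) (show e ∈ {e : Finset α | (e : Set α) ⊆ _} from hn)

lemma clFn_min {α : Type*} (F : Finset α → Set α) {x y : Set α} (hxy : x ⊆ y)
    (hy : ClosedFn F y) : clFn F x ⊆ y := by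
  refine Set.iUnion_subset fun n => ?_
  induction n with
  | zero => exact hxy
  | succ n ih =>
    rw [Function.iterate_succ_apply']
    refine Set.union_subset ih (Set.iUnion₂_subset fun e he => hy e (Set.Subset.trans he ih))

lemma clFn_mono {α : Type*} (F : Finset α → Set α) {x y : Set α} (hxy : x ⊆ y) :
    clFn F x ⊆ clFn F y :=
  clFn_min F (hxy.trans (subset_clFn F y)) (closed_clFn F y)

lemma clFn_good {α : Type*} {A : Set α} {F : Finset α → Set α} (hF : GoodFn A F) {x : Set α}
    (hx : x ⊆ A) (hc : x.Countable) : clFn F x ⊆ A ∧ (clFn F x).Countable := by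
  have : ∀ n : ℕ, (stepFn F)^[n] x ⊆ A ∧ ((stepFn F)^[n] x).Countable := by
    intro n
    induction n with
    | zero => exact ⟨hx, hc⟩
    | succ n ih =>
      rw [Function.iterate_succ_apply']
      refine ⟨Set.union_subset ih.1 (Set.iUnion₂_subset fun e he =>
        (hF e (Set.Subset.trans he ih.1)).1), ih.2.union ?_⟩
      exact (countable_finsets ih.2).biUnion fun e he => (hF e (Set.Subset.trans he ih.1)).2
  exact ⟨Set.iUnion_subset fun n => (this n).1, Set.countable_iUnion fun n => (this n).2⟩

lemma clFn_finitary {α : Type*} (F : Finset α → Set α) {x : Set α} :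
    clFn F x ⊆ ⋃ e ∈ {e : Finset α | (e : Set α) ⊆ x}, clFn F (e : Set α) := by
  apply clFn_min
  · intro a ha
    refine Set.mem_biUnion (x := ({a} : Finset α)) (by simpa using ha) ?_
    exact subset_clFn F _ (by simp)
  · intro e he
    have : ∃ d : Finset α, (d : Set α) ⊆ x ∧ (e : Set α) ⊆ clFn F (d : Set α) := by
      induction e using Finset.induction_on with
      | empty => exact ⟨∅, by simp, by simp⟩
      | insert a s ha ih =>
        rw [Finset.coe_insert, Set.insert_subset_iff] at he
        obtain ⟨d, hd, hd'⟩ := ih he.2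
        obtain ⟨d2, hd2, hd2'⟩ := Set.mem_iUnion₂.1 he.1
        refine ⟨d ∪ d2, by rw [Finset.coe_union]; exact Set.union_subset hd hd2, ?_⟩
        rw [Finset.coe_insert, Set.insert_subset_iff, Finset.coe_union]
        exact ⟨clFn_mono F Set.subset_union_right hd2',
          hd'.trans (clFn_mono F Set.subset_union_left)⟩
    obtain ⟨d, hd, hd'⟩ := this
    exact (closed_clFn F _ e hd').trans
      (Set.subset_biUnion_of_mem (u := fun e : Finset α => clFn F (e : Set α))
        (show d ∈ {e : Finset α | (e : Set α) ⊆ x} from hd))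

lemma club_of_good {α : Type*} {A : Set α} {F : Finset α → Set α} (hF : GoodFn A F) :
    IsClubOmega A {x | x ∈ sOmega A ∧ ClosedFn F x} := by
  refine ⟨fun x hx => hx.1, fun x hx => ?_, fun f hf hs => ?_⟩
  · have := clFn_good hF hx.1 hx.2.1
    exact ⟨clFn F x, ⟨⟨this.1, this.2, hx.2.2.mono (subset_clFn F x)⟩, closed_clFn F x⟩,
      subset_clFn F x⟩
  · refine ⟨⟨Set.iUnion_subset fun n => (hf n).1.1, Set.countable_iUnion fun n => (hf n).1.2.1,
      (hf 0).1.2.2.mono (Set.subset_iUnion f 0)⟩, ?_⟩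
    intro e he
    obtain ⟨n, hn⟩ := finset_sub_iUnion f hs e he
    exact ((hf n).2 e hn).trans (Set.subset_iUnion f n)

lemma good_of_club {α : Type*} {A : Set α} (hA : A.Infinite) {C : Set (Set α)}
    (hC : IsClubOmega A C) :
    ∃ F : Finset α → Set α, GoodFn A F ∧ ∀ x ∈ sOmega A, ClosedFn F x → x ∈ C := by
  have hp : ∀ x : Set α, ∃ y, x ∈ sOmega A → y ∈ C ∧ x ⊆ y := by
    intro x
    by_cases hx : x ∈ sOmega A
    · obtain ⟨y, hy, hy'⟩ := hC.2.1 x hx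
      exact ⟨y, fun _ => ⟨hy, hy'⟩⟩
    · exact ⟨∅, fun h => absurd h hx⟩
  choose pick hpick using hp
  obtain ⟨b, hbA, hb⟩ : ∃ b ⊆ A, b.Countable ∧ b.Infinite := by
    have := hA.to_subtype
    let g := Infinite.natEmbedding A
    refine ⟨Set.range fun n => (g n : α), ?_, Set.countable_range _, ?_⟩
    · rintro _ ⟨n, rfl⟩; exact (g n).2
    · exact Set.infinite_range_of_injective (Subtype.val_injective.comp g.injective)
  let F : Finset α → Set α := Finset.strongInduction fun e ih =>
    pick (b ∪ (e : Set α) ∪ ⋃ (d : Finset α) (h : d ⊂ e), ih d h)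
  have hFe : ∀ e, F e = pick (b ∪ (e : Set α) ∪ ⋃ (d : Finset α) (_ : d ⊂ e), F d) := by
    intro e
    exact Finset.strongInduction_eq _ e
  have key : ∀ e : Finset α, (e : Set α) ⊆ A → F e ∈ C ∧
      (b ∪ (e : Set α) ∪ ⋃ (d : Finset α) (_ : d ⊂ e), F d) ⊆ F e := by
    intro e
    induction e using Finset.strongInduction with
    | H e ih =>
      intro he
      have ih' : ∀ d ⊂ e, F d ∈ sOmega A := fun d hd =>
        hC.1 (ih d hd (Set.Subset.trans (Finset.coe_subset.2 hd.1) he)).1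
      rw [hFe e]
      apply hpick
      refine ⟨Set.union_subset (Set.union_subset hbA he)
        (Set.iUnion₂_subset fun d hd => (ih' d hd).1), ?_, ?_⟩
      · refine (hb.1.union e.countable_toSet).union ?_
        have : ({d : Finset α | d ⊂ e}).Countable :=
          (countable_finsets e.countable_toSet).mono fun d hd => Finset.coe_subset.2 hd.1
        exact this.biUnion fun d hd => (ih' d hd).2.1
      · exact hb.2.mono (Set.subset_union_left.trans Set.subset_union_left)
  have mono : ∀ d e : Finset α, d ⊆ e → (e : Set α) ⊆ A → F d ⊆ F e := by
    intro d e hde he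
    rcases eq_or_ssubset_of_subset hde with rfl | h
    · exact Set.Subset.rfl
    · refine Set.Subset.trans ?_ ((Set.subset_union_right).trans (key e he).2)
      exact Set.subset_iUnion₂ (s := fun (d : Finset α) (_ : d ⊂ e) => F d) d h
  refine ⟨F, fun e he => ⟨(hC.1 (key e he).1).1, (hC.1 (key e he).1).2.1⟩, fun x hx hcl => ?_⟩
  obtain ⟨f, hf⟩ := hx.2.1.exists_eq_range hx.2.2.nonempty
  let en : ℕ → Finset α := fun n => (Finset.range n).image f
  have hen : ∀ n, (en n : Set α) ⊆ x := by
    intro n a ha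
    simp only [en, Finset.coe_image] at ha
    rw [hf]
    exact Set.image_subset_range _ _ ha
  have hxe : x = ⋃ n, F (en n) := by
    apply Set.Subset.antisymm
    · intro a ha
      rw [hf] at ha
      obtain ⟨n, rfl⟩ := ha
      refine Set.mem_iUnion.2 ⟨n + 1, ?_⟩
      apply (key _ ((hen (n + 1)).trans hx.1)).2
      refine Or.inl (Or.inr ?_)
      simp only [en, Finset.coe_image]
      exact ⟨n, by simp, rfl⟩
    · exact Set.iUnion_subset fun n => hcl _ (hen n)
  rw [hxe]
  refine hC.2.2 _ (fun n => (key _ ((hen n).trans hx.1)).1) fun n => ?_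
  apply mono _ _ _ ((hen _).trans hx.1)
  exact Finset.image_subset_image (Finset.range_mono (Nat.le_succ n))

lemma stat_iff {α : Type*} {A : Set α} (hA : A.Infinite) {S : Set (Set α)} :
    IsStationaryOmega A S ↔
      ∀ F, GoodFn A F → ∃ x ∈ S, x ∈ sOmega A ∧ ClosedFn F x := by
  constructor
  · intro h F hF
    obtain ⟨x, hx, hx'⟩ := h _ (club_of_good hF)
    exact ⟨x, hx, hx'⟩
  · intro h C hC
    obtain ⟨F, hF, hFC⟩ := good_of_club hA hC
    obtain ⟨x, hx, hxA, hcl⟩ := h F hF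
    exact ⟨x, hx, hFC x hxA hcl⟩

lemma stat_lift {α : Type*} {A B : Set α} (hB : B.Infinite) (hBA : B ⊆ A) {T : Set (Set α)}
    (hT : IsStationaryOmega B T) {F : Finset α → Set α} (hF : GoodFn A F) :
    ∃ y ∈ sOmega A, ClosedFn F y ∧ y ∩ B ∈ T := by
  have hG : GoodFn B (fun e => clFn F (e : Set α) ∩ B) := fun e he =>
    ⟨Set.inter_subset_right, (clFn_good hF (he.trans hBA) e.countable_toSet).2.mono
      Set.inter_subset_left⟩
  obtain ⟨z, hzT, hzB, hcl⟩ := (stat_iff hB).1 hT _ hG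
  have hg := clFn_good hF (hzB.1.trans hBA) hzB.2.1
  refine ⟨clFn F z, ⟨hg.1, hg.2, hzB.2.2.mono (subset_clFn F z)⟩, closed_clFn F z, ?_⟩
  have : clFn F z ∩ B = z := by
    apply Set.Subset.antisymm
    · rintro a ⟨ha, haB⟩
      obtain ⟨e, he, hae⟩ := Set.mem_iUnion₂.1 (clFn_finitary F ha)
      exact hcl e he ⟨hae, haB⟩
    · exact Set.subset_inter (subset_clFn F z) hzB.1
  rwa [this]

lemma bdd_succ {lam : Ordinal.{0}} {x : Set Ordinal.{0}} (hx : x ⊆ Iio lam) :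
    BddAbove ((· + 1) '' x) := by
  refine ⟨lam, ?_⟩
  rintro _ ⟨a, ha, rfl⟩
  exact Order.add_one_le_of_lt (hx ha)

lemma lt_supPlus {lam : Ordinal.{0}} {x : Set Ordinal.{0}} (hx : x ⊆ Iio lam) {a : Ordinal.{0}}
    (ha : a ∈ x) : a < supPlus x :=
  lt_of_lt_of_le (Order.lt_add_one_iff.2 le_rfl) (le_csSup (bdd_succ hx) ⟨a, ha, rfl⟩)

lemma supPlus_le {x : Set Ordinal.{0}} {b : Ordinal.{0}} (h : ∀ a ∈ x, a < b) :
    supPlus x ≤ b := by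
  rcases x.eq_empty_or_nonempty with rfl | hne
  · simp [supPlus]
  · apply csSup_le (hne.image _)
    rintro _ ⟨a, ha, rfl⟩
    exact Order.add_one_le_of_lt (h a ha)

lemma exists_ge_of_lt_supPlus {x : Set Ordinal.{0}} {b : Ordinal.{0}} (h : b < supPlus x) :
    ∃ a ∈ x, b ≤ a := by
  by_contra hcon
  push Not at hcon
  exact absurd h (not_lt.2 (supPlus_le hcon))

lemma supPlus_mono {lam : Ordinal.{0}} {x y : Set Ordinal.{0}} (hy : y ⊆ Iio lam)
    (h : ∀ a ∈ x, ∃ b ∈ y, a ≤ b) : supPlus x ≤ supPlus y :=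
  supPlus_le fun a ha => by
    obtain ⟨b, hb, hab⟩ := h a ha
    exact hab.trans_lt (lt_supPlus hy hb)

lemma exists_cofinal_fn (γ : Ordinal.{0}) :
    ∃ c : Ordinal.{0} → Ordinal.{0}, ∃ g : Ordinal.{0} → Ordinal.{0}, γ.cof = aleph 1 →
      (∀ ξ < omega1, c ξ < γ) ∧ ∀ α < γ, g α < omega1 ∧ α ≤ c (g α) := by
  by_cases h : γ.cof = aleph 1
  · obtain ⟨f, hf⟩ := Ordinal.exists_isFundamentalSeq (o := γ) (a := omega1) (by rw [h]; rfl)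
    let c : Ordinal.{0} → Ordinal.{0} := fun ξ => if hξ : ξ < omega1 then (f ⟨ξ, hξ⟩).1 else 0
    have hc : ∀ α, ∃ ξ, α < γ → ξ < omega1 ∧ α ≤ c ξ := by
      intro α
      by_cases hα : α < γ
      · obtain ⟨_, ⟨ξ, rfl⟩, hξ⟩ := hf.isCofinal_range ⟨α, hα⟩
        refine ⟨ξ.1, fun _ => ⟨ξ.2, ?_⟩⟩
        have h2 : ξ.1 < omega1 := ξ.2
        simp only [c, h2, dif_pos]
        exact hξ
      · exact ⟨0, fun h => absurd h hα⟩
    choose g hg using hc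
    refine ⟨c, g, fun _ => ⟨fun ξ hξ => ?_, hg⟩⟩
    simp only [c, hξ, dif_pos]
    exact (f ⟨ξ, hξ⟩).2
  · exact ⟨id, id, fun h' => absurd h' h⟩

lemma infinite_omega1 : (Iio omega1).Infinite := by
  rw [← Set.infinite_coe_iff, Cardinal.infinite_iff, Cardinal.mk_Iio_ordinal, omega1,
    Cardinal.card_ord, Cardinal.lift_aleph]
  exact Cardinal.aleph0_le_aleph _

lemma mk_omega1 : #(Iio omega1) = aleph 1 := by
  rw [Cardinal.mk_Iio_ordinal, omega1, Cardinal.card_ord, Cardinal.lift_aleph]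
  simp

lemma sqsubseteq_trans {x y z : Set Ordinal.{0}} (h : sqsubseteq x y) (h' : sqsubseteq y z) :
    sqsubseteq x z := ⟨h.1.trans h'.1, h.2.trans h'.2⟩

lemma main_lemma (lam : Ordinal.{0}) (hlam : omega1 ≤ lam) (hssr : SSR lam)
    (X : Set (Set Ordinal)) (hsub : X ⊆ sOmega (Iio lam))
    (hwf : IsWeaklyFull lam X) (hstat : IsStationaryOmega (Iio lam) X) :
    ∃ I : Set Ordinal, I ⊆ Iio lam ∧ Iio omega1 ⊆ I ∧ #I = aleph 1 ∧
      ∀ J : Set Ordinal, J ⊆ Iio lam → I ⊆ J → supPlus J = supPlus I →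
        IsStationaryOmega J (X ∩ sOmega J) := by
  choose c g hcg using exists_cofinal_fn
  let X0 : Set (Set Ordinal.{0}) := {x | x ∈ X ∧
    ∀ γ ∈ x, γ.cof = aleph 1 → ∀ ξ ∈ x, ξ < omega1 → c γ ξ ∈ x}
  let S : Set (Set Ordinal.{0}) := {y | y ∈ sOmega (Iio lam) ∧ ∃ x ∈ X0, sqsubseteq x y}
  have hlinf : (Iio lam).Infinite := infinite_omega1.mono (Set.Iio_subset_Iio hlam)
  have hSfull : IsFull lam S := by
    rintro x ⟨_, w, hw, hwx⟩ y hy hxy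
    exact ⟨hy, w, hw, sqsubseteq_trans hwx hxy⟩
  have hSstat : IsStationaryOmega (Iio lam) S := by
    rw [stat_iff hlinf]
    intro F hF
    let G : Finset Ordinal.{0} → Set Ordinal.{0} := fun e => F e ∪
      ((fun p : Ordinal.{0} × Ordinal.{0} => c p.1 p.2) '' ((e ×ˢ e : Finset _) : Set _)) ∩ Iio lam
    have hG : GoodFn (Iio lam) G := fun e he =>
      ⟨Set.union_subset (hF e he).1 Set.inter_subset_right, (hF e he).2.union
        (((Finset.countable_toSet _).image _).mono Set.inter_subset_left)⟩
    obtain ⟨x, hxX, hxs, hcl⟩ := (stat_iff hlinf).1 hstat G hG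
    refine ⟨x, ⟨hxs, x, ⟨hxX, ?_⟩, Set.Subset.rfl, rfl⟩, hxs,
      fun e he => Set.subset_union_left.trans (hcl e he)⟩
    intro γ hγ hcof ξ hξ hξ1
    refine hcl {γ, ξ} ?_ (Or.inr ⟨⟨(γ, ξ), by simp, rfl⟩, ?_⟩)
    · intro a ha
      simp at ha
      rcases ha with rfl | rfl <;> assumption
    · exact ((hcg γ hcof).1 ξ hξ1).trans (hxs.1 hγ)
  let P : Set Ordinal.{0} := {δ | ∃ I : Set Ordinal, I ⊆ Iio lam ∧ Iio omega1 ⊆ I ∧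
    #I = aleph 1 ∧ IsStationaryOmega I (S ∩ sOmega I) ∧ supPlus I = δ}
  have hP : P.Nonempty := by
    obtain ⟨I, h1, h2, h3, h4⟩ := hssr S (fun y hy => hy.1) hSfull hSstat
    exact ⟨_, I, h1, h2, h3, h4, rfl⟩
  obtain ⟨δ, ⟨I, hI1, hI2, hI3, hI4, hIδ⟩, hmin⟩ :=
    WellFounded.has_min (wellFounded_lt (α := Ordinal.{0})) P hP
  have hIinf : I.Infinite := infinite_omega1.mono hI2
  let T : Set (Set Ordinal.{0}) := {z | z ∈ sOmega I ∧ ∃ x ∈ X0, sqsubseteq x z ∧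
    supPlus x = supPlus z}
  have hTstat : IsStationaryOmega I T := by
    rw [stat_iff hIinf]
    by_contra hcon
    push Not at hcon
    obtain ⟨F0, hF0, hF0T⟩ := hcon
    have hFa : ∀ α : Ordinal.{0}, ∃ F : Finset Ordinal.{0} → Set Ordinal.{0},
        GoodFn (I ∩ Iio α) F ∧ (α ∈ I → omega1 ≤ α →
          ∀ x ∈ S, x ∈ sOmega (I ∩ Iio α) → ¬ ClosedFn F x) := by
      intro α
      by_cases h : α ∈ I ∧ omega1 ≤ α
      · have h2 : Iio omega1 ⊆ I ∩ Iio α :=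
          Set.subset_inter hI2 (Set.Iio_subset_Iio h.2)
        have hns : ¬ IsStationaryOmega (I ∩ Iio α) (S ∩ sOmega (I ∩ Iio α)) := by
          intro hst
          refine hmin (supPlus (I ∩ Iio α)) ⟨I ∩ Iio α, Set.inter_subset_left.trans hI1, h2,
            ?_, hst, rfl⟩ ?_
          · apply le_antisymm
            · rw [← hI3]; exact Cardinal.mk_le_mk_of_subset Set.inter_subset_left
            · rw [← mk_omega1]; exact Cardinal.mk_le_mk_of_subset h2
          · rw [← hIδ]
            exact (supPlus_le fun a ha => ha.2).trans_lt (lt_supPlus hI1 h.1)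
        rw [stat_iff (infinite_omega1.mono h2)] at hns
        push Not at hns
        obtain ⟨F, hF, hF'⟩ := hns
        exact ⟨F, hF, fun _ _ x hx hx' => hF' x ⟨hx, hx'⟩ hx'⟩
      · exact ⟨fun _ => ∅, fun e he => ⟨Set.empty_subset _, Set.countable_empty⟩,
          fun h1 h2 => absurd ⟨h1, h2⟩ h⟩
    choose Fa hFa hFaS using hFa
    let G : Finset Ordinal.{0} → Set Ordinal.{0} := fun e => F0 e ∪
      ⋃ α ∈ (e : Set Ordinal.{0}), Fa α (e.filter (· < α))
    have hfil : ∀ (e : Finset Ordinal.{0}) (α : Ordinal.{0}), (e : Set Ordinal.{0}) ⊆ I →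
        ((e.filter (· < α) : Finset Ordinal.{0}) : Set Ordinal.{0}) ⊆ I ∩ Iio α := by
      intro e α he a ha
      simp at ha
      exact ⟨he ha.1, ha.2⟩
    have hG : GoodFn I G := fun e he =>
      ⟨Set.union_subset (hF0 e he).1 (Set.iUnion₂_subset fun α _ =>
        (hFa α _ (hfil e α he)).1.trans Set.inter_subset_left),
       (hF0 e he).2.union (e.countable_toSet.biUnion fun α _ => (hFa α _ (hfil e α he)).2)⟩
    obtain ⟨z, hzS, hzI, hcl⟩ := (stat_iff hIinf).1 hI4 G hG
    obtain ⟨⟨hzl, x, hx, hxz⟩, -⟩ := hzS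
    have hlt : supPlus x < supPlus z := by
      apply lt_of_le_of_ne (supPlus_mono hzl.1 fun a ha => ⟨a, hxz.1 ha, le_rfl⟩)
      intro heq
      exact hF0T z ⟨hzI, x, hx, hxz, heq⟩ hzI
        fun e he => Set.subset_union_left.trans (hcl e he)
    obtain ⟨α, hαz, hα⟩ := exists_ge_of_lt_supPlus hlt
    have hxl : x ⊆ Iio lam := (hsub hx.1).1
    have hxα : ∀ a ∈ x, a < α := fun a ha => (lt_supPlus hxl ha).trans_le hα
    have hα1 : omega1 ≤ α := by
      by_contra hlt1
      push Not at hlt1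
      have : α ∈ x ∩ Iio omega1 := by rw [hxz.2]; exact ⟨hαz, hlt1⟩
      exact lt_irrefl _ (hxα α this.1)
    have hxza : x ⊆ z ∩ Iio α := fun a ha => ⟨hxz.1 ha, hxα a ha⟩
    have hinf : (z ∩ Iio α).Infinite := (hsub hx.1).2.2.mono hxza
    have hcnt : (z ∩ Iio α).Countable := hzl.2.1.mono Set.inter_subset_left
    refine hFaS α (hzI.1 hαz) hα1 (z ∩ Iio α)
      ⟨⟨Set.inter_subset_left.trans hzl.1, hcnt, hinf⟩, x, hx, hxza, ?_⟩
      ⟨Set.inter_subset_inter_left _ hzI.1, hcnt, hinf⟩ ?_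
    · rw [hxz.2]
      ext a
      constructor
      · rintro ⟨h1, h2⟩; exact ⟨⟨h1, lt_of_lt_of_le h2 hα1⟩, h2⟩
      · rintro ⟨h1, h2⟩; exact ⟨h1.1, h2⟩
    · intro e he
      have heI : (e : Set Ordinal.{0}) ⊆ I ∩ Iio α :=
        he.trans (Set.inter_subset_inter_left _ hzI.1)
      refine Set.subset_inter ?_ ((hFa α e heI).1.trans Set.inter_subset_right)
      have hfe : (insert α e).filter (· < α) = e := by
        ext a
        simp only [Finset.mem_filter, Finset.mem_insert]
        constructor
        · rintro ⟨rfl | h, h2⟩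
          · exact absurd h2 (lt_irrefl _)
          · exact h
        · intro h; exact ⟨Or.inr h, (he h).2⟩
      have hcl' := hcl (insert α e) (by
        rw [Finset.coe_insert, Set.insert_subset_iff]
        exact ⟨hαz, he.trans Set.inter_subset_left⟩)
      intro a ha
      apply hcl'
      refine Or.inr (Set.mem_biUnion (x := α) (by simp) ?_)
      rw [hfe]; exact ha
  refine ⟨I, hI1, hI2, hI3, fun J hJ hIJ hsup => ?_⟩
  have hJinf : J.Infinite := hIinf.mono hIJ
  rw [stat_iff hJinf]
  intro F hF
  have hi : ∀ β : Ordinal.{0}, ∃ i, β ∈ J → i ∈ I ∧ β ≤ i := by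
    intro β
    by_cases h : β ∈ J
    · have := lt_supPlus hJ h
      rw [hsup] at this
      obtain ⟨i, hi, hi'⟩ := exists_ge_of_lt_supPlus this
      exact ⟨i, fun _ => ⟨hi, hi'⟩⟩
    · exact ⟨0, fun h' => absurd h' h⟩
  choose i hi using hi
  let H : Finset Ordinal.{0} → Set Ordinal.{0} := fun e => F e ∪ (i '' (e : Set Ordinal.{0}) ∪
    ((fun p : Ordinal.{0} × Ordinal.{0} => g p.1 p.2) '' ((e ×ˢ e : Finset _) : Set _))
      ∩ Iio omega1)
  have hH : GoodFn J H := by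
    intro e he
    refine ⟨Set.union_subset (hF e he).1 (Set.union_subset ?_
      (Set.inter_subset_right.trans (hI2.trans hIJ))), (hF e he).2.union
      ((e.countable_toSet.image _).union
        (((Finset.countable_toSet _).image _).mono Set.inter_subset_left))⟩
    rintro _ ⟨a, ha, rfl⟩
    exact hIJ (hi a (he ha)).1
  obtain ⟨y, hyJ, hycl, -, x, hx, hxz, hsupx⟩ := stat_lift hIinf hIJ hTstat hH
  have hyl : y ⊆ Iio lam := hyJ.1.trans hJ
  have hxy : sqsubseteq x y := by
    refine ⟨hxz.1.trans Set.inter_subset_left, ?_⟩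
    rw [hxz.2]
    ext a
    constructor
    · rintro ⟨h1, h2⟩; exact ⟨h1.1, h2⟩
    · rintro ⟨h1, h2⟩; exact ⟨⟨h1, hI2 h2⟩, h2⟩
  refine ⟨y, ⟨hwf x hx.1 y ⟨hyl, hyJ.2⟩ ⟨hxy, ?_, ?_⟩, hyJ⟩, hyJ,
    fun e he => Set.subset_union_left.trans (hycl e he)⟩
  · rw [hsupx]
    apply le_antisymm
    · exact supPlus_mono hyl fun a ha => ⟨a, ha.1, le_rfl⟩
    · refine supPlus_mono (Set.inter_subset_left.trans hyl) fun a ha => ?_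
      have hia := hi a (hyJ.1 ha)
      refine ⟨i a, ⟨hycl {a} (by simpa using ha) (Or.inr (Or.inl ⟨a, by simp, rfl⟩)), hia.1⟩,
        hia.2⟩
  · intro γ hγ hγl hcof
    apply le_antisymm
    · exact supPlus_mono (Set.inter_subset_left.trans hyl)
        fun a ha => ⟨a, ⟨hxy.1 ha.1, ha.2⟩, le_rfl⟩
    · refine supPlus_mono (Set.inter_subset_left.trans (hsub hx.1).1) fun a ha => ?_
      obtain ⟨hg1, hg2⟩ := (hcg γ hcof).2 a ha.2
      have hgy : g γ a ∈ y := by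
        refine hycl {γ, a} ?_ (Or.inr (Or.inr ⟨⟨(γ, a), by simp, rfl⟩, hg1⟩))
        intro b hb
        simp at hb
        rcases hb with rfl | rfl
        · exact hxy.1 hγ
        · exact ha.1
      have hgx : g γ a ∈ x ∩ Iio omega1 := by rw [hxy.2]; exact ⟨hgy, hg1⟩
      exact ⟨c γ (g γ a), ⟨hx.2 γ hγ hcof _ hgx.1 hg1, (hcg γ hcof).1 _ hg1⟩, hg2⟩

end helpers

theorem stmt1 (κ : Cardinal.{0}) (hκ : aleph 2 ≤ κ) (hssr : SSR κ.ord)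
    (X : Set (Set Ordinal)) (hsub : X ⊆ sOmega (Iio κ.ord))
    (hwf : IsWeaklyFull κ.ord X) (hstat : IsStationaryOmega (Iio κ.ord) X) :
    ∃ I : Set Ordinal, I ⊆ Iio κ.ord ∧ Iio omega1 ⊆ I ∧ #I = aleph 1 ∧
      ∀ J : Set Ordinal, J ⊆ Iio κ.ord → I ⊆ J → supPlus J = supPlus I →
        IsStationaryOmega J (X ∩ sOmega J) := by
  refine main_lemma κ.ord ?_ hssr X hsub hwf hstat
  apply Cardinal.ord_le_ord.2
  refine le_trans ?_ hκ
  exact Cardinal.aleph_le_aleph.2 one_le_two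

end
end

section
/- Let λ be a regular cardinal ≥ ω₂ and let F : [λ]^{<ω} → λ. Then Player I has a winning strategy in the game G₁(λ, F). -/
open Set Cardinal Ordinal

noncomputable section

/-- `y` is closed under the finitary function `F`. -/
def ClosedUnder {α : Type*} (F : Finset α → α) (y : Set α) : Prop :=
  ∀ s : Finset α, ↑s ⊆ y → F s ∈ y

/-- `cl_F(x)`: the smallest superset of `x` closed under `F`. -/
def clF {α : Type*} (F : Finset α → α) (x : Set α) : Set α :=
  ⋂₀ {y | x ⊆ y ∧ ClosedUnder F y}

abbrev OO := Ordinal.{0} × Ordinal.{0}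

lemma reg_sup {κ : Cardinal.{0}} (hreg : κ.IsRegular) {ι : Type 1} (f : ι → Ordinal.{0})
    (hι : #ι < Cardinal.lift.{1} κ) (hf : ∀ i, f i < κ.ord) : ⨆ i, f i + 1 < κ.ord := by
  apply lift_iSup_add_one_lt_of_lt_cof _ hf
  rw [← lift_cof, hreg.cof_ord]
  simpa using hι

def fseq (h : Ordinal.{0} → Ordinal.{0}) (δ : Ordinal.{0}) : Ordinal.{0} → Ordinal.{0} :=
  fun ξ => max δ (⨆ η : Iio ξ, (h (fseq h δ η.1) + 1))
termination_by ξ => ξ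
decreasing_by exact η.2

lemma fseq_lt (h : Ordinal.{0} → Ordinal.{0}) (δ : Ordinal.{0}) {η ξ : Ordinal.{0}} (hη : η < ξ) :
    h (fseq h δ η) < fseq h δ ξ := by
  conv_rhs => rw [fseq]
  refine lt_max_of_lt_right ?_
  exact Ordinal.lt_iSup_add_one (fun η : Iio ξ => h (fseq h δ η.1)) ⟨η, hη⟩

lemma exists_closed_point {κ : Cardinal.{0}} (hreg : κ.IsRegular) (hκ : aleph 2 ≤ κ)
    (b : List OO → Ordinal.{0} → Ordinal.{0}) (hb : ∀ l a, b l a < κ.ord)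
    (δ : Ordinal.{0}) (hδ : δ < κ.ord) :
    ∃ γ, δ < γ ∧ γ < κ.ord ∧ γ.cof = aleph 1 ∧
      ∀ (l : List OO) (a : Ordinal.{0}), (∀ x ∈ l, x.1 < γ ∧ x.2 < γ) → a < γ → b l a < γ := by
  have h1κ : aleph 1 < κ := lt_of_lt_of_le (aleph_lt_aleph.2 (by norm_num)) hκ
  have h0κ : ℵ₀ < κ := lt_of_le_of_lt (aleph0_le_aleph 1) h1κ
  let h : Ordinal.{0} → Ordinal.{0} := fun ε =>
    max ε (⨆ p : List (Iio ε × Iio ε) × Iio ε,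
      (b (p.1.map fun x => (x.1.1, x.2.1)) p.2.1 + 1))
  have hle : ∀ ε, ε ≤ h ε := fun ε => le_max_left _ _
  have hhb : ∀ ε (l : List OO) (a : Ordinal.{0}), (∀ x ∈ l, x.1 < ε ∧ x.2 < ε) → a < ε →
      b l a < h ε := by
    intro ε l a hl ha
    refine lt_max_of_lt_right ?_
    let l' : List (Iio ε × Iio ε) := l.attach.map
      fun x => (⟨x.1.1, (hl x.1 x.2).1⟩, ⟨x.1.2, (hl x.1 x.2).2⟩)
    have hl' : (l'.map fun x => (x.1.1, x.2.1)) = l := by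
      simp only [l', List.map_map]
      exact List.attach_map_subtype_val l
    have := Ordinal.lt_iSup_add_one (fun p : List (Iio ε × Iio ε) × Iio ε =>
      b (p.1.map fun x => (x.1.1, x.2.1)) p.2.1) (l', ⟨a, ha⟩)
    simpa only [hl'] using this
  have hhκ : ∀ ε < κ.ord, h ε < κ.ord := by
    intro ε hε
    refine max_lt hε (reg_sup hreg _ ?_ fun i => hb _ _)
    have hc : #(Iio ε) < Cardinal.lift.{1} κ := by
      rw [Cardinal.mk_Iio_ordinal, Cardinal.lift_lt]
      exact Cardinal.lt_ord.1 hε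
    have h0 : ℵ₀ ≤ Cardinal.lift.{1} κ := by simpa using h0κ.le
    have h0' : ℵ₀ < Cardinal.lift.{1} κ := by simpa using h0κ
    rw [Cardinal.mk_prod, Cardinal.lift_id, Cardinal.lift_id]
    refine Cardinal.mul_lt_of_lt h0 (lt_of_le_of_lt (mk_list_le_max _) (max_lt h0' ?_)) hc
    rw [Cardinal.mk_prod, Cardinal.lift_id]
    exact Cardinal.mul_lt_of_lt h0 hc hc
  have hfκ : ∀ ξ < κ.ord, fseq h δ ξ < κ.ord := by
    intro ξ
    induction ξ using WellFoundedLT.induction with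
    | ind ξ ih =>
      intro hξ
      rw [fseq]
      refine max_lt hδ (reg_sup hreg _ ?_ fun i => hhκ _ (ih _ i.2 (i.2.trans hξ)))
      rw [Cardinal.mk_Iio_ordinal, Cardinal.lift_lt]
      exact Cardinal.lt_ord.1 hξ
  have hmono : StrictMono (fseq h δ) := fun η ξ hη => (hle _).trans_lt (fseq_lt h δ hη)
  have hω : Order.IsSuccLimit (aleph.{0} 1).ord := isSuccLimit_ord (aleph0_le_aleph 1)
  have hωκ : (aleph.{0} 1).ord < κ.ord := ord_lt_ord.2 h1κ
  have hδf : ∀ ξ, δ ≤ fseq h δ ξ := by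
    intro ξ
    rw [fseq]
    exact le_max_left _ _
  let γ := ⨆ ξ : Iio (aleph.{0} 1).ord, fseq h δ ξ.1
  have hlt : ∀ ξ < (aleph.{0} 1).ord, fseq h δ ξ < γ := by
    intro ξ hξ
    refine (hmono (Order.lt_succ ξ)).trans_le ?_
    exact Ordinal.le_iSup (fun ξ : Iio (aleph.{0} 1).ord => fseq h δ ξ.1) ⟨_, hω.succ_lt hξ⟩
  have hex : ∀ a < γ, ∃ ξ < (aleph.{0} 1).ord, a < fseq h δ ξ := by
    intro a ha
    obtain ⟨⟨ξ, hξ⟩, h'⟩ := Ordinal.lt_iSup_iff.1 ha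
    exact ⟨ξ, hξ, h'⟩
  refine ⟨γ, (hδf 0).trans_lt (hlt 0 hω.bot_lt), ?_, ?_, ?_⟩
  · refine lt_of_le_of_lt ?_ (hfκ _ hωκ)
    exact Ordinal.iSup_le fun i => (hmono i.2).le
  · have := cof_iSup_Iio (f := fun ξ : Iio (aleph.{0} 1).ord => fseq h δ ξ.1)
      (fun x y hxy => hmono hxy) hω.isSuccPrelimit
    rw [isRegular_aleph_one.cof_ord] at this
    exact this
  · intro l a hl ha
    have hlist : ∃ ξ < (aleph.{0} 1).ord, ∀ x ∈ l, x.1 < fseq h δ ξ ∧ x.2 < fseq h δ ξ := by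
      induction l with
      | nil => exact ⟨0, hω.bot_lt, by simp⟩
      | cons y l ih =>
        obtain ⟨ξ, hξ, h1⟩ := ih fun x hx => hl x (List.mem_cons_of_mem _ hx)
        obtain ⟨ξ1, hξ1, h2⟩ := hex _ (hl y List.mem_cons_self).1
        obtain ⟨ξ2, hξ2, h3⟩ := hex _ (hl y List.mem_cons_self).2
        refine ⟨max ξ (max ξ1 ξ2), max_lt hξ (max_lt hξ1 hξ2), ?_⟩
        have e0 := hmono.monotone (le_max_left ξ (max ξ1 ξ2))
        have e1 := hmono.monotone ((le_max_left ξ1 ξ2).trans (le_max_right ξ (max ξ1 ξ2)))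
        have e2 := hmono.monotone ((le_max_right ξ1 ξ2).trans (le_max_right ξ (max ξ1 ξ2)))
        intro x hx
        rcases List.mem_cons.1 hx with rfl | hx
        · exact ⟨h2.trans_le e1, h3.trans_le e2⟩
        · exact ⟨(h1 x hx).1.trans_le e0, (h1 x hx).2.trans_le e0⟩
    obtain ⟨ξ, hξ, h1⟩ := hlist
    obtain ⟨ξ1, hξ1, h2⟩ := hex _ ha
    have e0 := hmono.monotone (le_max_left ξ ξ1)
    have e1 := hmono.monotone (le_max_right ξ ξ1)
    have hm := max_lt hξ hξ1
    refine (hhb (fseq h δ (max ξ ξ1)) l a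
      (fun x hx => ⟨(h1 x hx).1.trans_le e0, (h1 x hx).2.trans_le e0⟩) (h2.trans_le e1)).trans ?_
    exact (fseq_lt h δ (Order.lt_succ _)).trans (hlt _ (hω.succ_lt hm))

lemma clF_mono {α : Type*} (F : Finset α → α) {x y : Set α} (h : x ⊆ y) : clF F x ⊆ clF F y :=
  fun _ ha z hz => ha z ⟨h.trans hz.1, hz.2⟩

lemma subset_clF {α : Type*} (F : Finset α → α) (x : Set α) : x ⊆ clF F x :=
  fun _ ha _ hz => hz.1 ha

lemma clF_closed {α : Type*} (F : Finset α → α) (x : Set α) : ClosedUnder F (clF F x) :=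
  fun s hs z hz => hz.2 s fun _ ha => hs ha z hz

/-- A finite subset of an increasing union is contained in one of the pieces. -/
lemma finset_subset_stage {α : Type*} (T : ℕ → Set α) (hT : Monotone T) (s : Finset α)
    (hs : ↑s ⊆ ⋃ n, T n) : ∃ n, ↑s ⊆ T n := by
  classical
  induction s using Finset.induction_on with
  | empty => exact ⟨0, by simp⟩
  | insert a s _ ih =>
    rw [Finset.coe_insert, Set.insert_subset_iff] at hs
    obtain ⟨n, hn⟩ := ih hs.2
    obtain ⟨m, hm⟩ := Set.mem_iUnion.1 hs.1
    refine ⟨max n m, ?_⟩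
    rw [Finset.coe_insert, Set.insert_subset_iff]
    exact ⟨hT (le_max_right n m) hm, hn.trans (hT (le_max_left n m))⟩

lemma clF_iUnion {α : Type*} (F : Finset α → α) (T : ℕ → Set α) (hT : Monotone T) :
    clF F (⋃ n, T n) ⊆ ⋃ n, clF F (T n) := by
  intro a ha
  refine ha _ ⟨Set.iUnion_mono fun n => subset_clF F _, ?_⟩
  intro s hs
  obtain ⟨n, hn⟩ := finset_subset_stage _ (fun i j hij => clF_mono F (hT hij)) s hs
  exact Set.mem_iUnion.2 ⟨n, clF_closed F _ s hn⟩

def stageF {α : Type*} (F : Finset α → α) (x : Set α) : ℕ → Set α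
  | 0 => x
  | n + 1 => stageF F x n ∪ F '' {s | ↑s ⊆ stageF F x n}

lemma clF_countable {α : Type*} (F : Finset α → α) {x : Set α} (hx : x.Countable) :
    (clF F x).Countable := by
  have hmono : Monotone (stageF F x) :=
    monotone_nat_of_le_succ fun n => Set.subset_union_left
  have hc : ∀ n, (stageF F x n).Countable := by
    intro n
    induction n with
    | zero => exact hx
    | succ n ih =>
      refine ih.union (Set.Countable.image ?_ F)
      have := Set.countable_ofPred_finite_subset ih
      refine Set.Countable.mono ?_ (this.preimage (f := fun s : Finset α => (s : Set α))
        Finset.coe_injective)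
      intro s hs
      exact ⟨s.finite_toSet, hs⟩
  refine (Set.countable_iUnion hc).mono ?_
  intro a ha
  refine ha _ ⟨Set.subset_iUnion (stageF F x) 0, ?_⟩
  intro s hs
  obtain ⟨n, hn⟩ := finset_subset_stage _ hmono s hs
  exact Set.mem_iUnion.2 ⟨n + 1, Or.inr ⟨s, hn, rfl⟩⟩

/-- Legality of I's moves. -/
def Legal (κ : Cardinal.{0}) (x : OO) (β : Ordinal.{0}) : Prop :=
  x.1 < κ.ord ∧ x.2 < κ.ord ∧ x.1 < x.2 ∧ β < x.2 ∧ x.2.cof = aleph 1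

/-- The finite position is not yet lost for I. -/
def OKpos (F : Finset Ordinal.{0} → Ordinal.{0}) (q : List OO) : Prop :=
  ∀ x ∈ q, clF F {c | ∃ y ∈ q, y.2 = c} ∩ Ico x.1 x.2 = ∅

def pre {α : Type*} (x : ℕ → α) (n : ℕ) : List α := List.ofFn fun i : Fin n => x i

lemma mem_pre {α : Type*} (x : ℕ → α) (n : ℕ) (a : α) : a ∈ pre x n ↔ ∃ i < n, x i = a := by
  simp only [pre, List.mem_ofFn]
  constructor
  · rintro ⟨i, hi⟩
    exact ⟨i, i.2, hi⟩
  · rintro ⟨i, hi, h⟩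
    exact ⟨⟨i, hi⟩, h⟩

lemma pre_succ {α : Type*} (x : ℕ → α) (n : ℕ) : pre x (n + 1) = pre x n ++ [x n] := by
  simp [pre, List.ofFn_succ_last, -List.ofFn_succ]

lemma pre_succ' {α : Type*} (x : ℕ → α) (n : ℕ) :
    pre x (n + 1) = x 0 :: pre (fun i => x (i + 1)) n := by
  simp [pre, List.ofFn_succ]

/-- II has a winning strategy from position `q`. -/
def PII (κ : Cardinal.{0}) (F : Finset Ordinal.{0} → Ordinal.{0}) (q : List OO) : Prop :=
  ∃ b : List OO → Ordinal.{0} → Ordinal.{0}, (∀ l a, b l a < κ.ord) ∧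
    ∀ x : ℕ → OO, (∀ n, Legal κ (x n) (b (pre x n) (x n).1)) → ∃ n, ¬ OKpos F (q ++ pre x n)

lemma not_PII_nil {κ : Cardinal.{0}} (hreg : κ.IsRegular) (hκ : aleph 2 ≤ κ)
    (F : Finset Ordinal.{0} → Ordinal.{0}) : ¬ PII κ F [] := by
  rintro ⟨b, hb, hwin⟩
  have hpos : (0 : Ordinal.{0}) < κ.ord := hreg.ord_pos
  choose! g hg1 hg2 hg3 hg4 using exists_closed_point hreg hκ b hb
  let γ : ℕ → Ordinal.{0} := fun n => Nat.rec (g 0) (fun _ d => g d) n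
  have hγs : ∀ n, γ (n + 1) = g (γ n) := fun n => rfl
  have hγκ : ∀ n, γ n < κ.ord := by
    intro n
    induction n with
    | zero => exact hg2 0 hpos
    | succ n ih => exact hg2 _ ih
  have hγlt : StrictMono γ := strictMono_nat_of_lt_succ fun n => hg1 _ (hγκ n)
  have hγex : ∀ n, ∃ d < κ.ord, γ n = g d := by
    intro n
    cases n with
    | zero => exact ⟨0, hpos, rfl⟩
    | succ n => exact ⟨_, hγκ n, rfl⟩
  have hcof : ∀ n, (γ n).cof = aleph 1 := by
    intro n
    obtain ⟨d, hd, h⟩ := hγex n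
    rw [h]
    exact hg3 d hd
  let A := clF F (Set.range γ)
  have hA : A.Countable := clF_countable F (Set.countable_range γ)
  have hα : ∀ n, ∃ a < γ n, ∀ c ∈ A, c < γ n → c < a := by
    intro n
    have hS : (A ∩ Iio (γ n)).Countable := hA.mono Set.inter_subset_left
    refine ⟨_, sSup_add_one_lt_of_lt_cof (s := A ∩ Iio (γ n)) (a := γ n) ?_ fun i hi => hi.2, ?_⟩
    · rw [← lift_cof, hcof]
      refine lt_of_le_of_lt (Cardinal.mk_le_aleph0_iff.2 hS.to_subtype) ?_
      simp
    · intro c hc hcn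
      refine (Order.lt_succ c).trans_le (le_csSup ?_ ⟨c, ⟨hc, hcn⟩, rfl⟩)
      refine ⟨γ n, ?_⟩
      rintro _ ⟨d, hd, rfl⟩
      exact Order.succ_le_of_lt hd.2
  choose a ha1 ha2 using hα
  let x : ℕ → OO := fun n => (a n, γ n)
  obtain ⟨n, hn⟩ := hwin x (by
    intro n
    refine ⟨(ha1 n).trans (hγκ n), hγκ n, ha1 n, ?_, hcof n⟩
    obtain ⟨d, hd, h⟩ := hγex n
    have h4 := hg4 d hd (pre x n) (a n)
    rw [← h] at h4
    refine h4 ?_ (ha1 n)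
    intro y hy
    obtain ⟨i, hi, rfl⟩ := (mem_pre x n y).1 hy
    exact ⟨(ha1 i).trans (hγlt hi), hγlt hi⟩)
  apply hn
  intro y hy
  rw [List.nil_append] at hy
  obtain ⟨i, hi, rfl⟩ := (mem_pre x n y).1 hy
  rw [Set.eq_empty_iff_forall_notMem]
  rintro c ⟨hc, hc1, hc2⟩
  have hcA : c ∈ A := by
    refine clF_mono F ?_ hc
    rintro _ ⟨y, hy, rfl⟩
    rw [List.nil_append] at hy
    obtain ⟨j, hj, rfl⟩ := (mem_pre x n y).1 hy
    exact ⟨j, rfl⟩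
  exact absurd (ha2 i c hcA hc2) (not_lt.2 hc1)

lemma OK_of_not_PII {κ : Cardinal.{0}} (hreg : κ.IsRegular)
    {F : Finset Ordinal.{0} → Ordinal.{0}} {q : List OO} (h : ¬ PII κ F q) : OKpos F q := by
  by_contra hq
  refine h ⟨fun _ _ => 0, fun _ _ => hreg.ord_pos, fun x _ => ⟨0, ?_⟩⟩
  simpa [pre] using hq

lemma step_of_not_PII {κ : Cardinal.{0}} (hreg : κ.IsRegular)
    {F : Finset Ordinal.{0} → Ordinal.{0}} {q : List OO} (h : ¬ PII κ F q) :
    ∃ a, ∀ β < κ.ord, ∃ γ, Legal κ (a, γ) β ∧ ¬ PII κ F (q ++ [(a, γ)]) := by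
  by_contra! hq
  apply h
  choose b0 hb0 hq using hq
  have hb' : ∀ x : OO, ∃ b : List OO → Ordinal.{0} → Ordinal.{0}, (∀ l a, b l a < κ.ord) ∧
      (Legal κ x (b0 x.1) → ∀ y : ℕ → OO, (∀ n, Legal κ (y n) (b (pre y n) (y n).1)) →
        ∃ n, ¬ OKpos F ((q ++ [x]) ++ pre y n)) := by
    intro x
    by_cases hx : Legal κ x (b0 x.1)
    · obtain ⟨b, h1, h2⟩ := hq x.1 x.2 hx
      exact ⟨b, h1, fun _ => h2⟩
    · exact ⟨fun _ _ => 0, fun _ _ => hreg.ord_pos, fun h => absurd h hx⟩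
  choose B hB1 hB2 using hb'
  let b : List OO → Ordinal.{0} → Ordinal.{0} := fun l a =>
    match l with
    | [] => b0 a
    | x :: l => B x l a
  refine ⟨b, ?_, ?_⟩
  · intro l a
    cases l with
    | nil => exact hb0 a
    | cons x l => exact hB1 x l a
  · intro x hx
    obtain ⟨n, hn⟩ := hB2 (x 0) (hx 0) (fun i => x (i + 1)) (by
      intro n
      have := hx (n + 1)
      rw [pre_succ'] at this
      exact this)
    refine ⟨n + 1, ?_⟩
    rw [pre_succ']
    simpa using hn

/-- In the game `G₁(λ, F)`, at round `n` Player I plays `α n`, Player II answers with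
`β n < λ`, and Player I then plays `γ n`.  A strategy for Player I is coded by a pair of
functions `sA sC : List Ordinal → Ordinal` producing `α n` from `⟨β 0, …, β (n-1)⟩` and
`γ n` from `⟨β 0, …, β n⟩`.  The theorem asserts that Player I has a winning strategy:
against every sequence of legal moves of II, I's moves are legal
(`α n < λ`, `α n, β n < γ n < λ`, `cof (γ n) = ω₁`) and
`cl_F({γ n : n < ω}) ∩ [α m, γ m) = ∅` for every `m`. -/
theorem stmt2 (κ : Cardinal.{0}) (hreg : κ.IsRegular) (hκ : aleph 2 ≤ κ)
    (F : Finset Ordinal → Ordinal)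
    (hF : ∀ s : Finset Ordinal, ↑s ⊆ Iio κ.ord → F s < κ.ord) :
    ∃ sA sC : List Ordinal → Ordinal,
      ∀ β : ℕ → Ordinal, (∀ n, β n < κ.ord) →
        ∀ α γ : ℕ → Ordinal,
          (∀ n, α n = sA (List.ofFn fun i : Fin n => β i)) →
          (∀ n, γ n = sC (List.ofFn fun i : Fin (n + 1) => β i)) →
          (∀ n, α n < κ.ord ∧ γ n < κ.ord ∧ α n < γ n ∧ β n < γ n ∧
            (γ n).cof = aleph 1) ∧
          ∀ m, clF F (Set.range γ) ∩ Ico (α m) (γ m) = ∅ := by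
  classical
  have hstep : ∀ q : List OO, ∃ a, ¬ PII κ F q → ∀ β < κ.ord, ∃ γ, Legal κ (a, γ) β ∧
      ¬ PII κ F (q ++ [(a, γ)]) := by
    intro q
    by_cases h : PII κ F q
    · exact ⟨0, fun h' => absurd h h'⟩
    · obtain ⟨a, ha⟩ := step_of_not_PII hreg h
      exact ⟨a, fun _ => ha⟩
  choose A hA using hstep
  choose! C hC1 hC2 using hA
  let pos : List Ordinal.{0} → List OO :=
    fun l => l.foldl (fun q β => q ++ [(A q, C q β)]) []
  refine ⟨fun l => A (pos l), fun l => ((pos l).getLastD (0, 0)).2, ?_⟩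
  intro β hβ α γ hα hγ
  have hpos : ∀ n, pos (pre β (n + 1)) =
      pos (pre β n) ++ [(A (pos (pre β n)), C (pos (pre β n)) (β n))] := by
    intro n
    simp only [pos, pre_succ, List.foldl_append, List.foldl_cons, List.foldl_nil]
  have hα' : ∀ n, α n = A (pos (pre β n)) := hα
  have hγ' : ∀ n, γ n = C (pos (pre β n)) (β n) := by
    intro n
    have : γ n = ((pos (pre β (n + 1))).getLastD (0, 0)).2 := hγ n
    rw [this, hpos]
    simp
  have hpre : ∀ n, pos (pre β n) = pre (fun i => (α i, γ i)) n := by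
    intro n
    induction n with
    | zero => simp [pre, pos]
    | succ n ih => rw [hpos, pre_succ, ← hα', ← hγ', ih]
  have hW : ∀ n, ¬ PII κ F (pos (pre β n)) := by
    intro n
    induction n with
    | zero => simpa [pre, pos] using not_PII_nil hreg hκ F
    | succ n ih =>
      rw [hpos]
      exact hC2 _ ih _ (hβ n)
  refine ⟨fun n => ?_, fun m => ?_⟩
  · have := hC1 _ (hW n) _ (hβ n)
    rw [← hα', ← hγ'] at this
    exact this
  · rw [Set.eq_empty_iff_forall_notMem]
    rintro c ⟨hc, hcm⟩
    let T : ℕ → Set Ordinal.{0} := fun n => {c | ∃ i < n, γ i = c}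
    have hT : Monotone T := by
      rintro i j hij _ ⟨k, hk, rfl⟩
      exact ⟨k, hk.trans_le hij, rfl⟩
    have hr : Set.range γ ⊆ ⋃ n, T n := by
      rintro _ ⟨i, rfl⟩
      exact Set.mem_iUnion.2 ⟨i + 1, i, Nat.lt_succ_self i, rfl⟩
    obtain ⟨n, hn⟩ := Set.mem_iUnion.1 (clF_iUnion F T hT (clF_mono F hr hc))
    have hok := OK_of_not_PII hreg (hW (max n (m + 1)))
    rw [hpre] at hok
    have h1 := hok (α m, γ m) ((mem_pre _ _ _).2
      ⟨m, lt_of_lt_of_le (Nat.lt_succ_self m) (le_max_right _ _), rfl⟩)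
    have h2 : c ∈ clF F {c | ∃ y ∈ pre (fun i => (α i, γ i)) (max n (m + 1)), y.2 = c} := by
      refine clF_mono F ?_ hn
      rintro _ ⟨i, hi, rfl⟩
      exact ⟨(α i, γ i), (mem_pre _ _ _).2 ⟨i, lt_of_lt_of_le hi (le_max_left _ _), rfl⟩, rfl⟩
    exact (Set.eq_empty_iff_forall_notMem.1 h1) c ⟨h2, hcm⟩

end
end

section
/- Assume that SSR holds, i.e., SSR(λ) holds for every cardinal λ ≥ ω₂. Then the Singular Cardinal Hypothesis holds: λ^{cof(λ)} = λ⁺ for every singular cardinal λ with 2^{cof(λ)} < λ. -/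
open Set Cardinal Ordinal

noncomputable section

/-! ### Sizes -/

/-- Universe independent `#ι ≤ μ`. -/
def SzLe.{u} (ι : Type u) (μ : Cardinal.{0}) : Prop :=
  ∃ f : ι → μ.out, Function.Injective f

theorem szLe_iff {ι : Type} {μ : Cardinal.{0}} : SzLe ι μ ↔ #ι ≤ μ := by
  constructor
  · rintro ⟨f, hf⟩
    simpa using Cardinal.mk_le_of_injective hf
  · intro h
    rw [← Cardinal.mk_out μ, Cardinal.le_def] at h
    obtain ⟨f⟩ := h
    exact ⟨f, f.injective⟩

theorem SzLe.of_inj.{u, v} {ι : Type u} {κ : Type v} {μ : Cardinal.{0}} (h : SzLe κ μ) (f : ι → κ)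
    (hf : Function.Injective f) : SzLe ι μ := by
  obtain ⟨g, hg⟩ := h
  exact ⟨g ∘ f, hg.comp hf⟩

theorem SzLe.of_surj.{u, v} {ι : Type u} {κ : Type v} {μ : Cardinal.{0}} (h : SzLe κ μ) (f : κ → ι)
    (hf : Function.Surjective f) : SzLe ι μ :=
  h.of_inj (Function.surjInv hf) (Function.injective_surjInv hf)

theorem SzLe.mono.{u} {ι : Type u} {μ ν : Cardinal.{0}} (h : SzLe ι μ) (hμ : μ ≤ ν) : SzLe ι ν := by
  have : SzLe μ.out ν := szLe_iff.2 (by simpa using hμ)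
  obtain ⟨f, hf⟩ := h
  exact this.of_inj f hf

theorem SzLe.exists_type.{u} {ι : Type u} {μ : Cardinal.{0}} (h : SzLe ι μ) :
    ∃ (κ : Type) (_ : ι ≃ κ), #κ ≤ μ := by
  obtain ⟨f, hf⟩ := h
  refine ⟨Set.range f, Equiv.ofInjective f hf, ?_⟩
  simpa using Cardinal.mk_set_le (Set.range f)

theorem szLe_Iio {o : Ordinal.{0}} {μ : Cardinal.{0}} (h : o.card ≤ μ) : SzLe (Iio o) μ := by
  have : SzLe o.ToType μ := szLe_iff.2 (by simpa using h)
  exact this.of_inj (ToType.mk (o := o)) (ToType.mk (o := o)).injective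

theorem szLe_countable.{u} {ι : Type u} [Countable ι] {μ : Cardinal.{0}} (h : ℵ₀ ≤ μ) : SzLe ι μ := by
  obtain ⟨f, hf⟩ := exists_injective_nat ι
  have : SzLe ℕ μ := szLe_iff.2 (by simpa using h)
  exact this.of_inj f hf

theorem szLe_prod.{u, v} {ι : Type u} {κ : Type v} {μ : Cardinal.{0}} (hμ : ℵ₀ ≤ μ)
    (h : SzLe ι μ) (h' : SzLe κ μ) : SzLe (ι × κ) μ := by
  obtain ⟨f, hf⟩ := h
  obtain ⟨g, hg⟩ := h'
  have : SzLe (μ.out × μ.out) μ := szLe_iff.2 (by simp [Cardinal.mul_eq_self hμ])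
  exact this.of_inj (Prod.map f g) (hf.prodMap hg)

/-- `o` has cofinality bigger than `μ`. -/
def CofGt (o : Ordinal.{0}) (μ : Cardinal.{0}) : Prop :=
  ∀ (ι : Type) (φ : ι → Ordinal.{0}), #ι ≤ μ → (∀ i, φ i < o) → ∃ b < o, ∀ i, φ i < b

theorem cofGt_of_lt_cof {o : Ordinal.{0}} {μ : Cardinal.{0}} (h : μ < o.cof) : CofGt o μ := by
  intro ι φ hι hφ
  refine ⟨_, Ordinal.iSup_add_one_lt_of_lt_cof (hι.trans_lt h) hφ, fun i => ?_⟩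
  exact (lt_add_one (φ i)).trans_le (Ordinal.le_iSup (fun i => φ i + 1) i)

theorem CofGt.mono {o : Ordinal.{0}} {μ ν : Cardinal.{0}} (h : CofGt o μ) (hν : ν ≤ μ) : CofGt o ν :=
  fun ι φ hι hφ => h ι φ (hι.trans hν) hφ

theorem CofGt.gen.{u} {o : Ordinal.{0}} {μ : Cardinal.{0}} (h : CofGt o μ) {ι : Type u} (hι : SzLe ι μ)
    (φ : ι → Ordinal.{0}) (hφ : ∀ i, φ i < o) : ∃ b < o, ∀ i, φ i < b := by
  obtain ⟨κ, e, hκ⟩ := hι.exists_type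
  obtain ⟨b, hb, h'⟩ := h κ (fun k => φ (e.symm k)) hκ (fun k => hφ _)
  exact ⟨b, hb, fun i => by simpa using h' (e i)⟩

theorem CofGt.pos {o : Ordinal.{0}} {μ : Cardinal.{0}} (h : CofGt o μ) : 0 < o := by
  obtain ⟨b, hb, -⟩ := h Empty (fun _ => 0) (by simp) (by simp)
  exact (zero_le : (0 : Ordinal) ≤ b).trans_lt hb

theorem CofGt.two {o : Ordinal.{0}} {μ : Cardinal.{0}} (h : CofGt o μ) (hμ : ℵ₀ ≤ μ)
    {a b : Ordinal.{0}} (ha : a < o) (hb : b < o) : ∃ c < o, a < c ∧ b < c := by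
  obtain ⟨c, hc, h'⟩ := h.gen (szLe_countable hμ) (fun i : Bool => if i then a else b)
    (by intro i; cases i <;> simp [ha, hb])
  exact ⟨c, hc, by simpa using h' true, by simpa using h' false⟩

theorem CofGt.succ {o : Ordinal.{0}} {μ : Cardinal.{0}} (h : CofGt o μ) (hμ : ℵ₀ ≤ μ)
    {a : Ordinal.{0}} (ha : a < o) : a + 1 < o := by
  obtain ⟨c, hc, h1, -⟩ := h.two hμ ha ha
  exact (Order.add_one_le_of_lt h1).trans_lt hc

theorem CofGt.nat {o : Ordinal.{0}} {μ : Cardinal.{0}} (h : CofGt o μ) (hμ : ℵ₀ ≤ μ)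
    (φ : ℕ → Ordinal.{0}) (hφ : ∀ i, φ i < o) : ∃ b < o, ∀ i, φ i < b :=
  h.gen (szLe_countable hμ) φ hφ

/-- pigeonhole -/
theorem CofGt.pigeon.{u} {κ : Ordinal.{0}} {μ : Cardinal.{0}} (h : CofGt κ μ) {V : Type u} (hV : SzLe V μ)
    (φ : Ordinal.{0} → V) : ∃ v, ∀ a < κ, ∃ b, a ≤ b ∧ b < κ ∧ φ b = v := by
  by_contra! hc
  choose a ha ha' using hc
  obtain ⟨b, hb, h'⟩ := h.gen hV a ha
  exact ha' (φ b) b (h' _).le hb rfl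

/-- `θ` is (the initial ordinal of) a regular uncountable cardinal. -/
def Reg (θ : Ordinal.{0}) : Prop := CofGt θ ℵ₀ ∧ ∀ ξ < θ, CofGt θ ξ.card

theorem reg_ord {c : Cardinal.{0}} (hc : c.IsRegular) (h : ℵ₀ < c) : Reg c.ord := by
  refine ⟨cofGt_of_lt_cof (by rwa [hc.cof_ord]), fun ξ hξ => cofGt_of_lt_cof ?_⟩
  rw [hc.cof_ord]
  exact Cardinal.lt_ord.1 hξ

theorem reg_omega1 : Reg omega1 := reg_ord isRegular_aleph_one (by simp)

theorem Reg.bdd {θ : Ordinal.{0}} (h : Reg θ) (F : Ordinal.{0} → Ordinal.{0}) (hF : ∀ η < θ, F η < θ)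
    {ζ : Ordinal.{0}} (hζ : ζ < θ) : ∃ b < θ, ζ < b ∧ ∀ η ≤ ζ, F η < b := by
  have h1 := h.1.succ le_rfl hζ
  obtain ⟨b, hb, h'⟩ := (h.2 _ h1).gen (szLe_Iio le_rfl) (fun i : Iio (ζ + 1) => F i)
    (fun i => hF _ (i.2.out.trans h1))
  obtain ⟨c, hc, h2, h3⟩ := h.1.two le_rfl hζ hb
  exact ⟨c, hc, h2, fun η hη => (h' ⟨η, Order.lt_add_one_iff.2 hη⟩).trans h3⟩

def Stat (θ : Ordinal.{0}) (T : Set Ordinal.{0}) : Prop :=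
  ∀ F : Ordinal.{0} → Ordinal.{0}, (∀ η < θ, F η < θ) →
    ∃ ξ ∈ T, ξ < θ ∧ 0 < ξ ∧ ∀ η < ξ, F η < ξ

theorem Stat.mono {θ : Ordinal.{0}} {T T' : Set Ordinal.{0}} (h : Stat θ T)
    (hT : ∀ ξ ∈ T, 0 < ξ → ξ < θ → ξ ∈ T') : Stat θ T' := by
  intro F hF
  obtain ⟨ξ, h1, h2, h3, h4⟩ := h F hF
  exact ⟨ξ, hT ξ h1 h3 h2, h2, h3, h4⟩

theorem stat_univ {θ : Ordinal.{0}} (h : Reg θ) : Stat θ univ := by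
  intro F hF
  have := fun ζ : Iio θ => h.bdd F hF ζ.2
  choose G hG hG1 hG2 using this
  let u : ℕ → Iio θ := fun k => Nat.rec ⟨0, h.1.pos⟩ (fun _ x => ⟨G x, hG x⟩) k
  have hu : ∀ k, (u (k+1) : Ordinal) = G (u k) := fun k => rfl
  obtain ⟨b, hb, hb'⟩ := h.1.nat le_rfl (fun k => (u k).1) (by intro k; exact (u k).2)
  refine ⟨⨆ k, (u k).1, mem_univ _, ?_, ?_, ?_⟩
  · exact (Ordinal.iSup_le fun k => (hb' k).le).trans_lt hb
  · rw [Ordinal.lt_iSup_iff]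
    refine ⟨1, ?_⟩
    have := hG1 (u 0)
    rw [← hu] at this
    exact (zero_le).trans_lt this
  · intro η hη
    rw [Ordinal.lt_iSup_iff] at hη ⊢
    obtain ⟨k, hk⟩ := hη
    exact ⟨k+1, by rw [hu]; exact hG2 _ _ hk.le⟩

theorem Stat.fodor {θ : Ordinal.{0}} (h : Reg θ) {T : Set Ordinal.{0}} (hT : Stat θ T)
    (r : Ordinal.{0} → Ordinal.{0}) (hr : ∀ ξ ∈ T, 0 < ξ → ξ < θ → r ξ < ξ) :
    ∃ i < θ, Stat θ {ξ ∈ T | r ξ = i} := by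
  by_contra! hc
  simp only [Stat] at hc
  push Not at hc
  choose F hF hF' using hc
  have h1 : ∀ η (hη : η < θ), ∃ b < θ, ∀ i (hi : i ≤ η), ∀ j ≤ η, F i (hi.trans_lt hη) j < b := by
    intro η hη
    have : ∀ i (hi : i < η + 1), ∃ b < θ, ∀ j ≤ η, F i ((Order.lt_add_one_iff.1 hi).trans_lt hη) j < b := by
      intro i hi
      obtain ⟨b, hb, -, hb'⟩ := h.bdd (F i ((Order.lt_add_one_iff.1 hi).trans_lt hη))
        (fun j hj => hF _ _ _ hj) hη
      exact ⟨b, hb, hb'⟩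
    choose b hb hb' using this
    obtain ⟨c, hc, hc'⟩ := (h.2 _ (h.1.succ le_rfl hη)).gen (szLe_Iio le_rfl)
      (fun i : Iio (η + 1) => b i i.2) (fun i => hb _ _)
    exact ⟨c, hc, fun i hi j hj => (hb' i (Order.lt_add_one_iff.2 hi) j hj).trans
      (hc' ⟨i, Order.lt_add_one_iff.2 hi⟩)⟩
  choose G hG hG' using h1
  obtain ⟨ξ, hξ, h2, h3, h4⟩ := hT (fun η => if hη : η < θ then G η hη else 0)
    (fun η hη => by simp [hη, hG])
  have h5 := hr ξ hξ h3 h2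
  obtain ⟨η, h6, h7⟩ := hF' (r ξ) (h5.trans h2) ξ ⟨hξ, rfl⟩ h2 h3
  have h8 : max η (r ξ) < ξ := max_lt h6 h5
  have h9 := h4 _ h8
  rw [dif_pos (h8.trans h2)] at h9
  exact absurd (hG' _ (h8.trans h2) (r ξ) (le_max_right _ _) η (le_max_left _ _)) (not_lt.2 (h9.le.trans h7))

theorem Stat.iUnion {θ : Ordinal.{0}} (h : Reg θ) {ι : Type} [Countable ι] {T : Set Ordinal.{0}}
    (hT : Stat θ T) (U : ι → Set Ordinal.{0})
    (hU : ∀ ξ ∈ T, 0 < ξ → ξ < θ → ∃ i, ξ ∈ U i) : ∃ i, Stat θ {ξ ∈ T | ξ ∈ U i} := by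
  by_contra! hc
  simp only [Stat] at hc
  push Not at hc
  choose F hF hF' using hc
  have h1 : ∀ η (hη : η < θ), ∃ b < θ, ∀ i, F i η < b := fun η hη =>
    h.1.gen (szLe_countable le_rfl) (fun i => F i η) (fun i => hF i η hη)
  choose G hG hG' using h1
  obtain ⟨ξ, hξ, h2, h3, h4⟩ := hT (fun η => if hη : η < θ then G η hη else 0)
    (fun η hη => by simp [hη, hG])
  obtain ⟨i, hi⟩ := hU ξ hξ h3 h2
  obtain ⟨η, h6, h7⟩ := hF' i ξ ⟨hξ, hi⟩ h2 h3
  have h9 := h4 _ h6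
  rw [dif_pos (h6.trans h2)] at h9
  exact absurd (hG' _ (h6.trans h2) i) (not_lt.2 (h9.le.trans h7))

theorem Stat.or {θ : Ordinal.{0}} (h : Reg θ) {T : Set Ordinal.{0}} (hT : Stat θ T)
    (P : Ordinal.{0} → Prop) : Stat θ {ξ ∈ T | P ξ} ∨ Stat θ {ξ ∈ T | ¬ P ξ} := by
  obtain ⟨i, hi⟩ := hT.iUnion h (fun b : Bool => if b then {ξ | P ξ} else {ξ | ¬ P ξ}) (by
    intro ξ _ _ _
    by_cases hP : P ξ
    · exact ⟨true, by simpa using hP⟩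
    · exact ⟨false, by simpa using hP⟩)
  cases i
  · right; simpa using hi
  · left; simpa using hi

theorem Stat.closed {θ : Ordinal.{0}} {T : Set Ordinal.{0}} (hT : Stat θ T)
    (G : Ordinal.{0} → Ordinal.{0}) (hG : ∀ η < θ, G η < θ) :
    Stat θ {ξ ∈ T | ∀ η < ξ, G η < ξ} := by
  intro F hF
  obtain ⟨ξ, h1, h2, h3, h4⟩ := hT (fun η => max (F η) (G η)) (fun η hη => max_lt (hF η hη) (hG η hη))
  exact ⟨ξ, ⟨h1, fun η hη => (le_max_right _ _).trans_lt (h4 η hη)⟩, h2, h3,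
    fun η hη => (le_max_left _ _).trans_lt (h4 η hη)⟩

theorem Stat.gt {θ : Ordinal.{0}} {T : Set Ordinal.{0}} (hT : Stat θ T)
    {a : Ordinal.{0}} (ha : a < θ) : Stat θ {ξ ∈ T | a < ξ} :=
  (hT.closed (fun _ => a) (fun _ _ => ha)).mono fun _ h1 h2 _ => ⟨h1.1, h1.2 0 h2⟩

theorem Stat.exists {θ : Ordinal.{0}} {T : Set Ordinal.{0}} (hT : Stat θ T)
    {a : Ordinal.{0}} (ha : a < θ) : ∃ ξ ∈ T, a < ξ ∧ ξ < θ := by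
  obtain ⟨ξ, h1, h2, h3, h4⟩ := hT (fun _ => a) (fun _ _ => ha)
  exact ⟨ξ, h1, h4 0 h3, h2⟩


theorem szLe_option.{u} {ι : Type u} {μ : Cardinal.{0}} (hμ : ℵ₀ ≤ μ)
    (h : SzLe ι μ) : SzLe (Option ι) μ := by
  obtain ⟨f, hf⟩ := h
  have : SzLe (Option μ.out) μ := szLe_iff.2 (by simp [Cardinal.add_one_eq hμ])
  exact this.of_inj (Option.map f) (Option.map_injective hf)

theorem szLe_insert.{u} {α : Type u} {K : Set α} {a : α} {μ : Cardinal.{0}} (hμ : ℵ₀ ≤ μ)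
    (h : SzLe K μ) : SzLe (insert a K : Set α) μ := by
  refine (szLe_option hμ h).of_surj
    (fun o => match o with | none => ⟨a, mem_insert _ _⟩ | some x => ⟨x.1, mem_insert_of_mem _ x.2⟩) ?_
  rintro ⟨x, rfl | hx⟩
  · exact ⟨none, rfl⟩
  · exact ⟨some ⟨x, hx⟩, rfl⟩

theorem szLe_pi.{u} {K : ℕ → Type u} {μ ν : Cardinal.{0}} (hν : μ ^ ℵ₀ ≤ ν)
    (h : ∀ n, SzLe (K n) μ) : SzLe (∀ n, K n) ν := by
  choose f hf using h
  have : SzLe (ℕ → μ.out) ν := szLe_iff.2 (by simpa using hν)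
  refine this.of_inj (fun x n => f n (x n)) ?_
  intro x y hxy
  funext n
  exact hf n (congrFun hxy n)

theorem szLe_range.{u, v} {ι : Type u} {α : Type v} {μ : Cardinal.{0}} (h : SzLe ι μ) (φ : ι → α) :
    SzLe (Set.range φ) μ :=
  h.of_surj (Set.rangeFactorization φ) Set.rangeFactorization_surjective

/-- projection of an ordinal to a set of ordinals -/
def projO (S : Set Ordinal.{0}) (v : Ordinal.{0}) : Ordinal.{0} := sInf {s ∈ S | v ≤ s}

theorem projO_spec {S : Set Ordinal.{0}} {v t : Ordinal.{0}} (ht : t ∈ S) (hv : v ≤ t) :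
    projO S v ∈ S ∧ v ≤ projO S v := by
  have : projO S v ∈ {s ∈ S | v ≤ s} := csInf_mem ⟨t, ht, hv⟩
  exact this

theorem projO_le {S : Set Ordinal.{0}} {v s : Ordinal.{0}} (hs : s ∈ S) (hv : v ≤ s) :
    projO S v ≤ s := csInf_le' ⟨hs, hv⟩

theorem projO_anti {S S' : Set Ordinal.{0}} {v t : Ordinal.{0}} (ht : t ∈ S) (hv : v ≤ t)
    (h : S ⊆ S') : projO S' v ≤ projO S v := by
  have := projO_spec ht hv
  exact projO_le (h this.1) this.2

theorem projO_mono {S : Set Ordinal.{0}} {v w t : Ordinal.{0}} (ht : t ∈ S) (hw : w ≤ t)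
    (h : v ≤ w) : projO S v ≤ projO S w := by
  have := projO_spec ht hw
  exact projO_le this.1 (h.trans this.2)

/-- the `ω₁`-chain used for the maximality argument -/
def chainS (top : ℕ → Ordinal.{0}) (Next : (ℕ → Set Ordinal.{0}) → ℕ → Set Ordinal.{0})
    (k : Ordinal.{0}) (n : ℕ) : Set Ordinal.{0} :=
  {top n} ∪ ⋃ j : Iio k, Next (fun m => chainS top Next j.1 m) n
termination_by k
decreasing_by exact j.2

theorem countable_Iio_of_lt {k : Ordinal.{0}} (hk : k < omega1) : Countable (Iio k) := by
  have h : k.card ≤ ℵ₀ := by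
    have := Cardinal.lt_ord.1 hk
    rw [← Cardinal.succ_aleph0] at this
    exact Order.lt_succ_iff.1 this
  obtain ⟨f, hf⟩ := szLe_Iio h
  have : Countable (Quotient.out ℵ₀) := by
    rw [← Cardinal.mk_le_aleph0_iff]; simp
  exact hf.countable

open Filter in
theorem lub_exists {κ : Ordinal.{0}} {lam : Cardinal.{0}} (hκ : CofGt κ lam) (hc : 2 ^ (ℵ₀ : Cardinal.{0}) ≤ lam)
    (f : Ordinal.{0} → ℕ → Ordinal.{0}) (top : ℕ → Ordinal.{0})
    (hf : ∀ α < κ, ∀ n, f α n < top n)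
    (hinc : ∀ α β, α < β → β < κ → ∀ᶠ n in atTop, f α n < f β n) :
    ∃ g : ℕ → Ordinal.{0}, (∀ n, g n ≤ top n) ∧ (∀ α < κ, ∀ᶠ n in atTop, f α n < g n) ∧
      ∀ u : ℕ → Ordinal.{0}, (∀ α < κ, ∀ᶠ n in atTop, f α n ≤ u n) → ∀ᶠ n in atTop, g n ≤ u n := by
  have hle : ∀ α β, α ≤ β → β < κ → ∀ᶠ n in atTop, f α n ≤ f β n := by
    intro α β h1 h2
    rcases h1.lt_or_eq with h | rfl
    · exact (hinc α β h h2).mono fun n h => h.le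
    · exact Eventually.of_forall fun n => le_rfl
  have hlam : ℵ₀ ≤ lam := (Cardinal.cantor ℵ₀).le.trans hc
  have hlam1 : aleph 1 ≤ lam := by
    rw [← Cardinal.succ_aleph0]
    exact (Order.succ_le_of_lt (Cardinal.cantor ℵ₀)).trans hc
  let Good : (ℕ → Set Ordinal.{0}) → Prop := fun S => ∀ n, (S n).Countable ∧ top n ∈ S n
  have hP : ∀ S : ℕ → Set Ordinal.{0}, Good S → ∃ P : ℕ → Ordinal.{0}, (∀ n, P n ∈ S n) ∧
      ∃ α0 < κ, ∀ α, α0 ≤ α → α < κ → ∀ᶠ n in atTop, projO (S n) (f α n) = P n := by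
    intro S hS
    have hsz : SzLe (∀ n, S n) lam := by
      refine szLe_pi (μ := ℵ₀) (by simpa using hc) fun n => ?_
      have := (hS n).1.to_subtype
      exact szLe_countable le_rfl
    have hm : ∀ α (h : α < κ) n, projO (S n) (f α n) ∈ S n := fun α h n =>
      (projO_spec (hS n).2 (hf α h n).le).1
    obtain ⟨v, hv⟩ := hκ.pigeon hsz (fun α => if h : α < κ then fun n => ⟨projO (S n) (f α n), hm α h n⟩
      else fun n => ⟨top n, (hS n).2⟩)
    have hv' : ∀ a < κ, ∃ b, a ≤ b ∧ b < κ ∧ ∀ n, projO (S n) (f b n) = v n := by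
      intro a ha
      obtain ⟨b, h1, h2, h3⟩ := hv a ha
      refine ⟨b, h1, h2, fun n => ?_⟩
      rw [dif_pos h2] at h3
      rw [← h3]
    refine ⟨fun n => v n, fun n => (v n).2, ?_⟩
    obtain ⟨b0, -, hb0, h0⟩ := hv' 0 hκ.pos
    refine ⟨b0, hb0, fun α h1 h2 => ?_⟩
    obtain ⟨b1, h3, hb1, h4⟩ := hv' α h2
    filter_upwards [hle b0 α h1 h2, hle α b1 h3 hb1] with n h5 h6
    apply le_antisymm
    · rw [← h4 n]
      exact projO_mono (hS n).2 (hf _ hb1 n).le h6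
    · rw [← h0 n]
      exact projO_mono (hS n).2 (hf _ h2 n).le h5
  choose! P hPm a0 ha0 hPa using hP
  have hmax : ∃ S, Good S ∧ ∀ S', Good S' → (∀ n, S n ⊆ S' n) → ∀ᶠ n in atTop, P S' n = P S n := by
    by_contra! hcon
    choose! Next hN1 hN2 hN3 using hcon
    have hGood : ∀ k < omega1, Good (chainS top Next k) := by
      intro k
      induction k using WellFoundedLT.induction with
      | ind k ih =>
        intro hk n
        rw [chainS]
        have := countable_Iio_of_lt hk
        refine ⟨(countable_singleton _).union (countable_iUnion fun j => ?_), Or.inl rfl⟩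
        exact (hN1 _ (ih j.1 j.2 (j.2.out.trans hk)) n).1
    have hsub : ∀ j k, j < k → ∀ n, Next (chainS top Next j) n ⊆ chainS top Next k n := by
      intro j k hjk n
      conv_rhs => rw [chainS]
      intro x hx
      exact Or.inr (mem_iUnion.2 ⟨⟨j, hjk⟩, hx⟩)
    have hmono : ∀ j k, j ≤ k → ∀ n, chainS top Next j n ⊆ chainS top Next k n := by
      intro j k hjk n
      rw [chainS, chainS]
      rintro x (hx | hx)
      · exact Or.inl hx
      · obtain ⟨i, hi⟩ := mem_iUnion.1 hx
        exact Or.inr (mem_iUnion.2 ⟨⟨i.1, i.2.out.trans_le hjk⟩, hi⟩)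
    have hsz : SzLe (Iio omega1) lam := (szLe_Iio (by simp [omega1])).mono hlam1
    obtain ⟨α1, hα1, h1⟩ := hκ.gen hsz (fun k => a0 (chainS top Next k)) (fun k => ha0 _ (hGood k k.2))
    obtain ⟨α2, hα2, h2⟩ := hκ.gen hsz (fun k => a0 (Next (chainS top Next k)))
      (fun k => ha0 _ (hN1 _ (hGood k k.2)))
    obtain ⟨α, hα, h3, h4⟩ := hκ.two hlam hα1 hα2
    let q : Ordinal.{0} → ℕ → Ordinal.{0} := fun k n => projO (chainS top Next k n) (f α n)
    have hq : ∀ j k, j ≤ k → k < omega1 → ∀ n, q k n ≤ q j n := by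
      intro j k hjk hk n
      exact projO_anti (hGood j (hjk.trans_lt hk) n).2 (hf α hα n).le (hmono j k hjk n)
    have hk : ∀ n, ∃ k < omega1, ∀ j < omega1, q k n ≤ q j n := by
      intro n
      let V : Set Ordinal.{0} := (fun k => q k n) '' Iio omega1
      have : sInf V ∈ V := csInf_mem ⟨_, 0, reg_omega1.1.pos, rfl⟩
      obtain ⟨k, hk, hk'⟩ := this
      exact ⟨k, hk, fun j hj => by rw [show q k n = sInf V from hk']; exact csInf_le' ⟨j, hj, rfl⟩⟩
    choose k hk hk' using hk
    obtain ⟨K, hK, hK'⟩ := reg_omega1.1.nat le_rfl k hk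
    have hK1 : K + 1 < omega1 := reg_omega1.1.succ le_rfl hK
    refine hN3 _ (hGood K hK) ?_
    have e1 := hPa _ (hGood K hK) α ((h1 ⟨K, hK⟩).trans h3).le hα
    have e2 := hPa _ (hN1 _ (hGood K hK)) α ((h2 ⟨K, hK⟩).trans h4).le hα
    filter_upwards [e1, e2] with n e1 e2
    rw [← e1, ← e2, not_not]
    apply le_antisymm
    · exact projO_anti (hGood K hK n).2 (hf α hα n).le (hN2 _ (hGood K hK) n)
    · calc projO (chainS top Next K n) (f α n) = q K n := rfl
        _ ≤ q (k n) n := hq _ _ (hK' n).le hK n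
        _ ≤ q (K+1) n := hk' n _ hK1
        _ ≤ _ := projO_anti (hN1 _ (hGood K hK) n).2 (hf α hα n).le (hsub _ _ (lt_add_one K) n)
  obtain ⟨S, hS, hSm⟩ := hmax
  have hfle : ∀ α < κ, ∀ᶠ n in atTop, f α n < P S n ∧ P S n ≤ top n := by
    intro α hα
    obtain ⟨β, hβ, h1, h2⟩ := hκ.two hlam hα (ha0 S hS)
    filter_upwards [hinc α β h1 hβ, hPa S hS β h2.le hβ] with n h3 h4
    rw [← h4]
    exact ⟨h3.trans_le (projO_spec (hS n).2 (hf β hβ n).le).2, projO_le (hS n).2 (hf β hβ n).le⟩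
  refine ⟨fun n => min (P S n) (top n), fun n => min_le_right _ _, ?_, ?_⟩
  · intro α hα
    filter_upwards [hfle α hα] with n hn
    exact lt_min hn.1 (hn.1.trans_le hn.2)
  · intro u hu
    have hS' : Good (fun n => insert (u n) (S n)) := fun n => ⟨(hS n).1.insert _, Or.inr (hS n).2⟩
    have h1 := hSm _ hS' (fun n => subset_insert _ _)
    have hlt := ha0 _ hS'
    filter_upwards [h1, hPa _ hS' _ le_rfl hlt, hu _ hlt] with n h1 h2 h3
    refine (min_le_left _ _).trans ?_
    rw [← h1, ← h2]
    exact projO_le (mem_insert _ _) h3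

/-- the increasing sequence -/
def seqF (ι : Ordinal.{0} → Ordinal.{0} → Ordinal.{0}) (mu : ℕ → Cardinal.{0}) (α : Ordinal.{0}) (n : ℕ) :
    Ordinal.{0} :=
  ⨆ γ : {γ : Iio α // ι α γ.1 < (mu n).ord}, (seqF ι mu γ.1.1 n + 1)
termination_by α
decreasing_by exact γ.1.2

open Filter in
theorem lemmaA (lam : Cardinal.{0}) (mu : ℕ → Cardinal.{0})
    (hmu0 : ∀ n, ℵ₀ ≤ mu n) (hmul : ∀ n, mu n < lam) (hmono : Monotone mu)
    (hcof : ∀ ν < lam, ∃ n, ν < mu n) (hsucc : ∀ ν < lam, Order.succ ν < lam)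
    (hpow : ∀ ν < lam, ν ^ (ℵ₀ : Cardinal.{0}) ≤ lam) (κ : Ordinal.{0}) (hκ : κ = (Order.succ lam).ord) :
    ∃ (g : ℕ → Ordinal.{0}) (f : Ordinal.{0} → ℕ → Ordinal.{0}),
      (∀ m, g m < lam.ord) ∧ (∀ m, CofGt (g m) (mu m)) ∧
      ∀ ε : ℕ → Ordinal.{0}, (∀ m, ε m < g m) → ∃ α < κ, ∀ δ, α ≤ δ → δ < κ →
        {m | ε m ≤ f δ m ∧ f δ m < g m}.Infinite := by
  have hlam : ℵ₀ ≤ lam := (hmu0 0).trans (hmul 0).le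
  have hκc : CofGt κ lam := by
    subst hκ
    apply cofGt_of_lt_cof
    rw [(isRegular_succ hlam).cof_ord]
    exact Order.lt_succ lam
  have hι : ∀ α, ∃ ι : Ordinal.{0} → Ordinal.{0}, α < κ → InjOn ι (Iio α) ∧ ∀ γ < α, ι γ < lam.ord := by
    intro α
    by_cases hα : α < κ
    · have hcard : α.card ≤ lam := by
        rw [hκ] at hα
        exact Order.lt_succ_iff.1 (Cardinal.lt_ord.1 hα)
      have h0 : SzLe (Iio α) lam := szLe_Iio hcard
      obtain ⟨j, hj⟩ := h0
      have e1 : SzLe lam.out lam := szLe_iff.2 (by simp)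
      have e2 : #lam.out ≤ #lam.ord.ToType := by simp
      obtain ⟨e3⟩ := e2
      classical
      refine ⟨fun γ => if h : γ < α then ((ToType.mk (o := lam.ord)).symm (e3 (j ⟨γ, h⟩))).1 else 0, fun _ => ⟨?_, ?_⟩⟩
      · intro γ h1 γ' h2 h
        simp only [mem_Iio] at h1 h2
        simp only [h1, h2, dif_pos] at h
        have := hj (e3.injective ((ToType.mk (o := lam.ord)).symm.injective (Subtype.ext h)))
        exact congrArg Subtype.val this
      · intro γ h1
        simp only [h1, dif_pos]
        exact ((ToType.mk (o := lam.ord)).symm _).2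
    · exact ⟨fun _ => 0, fun h => absurd h hα⟩
  choose ι hι using hι
  let F := seqF ι mu
  let top : ℕ → Ordinal.{0} := fun n => (Order.succ (mu n)).ord
  have htop : ∀ n, CofGt (top n) (mu n) := fun n => by
    apply cofGt_of_lt_cof
    rw [(isRegular_succ (hmu0 n)).cof_ord]
    exact Order.lt_succ _
  have hsz : ∀ α < κ, ∀ n, SzLe {γ : Iio α // ι α γ.1 < (mu n).ord} (mu n) := by
    intro α hα n
    have : SzLe (Iio (mu n).ord) (mu n) := szLe_Iio (by simp)
    refine this.of_inj (fun γ => ⟨ι α γ.1.1, γ.2⟩) ?_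
    intro γ γ' h
    have := congrArg Subtype.val h
    exact Subtype.ext (Subtype.ext ((hι α hα).1 γ.1.2 γ'.1.2 this))
  have hF : ∀ α < κ, ∀ n, F α n < top n := by
    intro α
    induction α using WellFoundedLT.induction with
    | ind α ih =>
      intro hα n
      obtain ⟨b, hb, hb'⟩ := (htop n).gen (hsz α hα n) (fun γ => F γ.1.1 n + 1)
        (fun γ => (htop n).succ (hmu0 n) (ih γ.1.1 γ.1.2 (γ.1.2.out.trans hα) n))
      change seqF ι mu α n < _
      rw [seqF]
      exact (Ordinal.iSup_le fun γ => (hb' γ).le).trans_lt hb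
  have hinc : ∀ α β, α < β → β < κ → ∀ᶠ n in atTop, F α n < F β n := by
    intro α β hαβ hβ
    have h1 := (hι β hβ).2 α hαβ
    obtain ⟨N, hN⟩ := hcof _ (Cardinal.lt_ord.1 h1)
    filter_upwards [eventually_ge_atTop N] with n hn
    have h2 : ι β α < (mu n).ord := Cardinal.lt_ord.2 (hN.trans_le (hmono hn))
    change _ < seqF ι mu β n
    rw [seqF]
    refine (lt_add_one (F α n)).trans_le ?_
    exact Ordinal.le_iSup (fun γ : {γ : Iio β // ι β γ.1 < (mu n).ord} => seqF ι mu γ.1.1 n + 1) ⟨⟨α, hαβ⟩, h2⟩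
  have h2lam : 2 ^ (ℵ₀ : Cardinal.{0}) ≤ lam := by
    refine (Cardinal.power_le_power_right ?_).trans (hpow (mu 0) (hmul 0))
    exact (Cardinal.natCast_lt_aleph0 (n := 2)).le.trans (hmu0 0)
  obtain ⟨g, hg1, hg2, hg3⟩ := lub_exists hκc h2lam F top hF hinc
  have hcofg : ∀ μ < lam, ℵ₀ ≤ μ → ∀ᶠ n in atTop, CofGt (g n) μ := by
    intro μ hμ hμ0
    by_contra hcon
    have hcon : ∃ᶠ n in atTop, ¬ CofGt (g n) μ := by
      simpa [Filter.Frequently] using hcon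
    have hK : ∀ n, ∃ K : Set Ordinal.{0}, SzLe K μ ∧ (¬ CofGt (g n) μ →
        (∀ x ∈ K, x < g n) ∧ ∀ b < g n, ∃ x ∈ K, b ≤ x) := by
      intro n
      by_cases h : CofGt (g n) μ
      · exact ⟨∅, szLe_countable hμ0, fun h' => absurd h h'⟩
      · simp only [CofGt] at h
        push Not at h
        obtain ⟨J, φ, h1, h2, h3⟩ := h
        refine ⟨Set.range φ, szLe_range (szLe_iff.2 h1) φ, fun _ => ⟨?_, ?_⟩⟩
        · rintro _ ⟨i, rfl⟩; exact h2 i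
        · intro b hb
          obtain ⟨i, hi⟩ := h3 b hb
          exact ⟨_, ⟨i, rfl⟩, hi⟩
    choose K hK1 hK2 using hK
    have hk : ∀ α n, ∃ k : (insert 0 (K n) : Set Ordinal.{0}), ¬ CofGt (g n) μ → F α n < g n → F α n ≤ k.1 := by
      intro α n
      by_cases h : ¬ CofGt (g n) μ ∧ F α n < g n
      · obtain ⟨x, hx, hx'⟩ := (hK2 n h.1).2 _ h.2
        exact ⟨⟨x, mem_insert_of_mem _ hx⟩, fun _ _ => hx'⟩
      · exact ⟨⟨0, mem_insert _ _⟩, fun h1 h2 => absurd ⟨h1, h2⟩ h⟩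
    choose k hk using hk
    obtain ⟨v, hv⟩ := hκc.pigeon (szLe_pi (hpow μ hμ) (fun n => szLe_insert (a := 0) hμ0 (hK1 n))) k
    classical
    let u : ℕ → Ordinal.{0} := fun n => if CofGt (g n) μ then g n else (v n).1
    have hu : ∀ α < κ, ∀ᶠ n in atTop, F α n ≤ u n := by
      intro α hα
      obtain ⟨b, hb1, hb2, hb3⟩ := hv _ (hκc.succ hlam hα)
      filter_upwards [hinc α b ((lt_add_one α).trans_le hb1) hb2, hg2 b hb2] with n h1 h2
      by_cases h : CofGt (g n) μ
      · simp only [u, h, if_true]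
        exact (h1.trans h2).le
      · simp only [u, h, if_false]
        rw [← hb3]
        exact h1.le.trans (hk b n h h2)
    obtain ⟨n, hn1, hn2, hn3⟩ := (hcon.and_eventually ((hg3 u hu).and (hg2 0 hκc.pos))).exists
    simp only [u, hn1, if_false] at hn2
    rcases (v n).2 with h | h
    · rw [h] at hn2
      exact absurd (hn2.trans zero_le) (not_le.2 ((zero_le).trans_lt hn3))
    · exact absurd ((hK2 n hn1).1 _ h) (not_lt.2 hn2)
  obtain ⟨s, hs, hs'⟩ := extraction_forall_of_eventually (fun m => hcofg (mu m) (hmul m) (hmu0 m))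
  refine ⟨fun m => g (s m), fun α m => F α (s m), ?_, hs', ?_⟩
  · intro m
    exact (hg1 _).trans_lt (Cardinal.ord_lt_ord.2 (hsucc _ (hmul _)))
  · intro ε hε
    classical
    let u : ℕ → Ordinal.{0} := fun n => if h : ∃ m, s m = n then ε h.choose else g n
    have hus : ∀ m, u (s m) = ε m := by
      intro m
      have h : ∃ m', s m' = s m := ⟨m, rfl⟩
      simp only [u, h, dif_pos]
      rw [hs.injective h.choose_spec]
    have hnot : ¬ ∀ᶠ n in atTop, g n ≤ u n := by
      intro h
      obtain ⟨m, hm⟩ := (hs.tendsto_atTop.eventually h).exists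
      rw [hus] at hm
      exact absurd (hε m) (not_lt.2 hm)
    have : ∃ α < κ, ¬ ∀ᶠ n in atTop, F α n ≤ u n := by
      by_contra! h
      exact hnot (hg3 u h)
    obtain ⟨α, hα, h1⟩ := this
    refine ⟨α, hα, fun δ hδ hδκ => ?_⟩
    have h2 : ∃ᶠ n in atTop, u n < F α n := by
      simpa [Filter.Frequently] using h1
    have h3 : ∀ᶠ n in atTop, F α n ≤ F δ n := by
      rcases hδ.lt_or_eq with h | rfl
      · exact (hinc α δ h hδκ).mono fun n h => h.le
      · exact Eventually.of_forall fun n => le_rfl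
    have h4 := h2.and_eventually (h3.and (hg2 δ hδκ))
    intro hfin
    have hfin2 := hfin.image s
    obtain ⟨B, hB⟩ := hfin2.bddAbove
    obtain ⟨n, hn, hn1, hn2, hn3⟩ := (h4.and_eventually (eventually_gt_atTop B)).exists.imp
      (fun n h => (⟨h.2, h.1.1, h.1.2.1, h.1.2.2⟩ : B < n ∧ u n < F α n ∧ F α n ≤ F δ n ∧ F δ n < g n))
    by_cases h : ∃ m, s m = n
    · obtain ⟨m, rfl⟩ := h
      rw [hus] at hn1
      have : s m ≤ B := hB ⟨m, ⟨(hn1.trans_le hn2).le, hn3⟩, rfl⟩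
      omega
    · simp only [u, h, dif_neg, not_false_eq_true] at hn1
      exact absurd (hn1.trans_le hn2) (not_lt.2 hn3.le)


/-- witness for cofinality `ω₁` -/
def IsCofW (c : Ordinal.{0} → Ordinal.{0}) (y : Ordinal.{0}) : Prop :=
  (∀ i j, i ≤ j → j < omega1 → c i ≤ c j) ∧ (∀ i < omega1, c i < y) ∧ ∀ z < y, ∃ i < omega1, z < c i

def Cof1 (y : Ordinal.{0}) : Prop := ∃ c, IsCofW c y

open Classical in
def cc (y : Ordinal.{0}) : Ordinal.{0} → Ordinal.{0} :=
  if h : Cof1 y then h.choose else fun _ => 0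

theorem cc_spec {y : Ordinal.{0}} (h : Cof1 y) : IsCofW (cc y) y := by
  rw [cc, dif_pos h]
  exact h.choose_spec

def sB (β ξ : Ordinal.{0}) : Ordinal.{0} := ⨆ η : Iio ξ, (cc β η + 1)

def Hs (f : Ordinal.{0} → ℕ → Ordinal.{0}) (β : Ordinal.{0}) (n : ℕ) : Set Ordinal.{0} :=
  (fun ζ => f (sB β ζ) n) '' Iio omega1

def Vs (f : Ordinal.{0} → ℕ → Ordinal.{0}) (β : Ordinal.{0}) (n : ℕ) : Set Ordinal.{0} :=
  {v | v = sSup (Hs f β n) ∨ ∃ h' ∈ Hs f β n, v = sSup {h ∈ Hs f β n | h < h'}}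

def LLs (κ : Ordinal.{0}) (f : Ordinal.{0} → ℕ → Ordinal.{0}) : Set (ℕ → Ordinal.{0}) :=
  {l | ∃ β < κ, ∀ n, l n ∈ Vs f β n}

theorem szLe_LLs {κ : Ordinal.{0}} {f : Ordinal.{0} → ℕ → Ordinal.{0}} {lam : Cardinal.{0}}
    (hlam : ℵ₀ ≤ lam) (hκ : κ.card ≤ lam) (h1 : (aleph 1) ^ (ℵ₀ : Cardinal.{0}) ≤ lam) :
    SzLe (LLs κ f) lam := by
  let dec : Iio κ × (ℕ → Option (Iio omega1)) → ℕ → Ordinal.{0} := fun p n =>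
    match p.2 n with
    | none => sSup (Hs f p.1 n)
    | some ζ => sSup {h ∈ Hs f p.1 n | h < f (sB p.1 ζ) n}
  have hsz : SzLe (Iio κ × (ℕ → Option (Iio omega1))) lam :=
    szLe_prod hlam (szLe_Iio hκ) (szLe_pi h1 fun n => szLe_option (by simp) (szLe_Iio (by simp [omega1])))
  refine (szLe_range hsz dec).of_inj (Set.inclusion ?_) (Set.inclusion_injective _)
  rintro l ⟨β, hβ, hl⟩
  have : ∀ n, ∃ o : Option (Iio omega1), l n = match o with
    | none => sSup (Hs f β n)
    | some ζ => sSup {h ∈ Hs f β n | h < f (sB β ζ) n} := by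
    intro n
    rcases hl n with h | ⟨_, ⟨ζ, hζ, rfl⟩, h⟩
    · exact ⟨none, h⟩
    · exact ⟨some ⟨ζ, hζ⟩, h⟩
  choose o ho using this
  exact ⟨(⟨β, hβ⟩, o), funext fun n => (ho n).symm⟩

def Sset (κ : Ordinal.{0}) (f : Ordinal.{0} → ℕ → Ordinal.{0}) : Set (Set Ordinal.{0}) :=
  {x | x ∈ sOmega (Iio κ) ∧ ∃ ξ < omega1, x ∩ Iio omega1 = Iio ξ ∧ ∃ δ < κ,
    (∀ α < δ, ∃ z ∈ x, α ≤ z ∧ z < δ) ∧ ∃ (X : Set ℕ) (y : ℕ → Ordinal.{0}),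
      (∀ n ∈ X, y n ∈ x ∧ Cof1 (y n) ∧ cc (y n) ξ ≤ f δ n ∧ f δ n < y n) ∧
      ∀ l ∈ LLs κ f, ∃ n ∈ X, y n ≠ l n}

theorem Sset_full (κ : Ordinal.{0}) (f : Ordinal.{0} → ℕ → Ordinal.{0}) : IsFull κ (Sset κ f) := by
  rintro x ⟨-, ξ, hξ, h1, δ, hδ, h2, X, y, h3, h4⟩ x' hx' ⟨hs, he⟩
  refine ⟨hx', ξ, hξ, he ▸ h1, δ, hδ, fun α hα => ?_, X, y, fun n hn => ⟨hs (h3 n hn).1, (h3 n hn).2⟩, h4⟩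
  obtain ⟨z, hz, hz'⟩ := h2 α hα
  exact ⟨z, hs hz, hz'⟩

theorem Stat.fodor_e {T : Set Ordinal.{0}} (hT : Stat omega1 T)
    (e v : Ordinal.{0} → Ordinal.{0}) (hv : ∀ ξ ∈ T, v ξ ∈ e '' Iio ξ) :
    ∃ j < omega1, Stat omega1 {ξ ∈ T | v ξ = e j} := by
  have : ∀ ξ, ∃ j, ξ ∈ T → j < ξ ∧ e j = v ξ := by
    intro ξ
    by_cases h : ξ ∈ T
    · obtain ⟨j, hj, hj'⟩ := hv ξ h
      exact ⟨j, fun _ => ⟨hj, hj'⟩⟩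
    · exact ⟨0, fun h' => absurd h' h⟩
  choose r hr using this
  obtain ⟨j, hj, hj'⟩ := hT.fodor reg_omega1 r (fun ξ h _ _ => (hr ξ h).1)
  exact ⟨j, hj, hj'.mono fun ξ h _ _ => ⟨h.1, by rw [← (hr ξ h.1).2, h.2]⟩⟩

theorem omega0_lt_omega1 : (ω : Ordinal.{0}) < omega1 := by
  rw [omega1, Cardinal.lt_ord]
  simp

/-- stationarity in `[I]^ω` transfers to `ω₁`. -/
theorem stat_transfer {I : Set Ordinal.{0}} {S : Set (Set Ordinal.{0})}
    (hI : Iio omega1 ⊆ I) (e : Ordinal.{0} → Ordinal.{0}) (he : e '' Iio omega1 = I)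
    (hS : IsStationaryOmega I (S ∩ sOmega I)) :
    Stat omega1 {ξ | e '' Iio ξ ∈ S ∧ e '' Iio ξ ∩ Iio omega1 = Iio ξ} := by
  intro F hF
  let C : Set (Set Ordinal.{0}) := {x | ∃ ξ < omega1, ω ≤ ξ ∧ x = e '' Iio ξ ∧ x ∩ Iio omega1 = Iio ξ ∧
    ∀ η < ξ, F η < ξ}
  have hC : IsClubOmega I C := by
    refine ⟨?_, ?_, ?_⟩
    · rintro x ⟨ξ, h1, h2, h3, h4, h5⟩
      refine ⟨?_, ?_, ?_⟩
      · rw [h3, ← he]; exact image_mono (Iio_subset_Iio h1.le)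
      · have := countable_Iio_of_lt h1
        rw [h3]; exact (Set.to_countable _).image e
      · have h6 : Iio ω ⊆ x := by
          refine (Iio_subset_Iio h2).trans ?_
          rw [← h4]; exact inter_subset_left
        refine Set.Infinite.mono h6 ?_
        have : Set.InjOn (fun n : ℕ => (n : Ordinal.{0})) univ := fun a _ b _ h => by simpa using h
        refine (Set.infinite_univ.image this).mono ?_
        rintro _ ⟨n, -, rfl⟩
        exact Ordinal.natCast_lt_omega0 n
    · rintro x ⟨h1, h2, h3⟩
      have hinv : ∀ z ∈ I, ∃ j < omega1, e j = z := fun z hz => by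
        rw [← he] at hz; exact hz
      choose! inv hinv1 hinv2 using hinv
      have := h2.to_subtype
      obtain ⟨b, hb, hb'⟩ := reg_omega1.1.gen (szLe_countable le_rfl) (fun z : x => inv z)
        (fun z => hinv1 z (h1 z.2))
      classical
      obtain ⟨ξ, -, h4, h5, h6⟩ := (stat_univ reg_omega1)
        (fun η => max (max (F η) (inv η)) (max (if e η < omega1 then e η else 0) (max b ω)))
        (fun η hη => by
          refine max_lt (max_lt (hF η hη) (hinv1 _ (hI hη))) (max_lt ?_ (max_lt hb omega0_lt_omega1))
          split_ifs with h
          · exact h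
          · exact reg_omega1.1.pos)
      have h7 : b < ξ ∧ ω < ξ := by
        have := h6 0 h5
        simp only [max_lt_iff] at this
        exact this.2.2
      refine ⟨e '' Iio ξ, ⟨ξ, h4, h7.2.le, rfl, ?_, ?_⟩, ?_⟩
      · ext z
        constructor
        · rintro ⟨⟨j, hj, rfl⟩, hz⟩
          have := h6 j hj
          simp only [max_lt_iff, if_pos (show e j < omega1 from hz)] at this
          exact this.2.1
        · intro hz
          have h8 : z < omega1 := (show z < ξ from hz).trans h4
          have := h6 z hz
          simp only [max_lt_iff] at this
          exact ⟨⟨inv z, this.1.2, hinv2 z (hI h8)⟩, h8⟩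
      · intro η hη
        have := h6 η hη
        simp only [max_lt_iff] at this
        exact this.1.1
      · intro z hz
        exact ⟨inv z, (hb' ⟨z, hz⟩).trans h7.1, hinv2 z (h1 hz)⟩
    · intro x hx hmono
      choose ξ h1 h2 h3 h4 h5 using hx
      obtain ⟨b, hb, hb'⟩ := reg_omega1.1.nat le_rfl ξ h1
      refine ⟨⨆ n, ξ n, (Ordinal.iSup_le fun n => (hb' n).le).trans_lt hb, (h2 0).trans (Ordinal.le_iSup ξ 0), ?_, ?_, ?_⟩
      · ext z
        simp only [mem_iUnion, mem_image, mem_Iio, Ordinal.lt_iSup_iff]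
        constructor
        · rintro ⟨n, hn⟩
          rw [h3] at hn
          obtain ⟨j, hj, rfl⟩ := hn
          exact ⟨j, ⟨n, hj⟩, rfl⟩
        · rintro ⟨j, ⟨n, hj⟩, rfl⟩
          refine ⟨n, ?_⟩
          rw [h3]; exact ⟨j, hj, rfl⟩
      · rw [iUnion_inter]
        ext z
        simp only [h4, mem_iUnion, mem_Iio, Ordinal.lt_iSup_iff]
      · intro η hη
        rw [Ordinal.lt_iSup_iff] at hη ⊢
        obtain ⟨n, hn⟩ := hη
        exact ⟨n, h5 n η hn⟩
  obtain ⟨x, ⟨hx, -⟩, ξ, h1, h2, h3, h4, h5⟩ := hS C hC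
  subst h3
  exact ⟨ξ, ⟨hx, h4⟩, h1, omega0_pos.trans_le h2, h5⟩

theorem no_reflect {κ : Ordinal.{0}} (hκ : CofGt κ (aleph 1)) (f : Ordinal.{0} → ℕ → Ordinal.{0})
    {I : Set Ordinal.{0}} (hI : Iio omega1 ⊆ I) (hI1 : #I = aleph 1)
    (hS : IsStationaryOmega I (Sset κ f ∩ sOmega I)) : False := by
  have he : ∃ e : Ordinal.{0} → Ordinal.{0}, e '' Iio omega1 = I := by
    have : #I = #(Iio omega1) := by rw [hI1, Cardinal.mk_Iio_ordinal]; simp [omega1]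
    obtain ⟨E⟩ := Cardinal.eq.1 this
    classical
    refine ⟨fun j => if h : j < omega1 then (E.symm ⟨j, h⟩).1 else 0, ?_⟩
    ext z
    constructor
    · rintro ⟨j, hj, rfl⟩
      simp only [mem_Iio] at hj
      simp only [hj, dif_pos]
      exact (E.symm ⟨j, hj⟩).2
    · intro hz
      refine ⟨(E ⟨z, hz⟩).1, (E ⟨z, hz⟩).2, ?_⟩
      simp [dif_pos (show (E ⟨z, hz⟩).1 < omega1 from (E ⟨z, hz⟩).2)]
  obtain ⟨e, he⟩ := he
  have hT := stat_transfer hI e he hS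
  set T : Set Ordinal.{0} := {ξ | e '' Iio ξ ∈ Sset κ f ∧ e '' Iio ξ ∩ Iio omega1 = Iio ξ} with hTdef
  have hdata : ∀ ξ ∈ T, ∃ (δ : Ordinal.{0}) (X : Set ℕ) (y : ℕ → Ordinal.{0}), δ < κ ∧
    (∀ α < δ, ∃ z ∈ e '' Iio ξ, α ≤ z ∧ z < δ) ∧
      (∀ n ∈ X, y n ∈ e '' Iio ξ ∧ Cof1 (y n) ∧ cc (y n) ξ ≤ f δ n ∧ f δ n < y n) ∧
      ∀ l ∈ LLs κ f, ∃ n ∈ X, y n ≠ l n := by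
    rintro ξ ⟨⟨-, ξ', hξ', h1, δ, hδ, h2, X, y, h3, h4⟩, h5⟩
    have : ξ' = ξ := Set.Iio_injective (h1.symm.trans h5)
    subst this
    exact ⟨δ, X, y, hδ, h2, h3, h4⟩
  choose! δ X y hδ hδc hXy hL using hdata
  have hXne : ∀ ξ ∈ T, ∃ n, n ∈ X ξ := by
    intro ξ hξ
    obtain ⟨n, hn, -⟩ := hL ξ hξ (fun n => sSup (Hs f 0 n)) ⟨0, hκ.pos, fun n => Or.inl rfl⟩
    exact ⟨n, hn⟩
  have step1 : ∀ d, ¬ Stat omega1 {ξ ∈ T | δ ξ = d} := by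
    intro d hd
    obtain ⟨n, hn⟩ := hd.iUnion reg_omega1 (fun n => {ξ | n ∈ X ξ}) (fun ξ h _ _ => hXne ξ h.1)
    obtain ⟨j, hj, hj'⟩ := hn.fodor_e e (fun ξ => y ξ n) (fun ξ h => (hXy ξ h.1.1 n h.2).1)
    obtain ⟨ξ0, hξ0, -⟩ := hj'.exists reg_omega1.1.pos
    have h0 := hXy ξ0 hξ0.1.1.1 n hξ0.1.2
    rw [hξ0.1.1.2, show y ξ0 n = e j from hξ0.2] at h0
    obtain ⟨-, hc, -, hlt⟩ := h0
    obtain ⟨i, hi, hi'⟩ := (cc_spec hc).2.2 _ hlt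
    obtain ⟨ξ1, hξ1, h1, h2⟩ := hj'.exists hi
    have h3 := hXy ξ1 hξ1.1.1.1 n hξ1.1.2
    rw [hξ1.1.1.2, show y ξ1 n = e j from hξ1.2] at h3
    exact absurd (hi'.trans_le ((cc_spec hc).1 i ξ1 h1.le h2)) (not_lt.2 h3.2.2.1)
  -- step 2
  have hbd : ∃ b < κ, Stat omega1 {ξ ∈ T | δ ξ ≤ b} := by
    classical
    obtain ⟨b, hb, hb'⟩ := hκ.gen (szLe_Iio (o := omega1) (by simp [omega1]))
      (fun ξ => if ξ.1 ∈ T then δ ξ else 0) (fun ξ => by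
        split_ifs with h
        · exact hδ _ h
        · exact hκ.pos)
    refine ⟨b, hb, hT.mono fun ξ h1 h2 h3 => ⟨h1, ?_⟩⟩
    have := hb' ⟨ξ, h3⟩
    rw [if_pos h1] at this
    exact this.le
  obtain ⟨b0, hb0, hb0'⟩ := hbd
  let B : Set Ordinal.{0} := {b | Stat omega1 {ξ ∈ T | δ ξ ≤ b}}
  obtain ⟨β, hβdef⟩ : ∃ β, β = sInf B := ⟨_, rfl⟩
  have hβB : β ∈ B := hβdef ▸ csInf_mem ⟨b0, hb0'⟩
  have hβκ : β < κ := by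
    refine lt_of_le_of_lt ?_ hb0
    rw [hβdef]
    exact csInf_le' hb0'
  have hβmin : ∀ γ < β, ¬ Stat omega1 {ξ ∈ T | δ ξ ≤ γ} := by
    intro γ hγ hs
    have : β ≤ γ := by
      rw [hβdef]
      exact csInf_le' hs
    exact absurd hγ (not_lt.2 this)
  have hT2 : Stat omega1 {ξ ∈ T | δ ξ < β} := by
    rcases Stat.or reg_omega1 hβB (fun ξ => δ ξ = β) with h | h
    · exact absurd (h.mono (T' := {ξ ∈ T | δ ξ = β}) fun ξ h _ _ => ⟨h.1.1, h.2⟩) (step1 β)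
    · exact h.mono fun ξ h _ _ => ⟨h.1.1, lt_of_le_of_ne h.1.2 h.2⟩
  -- step 3
  have hT3 : Stat omega1 {ξ ∈ T | δ ξ < β ∧ ∀ j < ξ, e j < β → e j < δ ξ} := by
    rcases hT2.or reg_omega1 (fun ξ => ∀ j < ξ, e j < β → e j < δ ξ) with h | h
    · exact h.mono fun ξ h _ _ => ⟨h.1.1, h.1.2, h.2⟩
    · exfalso
      have : ∀ ξ, ∃ w, (¬ ∀ j < ξ, e j < β → e j < δ ξ) → w ∈ e '' Iio ξ ∧ w < β ∧ δ ξ ≤ w := by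
        intro ξ
        by_cases h : ∀ j < ξ, e j < β → e j < δ ξ
        · exact ⟨0, fun h' => absurd h h'⟩
        · push Not at h
          obtain ⟨j, h1, h2, h3⟩ := h
          exact ⟨e j, fun _ => ⟨⟨j, h1, rfl⟩, h2, h3⟩⟩
      choose w hw using this
      obtain ⟨j, hj, hj'⟩ := h.fodor_e e w (fun ξ h => (hw ξ h.2).1)
      obtain ⟨ξ, hξ, -⟩ := hj'.exists reg_omega1.1.pos
      have h2 := (hw ξ hξ.1.2).2.1
      rw [hξ.2] at h2
      refine hβmin _ h2 (hj'.mono fun ξ h _ _ => ⟨h.1.1.1, ?_⟩)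
      rw [← h.2]
      exact (hw ξ h.1.2).2.2
  have hecof : ∀ z < β, ∃ j < omega1, z < e j ∧ e j < β := by
    intro z hz
    have key : ∀ z < β, ∃ ξ ∈ T, ξ < omega1 ∧ z < δ ξ ∧ δ ξ < β := by
      intro z hz
      rcases hT2.or reg_omega1 (fun ξ => δ ξ ≤ z) with h | h
      · exact absurd (h.mono (T' := {ξ ∈ T | δ ξ ≤ z}) fun ξ h _ _ => ⟨h.1.1, h.2⟩) (hβmin z hz)
      · obtain ⟨ξ, h1, h2, h3⟩ := h.exists reg_omega1.1.pos
        exact ⟨ξ, h1.1.1, h3, not_le.1 h1.2, h1.1.2⟩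
    obtain ⟨ξ, h1, h2, h3, h4⟩ := key z hz
    obtain ⟨ξ', h1', h2', h3', h4'⟩ := key (z + 1) ((Order.add_one_le_of_lt h3).trans_lt h4)
    obtain ⟨_, ⟨j, hj, rfl⟩, h5, h6⟩ := hδc ξ' h1' _ h3'
    exact ⟨j, (show j < ξ' from hj).trans h2', (lt_add_one z).trans_le h5, h6.trans h4'⟩
  -- step 4
  have hβc : Cof1 β := by
    classical
    have hβ0 : 0 < β := by
      obtain ⟨ξ, h1, -⟩ := hT2.exists reg_omega1.1.pos
      exact (zero_le).trans_lt h1.2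
    refine ⟨fun i => ⨆ j : Iio (i + 1), if e j < β then e j else 0, ?_, ?_, ?_⟩
    · intro i i' hii' _
      refine Ordinal.iSup_le fun j => ?_
      exact Ordinal.le_iSup (fun j : Iio (i' + 1) => if e j < β then e j else 0)
        ⟨j.1, j.2.out.trans_le (by gcongr)⟩
    · intro i hi
      obtain ⟨ξ, h1, h2, h3⟩ := hT3.exists hi
      refine (Ordinal.iSup_le fun j => ?_).trans_lt h1.2.1
      split_ifs with h
      · exact (h1.2.2 j ((Order.lt_add_one_iff.1 j.2).trans_lt h2) h).le
      · exact zero_le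
    · intro z hz
      obtain ⟨j, h1, h2, h3⟩ := hecof z hz
      refine ⟨j, h1, h2.trans_le ?_⟩
      have := Ordinal.le_iSup (fun j : Iio (j + 1) => if e j < β then e j else 0) ⟨j, lt_add_one j⟩
      simpa [h3] using this
  have hcβ := cc_spec hβc
  -- step 5
  have hG1 : ∀ η, ∃ j, η < omega1 → j < omega1 ∧ cc β η < e j ∧ e j < β := by
    intro η
    by_cases h : η < omega1
    · obtain ⟨j, hj⟩ := hecof _ (hcβ.2.1 η h)
      exact ⟨j, fun _ => hj⟩
    · exact ⟨0, fun h' => absurd h' h⟩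
  have hG2 : ∀ j, ∃ i < omega1, e j < β → e j < cc β i := by
    intro j
    by_cases h : e j < β
    · obtain ⟨i, hi, hi'⟩ := hcβ.2.2 _ h
      exact ⟨i, hi, fun _ => hi'⟩
    · exact ⟨0, reg_omega1.1.pos, fun h' => absurd h' h⟩
  choose G1 hG1 using hG1
  choose G2 hG2 hG2' using hG2
  have hT4 : Stat omega1 {ξ ∈ T | δ ξ = sB β ξ} := by
    refine (hT3.closed (fun η => max (G1 η) (G2 η)) (fun η hη => max_lt (hG1 η hη).1 (hG2 η))).mono ?_
    rintro ξ ⟨⟨h1, h2, h3⟩, h4⟩ - h6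
    refine ⟨h1, le_antisymm ?_ ?_⟩
    · by_contra hcon
      push Not at hcon
      obtain ⟨_, ⟨j, hj, rfl⟩, h7, h8⟩ := hδc ξ h1 _ hcon
      have h9 : G2 j < ξ := (le_max_right _ _).trans_lt (h4 j hj)
      have h10 := hG2' j (h8.trans h2)
      have h11 : cc β (G2 j) + 1 ≤ sB β ξ :=
        Ordinal.le_iSup (fun η : Iio ξ => cc β η + 1) ⟨G2 j, h9⟩
      exact absurd (h10.trans_le ((le_add_of_nonneg_right zero_le).trans h11)) (not_lt.2 h7)
    · refine Ordinal.iSup_le fun η => ?_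
      have h7 := hG1 η (η.2.out.trans h6)
      have h8 : G1 η < ξ := (le_max_left _ _).trans_lt (h4 η η.2)
      exact Order.add_one_le_of_lt (h7.2.1.trans (h3 _ h8 h7.2.2))
  -- step 6
  have step6 : ∃ ξ ∈ T, ∀ n ∈ X ξ, Stat omega1 {ξ' ∈ T | δ ξ' = sB β ξ' ∧ n ∈ X ξ' ∧ y ξ' n = y ξ n} := by
    by_contra! hcon
    obtain ⟨n, hn⟩ := hT4.iUnion reg_omega1
      (fun n => {ξ | n ∈ X ξ ∧ ¬ Stat omega1 {ξ' ∈ T | δ ξ' = sB β ξ' ∧ n ∈ X ξ' ∧ y ξ' n = y ξ n}})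
      (fun ξ h _ _ => hcon ξ h.1)
    obtain ⟨j, hj, hj'⟩ := hn.fodor_e e (fun ξ => y ξ n) (fun ξ h => (hXy ξ h.1.1 n h.2.1).1)
    obtain ⟨ξ, hξ, -⟩ := hj'.exists reg_omega1.1.pos
    refine hξ.1.2.2 (hj'.mono fun ξ' h _ _ => ⟨h.1.1.1, h.1.1.2, h.1.2.1, ?_⟩)
    rw [show y ξ' n = e j from h.2, show y ξ n = e j from hξ.2]
  obtain ⟨ξ, hξT, hξ⟩ := step6
  have step7 : ∀ n ∈ X ξ, y ξ n ∈ Vs f β n := by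
    intro n hn
    obtain ⟨v, hv⟩ : ∃ v, v = y ξ n := ⟨_, rfl⟩
    have hst := hξ n hn
    have hvc : Cof1 v := hv ▸ (hXy ξ hξT n hn).2.1
    rw [← hv] at hst ⊢
    have hc := cc_spec hvc
    have hsup : v = sSup {h ∈ Hs f β n | h < v} := by
      apply le_antisymm
      · by_contra hcon
        push Not at hcon
        obtain ⟨i, hi, hi'⟩ := hc.2.2 _ hcon
        obtain ⟨ξ', h1, h2, h3⟩ := hst.exists hi
        have h4 := hXy ξ' h1.1 n h1.2.2.1
        rw [h1.2.2.2, h1.2.1] at h4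
        have h5 : f (sB β ξ') n ≤ sSup {h ∈ Hs f β n | h < v} :=
          le_csSup ⟨v, fun h hh => hh.2.le⟩ ⟨⟨ξ', h3, rfl⟩, h4.2.2.2⟩
        exact absurd (hi'.trans_le ((hc.1 _ _ h2.le h3).trans h4.2.2.1)) (not_lt.2 h5)
      · exact csSup_le' fun h hh => hh.2.le
    by_cases hall : ∀ h ∈ Hs f β n, h < v
    · left
      conv_lhs => rw [hsup]
      congr 1
      ext h
      exact ⟨fun h => h.1, fun h' => ⟨h', hall _ h'⟩⟩
    · right
      push Not at hall
      have hmem : sInf {h ∈ Hs f β n | v ≤ h} ∈ {h ∈ Hs f β n | v ≤ h} := csInf_mem hall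
      refine ⟨_, hmem.1, ?_⟩
      conv_lhs => rw [hsup]
      congr 1
      ext h
      constructor
      · exact fun h' => ⟨h'.1, h'.2.trans_le hmem.2⟩
      · refine fun h' => ⟨h'.1, ?_⟩
        by_contra hcon
        push Not at hcon
        exact absurd h'.2 (not_lt.2 (csInf_le' ⟨h'.1, hcon⟩))
  classical
  obtain ⟨n, hn, hne⟩ := hL ξ hξT (fun n => if n ∈ X ξ then y ξ n else sSup (Hs f β n))
    ⟨β, hβκ, fun n => by
      dsimp only
      split_ifs with h
      · exact step7 n h
      · exact Or.inl rfl⟩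
  simp [hn] at hne


/-- ranked losing positions -/
def LLr {J : Type} (Dom : J → Set Ordinal.{0}) (Idl : J → Set (Set Ordinal.{0}))
    (ok : List Ordinal.{0} → Prop) (o : Ordinal.{1}) (p : List Ordinal.{0}) : Prop :=
  ¬ ok p ∨ ∃ j, ∃ B ∈ Idl j, ∀ a ∈ Dom j, a ∉ B → ∃ o' : Iio o, LLr Dom Idl ok o'.1 (a :: p)
termination_by o
decreasing_by exact o'.2

theorem game {J : Type} [Countable J] (Dom : J → Set Ordinal.{0})
    (Idl : J → Ordinal.{0} → Set (Set Ordinal.{0})) (ok : Ordinal.{0} → List Ordinal.{0} → Prop)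
    (hempty : ∀ j ξ, ∅ ∈ Idl j ξ)
    (hcov : ∀ j, ∀ B : Ordinal.{0} → Set Ordinal.{0}, (∀ ξ < omega1, B ξ ∈ Idl j ξ) →
      ∃ a ∈ Dom j, ∀ ξ < omega1, a ∉ B ξ)
    (hok : ∀ P : Set (List Ordinal.{0}), P.Countable → ∃ ξ < omega1, ∀ p ∈ P, ok ξ p) :
    ∃ ξ < omega1, ∃ W : Set (List Ordinal.{0}), [] ∈ W ∧
      ∀ p ∈ W, ok ξ p ∧ ∀ j, {a ∈ Dom j | a :: p ∈ W} ∉ Idl j ξ := by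
  let L : Ordinal.{0} → Ordinal.{1} → List Ordinal.{0} → Prop :=
    fun ξ => LLr Dom (fun j => Idl j ξ) (ok ξ)
  by_cases hall : ∀ ξ < omega1, ∃ o, L ξ o []
  · exfalso
    have hd : ∀ ξ p, ∃ (j : J) (B : Set Ordinal.{0}), ok ξ p → (∃ o, L ξ o p) → B ∈ Idl j ξ ∧
        ∀ a ∈ Dom j, a ∉ B → ∀ o, L ξ o p → ∃ o' < o, L ξ o' (a :: p) := by
      intro ξ p
      by_cases h : ok ξ p ∧ ∃ o, L ξ o p
      · obtain ⟨h1, h2⟩ := h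
        have hm : sInf {o | L ξ o p} ∈ {o | L ξ o p} := csInf_mem h2
        have hm' : L ξ (sInf {o | L ξ o p}) p := hm
        simp only [L] at hm'
        rw [LLr] at hm'
        rcases hm' with h3 | ⟨j, B, hB, h3⟩
        · exact absurd h1 h3
        · refine ⟨j, B, fun _ _ => ⟨hB, fun a ha haB o ho => ?_⟩⟩
          obtain ⟨o', ho'⟩ := h3 a ha haB
          exact ⟨o'.1, o'.2.out.trans_le (csInf_le' ho), ho'⟩
      · have hJ : Nonempty J := by
          by_contra hJ
          rw [not_nonempty_iff] at hJ
          obtain ⟨ξ0, hξ0, h0⟩ := hok {[]} (countable_singleton _)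
          obtain ⟨o, ho⟩ := hall ξ0 hξ0
          simp only [L] at ho
          rw [LLr] at ho
          rcases ho with h3 | ⟨j, -⟩
          · exact h3 (h0 _ rfl)
          · exact hJ.elim j
        exact ⟨hJ.some, ∅, fun h1 h2 => absurd ⟨h1, h2⟩ h⟩
    choose jj BB hBB using hd
    classical
    have ha : ∀ p j, ∃ a ∈ Dom j, ∀ ξ < omega1, ok ξ p → (∃ o, L ξ o p) → jj ξ p = j → a ∉ BB ξ p := by
      intro p j
      obtain ⟨a, ha, ha'⟩ := hcov j
        (fun ξ => if ok ξ p ∧ (∃ o, L ξ o p) ∧ jj ξ p = j then BB ξ p else ∅) (fun ξ hξ => by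
          split_ifs with h
          · rw [← h.2.2]
            exact (hBB ξ p h.1 h.2.1).1
          · exact hempty j ξ)
      refine ⟨a, ha, fun ξ hξ h1 h2 h3 => ?_⟩
      have := ha' ξ hξ
      rwa [if_pos ⟨h1, h2, h3⟩] at this
    choose a haD ha using ha
    let pos : List J → List Ordinal.{0} := fun σ => List.rec [] (fun j _ p => a p j :: p) σ
    have hpos : ∀ j σ, pos (j :: σ) = a (pos σ) j :: pos σ := fun j σ => rfl
    obtain ⟨ξ, hξ, hξok⟩ := hok (Set.range pos) (countable_range pos)
    have key : ∀ o σ, ¬ L ξ o (pos σ) := by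
      intro o
      induction o using WellFoundedLT.induction with
      | ind o ih =>
        intro σ hσ
        have h1 := hξok (pos σ) ⟨σ, rfl⟩
        obtain ⟨-, h2⟩ := hBB ξ (pos σ) h1 ⟨o, hσ⟩
        obtain ⟨o', ho', h3⟩ := h2 _ (haD (pos σ) (jj ξ (pos σ)))
          (ha (pos σ) (jj ξ (pos σ)) ξ hξ h1 ⟨o, hσ⟩ rfl) o hσ
        exact ih o' ho' (jj ξ (pos σ) :: σ) h3
    obtain ⟨o, ho⟩ := hall ξ hξ
    exact key o [] ho
  · push Not at hall
    obtain ⟨ξ, hξ, h⟩ := hall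
    refine ⟨ξ, hξ, {p | ∀ o, ¬ L ξ o p}, h, fun p hp => ⟨?_, fun j hj => ?_⟩⟩
    · by_contra hcon
      refine hp 0 ?_
      simp only [L]
      rw [LLr]
      exact Or.inl hcon
    · have : ∀ b : Ordinal.{0}, ∃ o, (∃ o, L ξ o (b :: p)) → L ξ o (b :: p) := by
        intro b
        by_cases hb : ∃ o, L ξ o (b :: p)
        · obtain ⟨o, ho⟩ := hb
          exact ⟨o, fun _ => ho⟩
        · exact ⟨0, fun h => absurd h hb⟩
      choose O hO using this
      refine hp ((⨆ b, O b) + 1) ?_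
      simp only [L]
      rw [LLr]
      refine Or.inr ⟨j, _, hj, fun b hb hb' => ?_⟩
      have hb2 : ∃ o, L ξ o (b :: p) := by
        by_contra hcon
        push Not at hcon
        exact hb' ⟨hb, hcon⟩
      exact ⟨⟨O b, Order.lt_add_one_iff.2 (Ordinal.le_iSup O b)⟩, hO b hb2⟩

/-! ### Closures -/

def ClosedU (Φ : List Ordinal.{0} → Set Ordinal.{0}) (M : Set Ordinal.{0}) : Prop :=
  ∀ l : List Ordinal.{0}, (∀ a ∈ l, a ∈ M) → Φ l ⊆ M

def clo (Φ : List Ordinal.{0} → Set Ordinal.{0}) (A : Set Ordinal.{0}) : Set Ordinal.{0} :=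
  {x | ∀ M, A ⊆ M → ClosedU Φ M → x ∈ M}

theorem subset_clo {Φ : List Ordinal.{0} → Set Ordinal.{0}} {A : Set Ordinal.{0}} : A ⊆ clo Φ A :=
  fun _ hx _ hM _ => hM hx

theorem clo_subset {Φ : List Ordinal.{0} → Set Ordinal.{0}} {A M : Set Ordinal.{0}} (h : A ⊆ M)
    (hM : ClosedU Φ M) : clo Φ A ⊆ M := fun _ hx => hx M h hM

theorem closedU_clo {Φ : List Ordinal.{0} → Set Ordinal.{0}} {A : Set Ordinal.{0}} :
    ClosedU Φ (clo Φ A) := fun l hl _ hx M hM hM' =>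
  hM' l (fun a ha => hl a ha M hM hM') hx

theorem clo_mono {Φ : List Ordinal.{0} → Set Ordinal.{0}} {A B : Set Ordinal.{0}} (h : A ⊆ B) :
    clo Φ A ⊆ clo Φ B := clo_subset (h.trans subset_clo) closedU_clo

theorem list_directed {ι : Type*} [Nonempty ι] (D : ι → Set Ordinal.{0})
    (hD : ∀ i j, ∃ k, D i ⊆ D k ∧ D j ⊆ D k) (l : List Ordinal.{0}) (hl : ∀ a ∈ l, a ∈ ⋃ i, D i) :
    ∃ i, ∀ a ∈ l, a ∈ D i := by
  induction l with
  | nil => exact ⟨Classical.arbitrary ι, by simp⟩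
  | cons b l ih =>
    obtain ⟨i, hi⟩ := ih (fun a ha => hl a (List.mem_cons_of_mem _ ha))
    obtain ⟨j, hj⟩ := mem_iUnion.1 (hl b List.mem_cons_self)
    obtain ⟨k, h1, h2⟩ := hD i j
    refine ⟨k, fun a ha => ?_⟩
    rcases List.mem_cons.1 ha with rfl | h
    · exact h2 hj
    · exact h1 (hi a h)

theorem clo_directed {Φ : List Ordinal.{0} → Set Ordinal.{0}} {ι : Type*} [Nonempty ι] (D : ι → Set Ordinal.{0})
    (hD : ∀ i j, ∃ k, D i ⊆ D k ∧ D j ⊆ D k) : clo Φ (⋃ i, D i) ⊆ ⋃ i, clo Φ (D i) := by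
  refine clo_subset (iUnion_mono fun i => subset_clo) ?_
  intro l hl
  obtain ⟨i, hi⟩ := list_directed (fun i => clo Φ (D i)) (fun i j => by
    obtain ⟨k, h1, h2⟩ := hD i j
    exact ⟨k, clo_mono h1, clo_mono h2⟩) l hl
  exact (closedU_clo l hi).trans (subset_iUnion (fun i => clo Φ (D i)) i)

theorem countable_lists {A : Set Ordinal.{0}} (h : A.Countable) :
    {l : List Ordinal.{0} | ∀ a ∈ l, a ∈ A}.Countable := by
  have := h.to_subtype
  refine (countable_range (fun l : List A => l.map Subtype.val)).mono ?_
  intro l hl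
  refine ⟨l.attach.map (fun x => ⟨x.1, hl x.1 x.2⟩), ?_⟩
  simp

theorem clo_countable {Φ : List Ordinal.{0} → Set Ordinal.{0}} (hΦ : ∀ l, (Φ l).Countable)
    {A : Set Ordinal.{0}} (hA : A.Countable) : (clo Φ A).Countable := by
  let it : ℕ → Set Ordinal.{0} := fun k => Nat.rec A
    (fun _ B => B ∪ ⋃ l ∈ {l : List Ordinal.{0} | ∀ a ∈ l, a ∈ B}, Φ l) k
  have hs : ∀ k, it (k + 1) = it k ∪ ⋃ l ∈ {l : List Ordinal.{0} | ∀ a ∈ l, a ∈ it k}, Φ l := fun k => rfl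
  have hc : ∀ k, (it k).Countable := by
    intro k
    induction k with
    | zero => exact hA
    | succ k ih =>
      rw [hs]
      exact ih.union ((countable_lists ih).biUnion fun l _ => hΦ l)
  have hm : Monotone it := monotone_nat_of_le_succ fun k => by rw [hs]; exact subset_union_left
  refine (countable_iUnion hc).mono (clo_subset (subset_iUnion it 0) ?_)
  intro l hl
  obtain ⟨k, hk⟩ := list_directed it (fun i j => ⟨max i j, hm (le_max_left _ _), hm (le_max_right _ _)⟩) l hl
  refine Subset.trans ?_ (subset_iUnion it (k + 1))
  rw [hs]
  refine Subset.trans ?_ subset_union_right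
  exact subset_biUnion_of_mem (u := Φ) (show l ∈ {l : List Ordinal.{0} | ∀ a ∈ l, a ∈ it k} from hk)

/-- clubs in `[κ]^ω` contain the closed sets of some system of functions -/
theorem exists_system {κ : Ordinal.{0}} (hκ : ω ≤ κ) {C : Set (Set Ordinal.{0})} (hC : IsClubOmega (Iio κ) C) :
    ∃ Φ : List Ordinal.{0} → Set Ordinal.{0}, (∀ l, (Φ l).Countable) ∧ (∀ l, Φ l ⊆ Iio κ) ∧
      ∀ M, M.Countable → M ⊆ Iio κ → ClosedU Φ M → M ∈ C := by
  obtain ⟨hC1, hC2, hC3⟩ := hC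
  have hinf : (Iio (ω : Ordinal.{0})).Infinite := by
    have : Set.InjOn (fun n : ℕ => (n : Ordinal.{0})) univ := fun a _ b _ h => by simpa using h
    refine (Set.infinite_univ.image this).mono ?_
    rintro _ ⟨n, -, rfl⟩
    exact Ordinal.natCast_lt_omega0 n
  have hcount : (Iio (ω : Ordinal.{0})).Countable := by
    have := countable_Iio_of_lt omega0_lt_omega1
    exact Set.to_countable _
  have hbase : ∃ x, x ∈ C := by
    obtain ⟨y, hy, -⟩ := hC2 (Iio ω) ⟨Iio_subset_Iio hκ, hcount, hinf⟩
    exact ⟨y, hy⟩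
  have hstep : ∀ (x : C) (a : Ordinal.{0}), ∃ y : C, x.1 ⊆ y.1 ∧ (a < κ → a ∈ y.1) := by
    intro x a
    obtain ⟨h1, h2, h3⟩ := hC1 x.2
    by_cases ha : a < κ
    · obtain ⟨y, hy, hy'⟩ := hC2 (insert a x.1) ⟨insert_subset ha h1, h2.insert a, h3.mono (subset_insert _ _)⟩
      exact ⟨⟨y, hy⟩, (subset_insert _ _).trans hy', fun _ => hy' (mem_insert _ _)⟩
    · exact ⟨x, Subset.rfl, fun h => absurd h ha⟩
  obtain ⟨x0, hx0⟩ := hbase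
  choose nx hnx1 hnx2 using hstep
  let Φ : List Ordinal.{0} → C := fun l => List.rec ⟨x0, hx0⟩ (fun a _ x => nx x a) l
  have hΦ : ∀ a l, Φ (a :: l) = nx (Φ l) a := fun a l => rfl
  refine ⟨fun l => (Φ l).1, fun l => (hC1 (Φ l).2).2.1, fun l => (hC1 (Φ l).2).1, ?_⟩
  intro M hM hMκ hMc
  have hne : M.Nonempty := by
    have : (Φ []).1 ⊆ M := hMc [] (by simp)
    exact (hC1 (Φ []).2).2.2.nonempty.mono this
  obtain ⟨a, rfl⟩ := hM.exists_eq_range hne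
  let ls : ℕ → List Ordinal.{0} := fun k => Nat.rec [] (fun k l => a k :: l) k
  have hls : ∀ k, ls (k + 1) = a k :: ls k := fun k => rfl
  have hlm : ∀ k, ∀ x ∈ ls k, x ∈ Set.range a := by
    intro k
    induction k with
    | zero => simp [ls]
    | succ k ih =>
      intro x hx
      rw [hls] at hx
      rcases List.mem_cons.1 hx with rfl | h
      · exact ⟨k, rfl⟩
      · exact ih x h
  have := hC3 (fun k => (Φ (ls k)).1) (fun k => (Φ (ls k)).2) (fun k => by
    rw [hls, hΦ]
    exact hnx1 _ _)
  convert this using 1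
  apply Subset.antisymm
  · rintro _ ⟨k, rfl⟩
    refine mem_iUnion.2 ⟨k + 1, ?_⟩
    rw [hls, hΦ]
    exact hnx2 _ _ (hMκ ⟨k, rfl⟩)
  · exact iUnion_subset fun k => hMc _ (hlm k)

theorem clo_ok {Φ : List Ordinal.{0} → Set Ordinal.{0}} (hΦ : ∀ l, (Φ l).Countable)
    (P : Set (List Ordinal.{0})) (hP : P.Countable) : ∃ ξ < omega1, ∀ p ∈ P,
      clo Φ (Iio ξ ∪ {a | a ∈ p}) ∩ Iio omega1 ⊆ Iio ξ := by
  let A : Set Ordinal.{0} := ⋃ p ∈ P, {a | a ∈ p}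
  have hA : A.Countable := hP.biUnion fun p _ => (List.finite_toSet p).countable
  have hb : ∀ ζ, ∃ b, ζ < omega1 → b < omega1 ∧ ζ < b ∧ ∀ z ∈ clo Φ (Iio ζ ∪ A), z < omega1 → z < b := by
    intro ζ
    by_cases hζ : ζ < omega1
    · have h1 := countable_Iio_of_lt hζ
      have h2 : (clo Φ (Iio ζ ∪ A) ∩ Iio omega1).Countable :=
        (clo_countable hΦ ((Set.to_countable _).union hA)).mono inter_subset_left
      have := h2.to_subtype
      obtain ⟨b, hb, hb'⟩ := reg_omega1.1.gen (szLe_countable le_rfl)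
        (fun z : (clo Φ (Iio ζ ∪ A) ∩ Iio omega1 : Set Ordinal.{0}) => z.1) (fun z => z.2.2)
      obtain ⟨c, hc, h3, h4⟩ := reg_omega1.1.two le_rfl hζ hb
      exact ⟨c, fun _ => ⟨hc, h3, fun z hz hz' => (hb' ⟨z, hz, hz'⟩).trans h4⟩⟩
    · exact ⟨0, fun h => absurd h hζ⟩
  choose b hb using hb
  obtain ⟨ξ, -, h1, h2, h3⟩ := (stat_univ reg_omega1) b (fun η hη => (hb η hη).1)
  refine ⟨ξ, h1, fun p hp => ?_⟩
  rintro z ⟨hz, hz'⟩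
  have hne : Nonempty (Iio ξ) := ⟨⟨0, h2⟩⟩
  have h4 : Iio ξ ∪ {a | a ∈ p} ⊆ ⋃ i : Iio ξ, (Iio i.1 ∪ A) := by
    rintro x (hx | hx)
    · have hx : x < ξ := hx
      exact mem_iUnion.2 ⟨⟨b x, h3 x hx⟩, Or.inl (hb x (hx.trans h1)).2.1⟩
    · exact mem_iUnion.2 ⟨⟨0, h2⟩, Or.inr (mem_biUnion hp hx)⟩
  have h5 := clo_directed (Φ := Φ) (fun i : Iio ξ => Iio i.1 ∪ A) (fun i j => ⟨max i j,
    union_subset_union_left _ (Iio_subset_Iio (le_max_left i.1 j.1)),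
    union_subset_union_left _ (Iio_subset_Iio (le_max_right i.1 j.1))⟩) (clo_mono h4 hz)
  obtain ⟨i, hi⟩ := mem_iUnion.1 h5
  exact ((hb i.1 (i.2.out.trans h1)).2.2 z hi hz').trans (h3 i.1 i.2)


theorem szLe_list.{u} {ι : Type u} {μ : Cardinal.{0}} (hμ : ℵ₀ ≤ μ) (h : SzLe ι μ) : SzLe (List ι) μ := by
  obtain ⟨f, hf⟩ := h
  have : SzLe (List μ.out) μ := szLe_iff.2 ((Cardinal.mk_list_le_max _).trans (by simp [hμ]))
  exact this.of_inj (List.map f) (List.map_injective_iff.2 hf)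

theorem szLe_lists {b : Ordinal.{0}} {μ : Cardinal.{0}} (hμ : ℵ₀ ≤ μ) (h : b.card ≤ μ) :
    SzLe {l : List Ordinal.{0} // ∀ a ∈ l, a < b} μ := by
  refine (szLe_list hμ (szLe_Iio h)).of_surj
    (fun l : List (Iio b) => ⟨l.map Subtype.val, by
      intro a ha
      obtain ⟨x, -, rfl⟩ := List.mem_map.1 ha
      exact x.2⟩) ?_
  rintro ⟨l, hl⟩
  refine ⟨l.attach.map (fun x => ⟨x.1, hl x.1 x.2⟩), ?_⟩
  simp

theorem exists_inj_unbounded {o : Ordinal.{0}} {μ : Cardinal.{0}} (h : CofGt o μ) (Y : Set Ordinal.{0})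
    (hY : ∀ y ∈ Y, y < o) (hU : ∀ b < o, ∃ y ∈ Y, b < y) :
    ∃ i : μ.out → Ordinal.{0}, Function.Injective i ∧ ∀ x, i x ∈ Y := by
  have hsm : Small.{0} Y := small_subset (s := Iio o) (fun y hy => hY y hy)
  rcases le_total #μ.out #(Shrink.{0} Y) with h1 | h1
  · obtain ⟨e⟩ := h1
    refine ⟨fun x => ((equivShrink Y).symm (e x)).1, ?_, fun x => ((equivShrink Y).symm (e x)).2⟩
    intro x x' hx
    exact e.injective ((equivShrink Y).symm.injective (Subtype.ext hx))
  · exfalso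
    obtain ⟨e⟩ := h1
    obtain ⟨b, hb, hb'⟩ := h.gen (⟨fun y => e (equivShrink Y y), e.injective.comp (equivShrink Y).injective⟩ : SzLe Y μ)
      (fun y => y.1) (fun y => hY y.1 y.2)
    obtain ⟨y, hy, hy'⟩ := hU b hb
    exact absurd (hb' ⟨y, hy⟩) (not_lt.2 hy'.le)

theorem exists_labels {lam : Cardinal.{0}} {mu : ℕ → Cardinal.{0}} (hmu0 : ∀ n, ℵ₀ ≤ mu n)
    (hmono : Monotone mu) (hcof : ∀ ν < lam, ∃ n, ν < mu n) :
    ∃ lab : (ℕ → lam.out) → ∀ n, (mu n).out,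
      ∀ s s', (∀ N, ∃ n ≥ N, lab s n = lab s' n) → s = s' := by
  have h0 : #lam.out ≤ #lam.ord.ToType := by simp
  obtain ⟨e⟩ := h0
  let v : lam.out → Ordinal.{0} := fun x => ((ToType.mk (o := lam.ord)).symm (e x)).1
  have hv : Function.Injective v := fun x x' h =>
    e.injective ((ToType.mk (o := lam.ord)).symm.injective (Subtype.ext h))
  have hvl : ∀ x, v x < lam.ord := fun x => ((ToType.mk (o := lam.ord)).symm (e x)).2
  have hsz : ∀ n, SzLe (List (Option (Iio (mu n).ord))) (mu n) := fun n =>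
    szLe_list (hmu0 n) (szLe_option (hmu0 n) (szLe_Iio (by simp)))
  choose j hj using hsz
  classical
  let tr : (ℕ → lam.out) → ∀ n : ℕ, ℕ → Option (Iio (mu n).ord) := fun s n i =>
    if h : v (s i) < (mu n).ord then some ⟨v (s i), h⟩ else none
  refine ⟨fun s n => j n ((List.range n).map (tr s n)), fun s s' hss => ?_⟩
  funext i
  obtain ⟨n1, h1⟩ := hcof _ (Cardinal.lt_ord.1 (hvl (s i)))
  obtain ⟨n2, h2⟩ := hcof _ (Cardinal.lt_ord.1 (hvl (s' i)))
  obtain ⟨n, hn, hn'⟩ := hss (max (i + 1) (max n1 n2))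
  have hn1 : i + 1 ≤ n := (le_max_left _ _).trans hn
  have hn2 : n1 ≤ n := (le_max_left _ _).trans ((le_max_right _ _).trans hn)
  have hn3 : n2 ≤ n := (le_max_right _ _).trans ((le_max_right _ _).trans hn)
  have h3 : v (s i) < (mu n).ord := Cardinal.lt_ord.2 (h1.trans_le (hmono hn2))
  have h4 : v (s' i) < (mu n).ord := Cardinal.lt_ord.2 (h2.trans_le (hmono hn3))
  have h5 := List.map_inj_left.1 (hj n hn') i (List.mem_range.2 (by omega))
  simp only [tr, h3, h4, dif_pos, Option.some.injEq] at h5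
  have h6 : v (s i) = v (s' i) := congrArg (fun z : Iio (mu n).ord => z.1) h5
  exact hv h6

def eSeq (Bs : Ordinal.{0} → Ordinal.{0}) (i : Ordinal.{0}) : Ordinal.{0} :=
  ⨆ j : Iio i, (max (eSeq Bs j.1) (Bs (eSeq Bs j.1)) + 1)
termination_by i
decreasing_by all_goals exact j.2

theorem eSeq_lt {Bs : Ordinal.{0} → Ordinal.{0}} {j i : Ordinal.{0}} (h : j < i) :
    eSeq Bs j < eSeq Bs i ∧ Bs (eSeq Bs j) < eSeq Bs i := by
  have : max (eSeq Bs j) (Bs (eSeq Bs j)) + 1 ≤ eSeq Bs i := by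
    conv_rhs => rw [eSeq]
    exact Ordinal.le_iSup (fun j : Iio i => max (eSeq Bs j.1) (Bs (eSeq Bs j.1)) + 1) ⟨j, h⟩
  have h2 := (lt_add_one _).trans_le this
  exact max_lt_iff.1 h2

theorem cover_some {o : Ordinal.{0}} (ho : CofGt o (aleph 1)) (B : Ordinal.{0} → Set Ordinal.{0})
    (hB : ∀ ξ < omega1, ∀ ε < o, ∃ b < o, ∀ y ∈ B ξ, Cof1 y → y < o → cc y ξ ≤ ε → y ≤ b) :
    ∃ a, (a < o ∧ Cof1 a) ∧ ∀ ξ < omega1, a ∉ B ξ := by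
  choose! b hb hb' using hB
  have hal : ℵ₀ ≤ aleph 1 := by simp
  have hsz : SzLe (Iio omega1) (aleph 1) := szLe_Iio (by simp [omega1])
  have h1 : ∀ ε < o, ∃ c < o, ∀ ξ < omega1, b ξ ε < c := by
    intro ε hε
    obtain ⟨c, hc, hc'⟩ := ho.gen hsz (fun ξ => b ξ ε) (fun ξ => hb ξ ξ.2 ε hε)
    exact ⟨c, hc, fun ξ hξ => hc' ⟨ξ, hξ⟩⟩
  choose! Bs hBs hBs' using h1
  have he : ∀ i < omega1, eSeq Bs i < o := by
    intro i
    induction i using WellFoundedLT.induction with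
    | ind i ih =>
      intro hi
      have hi' : SzLe (Iio i) (aleph 1) := szLe_Iio (Cardinal.lt_ord.1 hi).le
      obtain ⟨c, hc, hc'⟩ := ho.gen hi' (fun j => max (eSeq Bs j.1) (Bs (eSeq Bs j.1)) + 1) (fun j => by
        have h3 := ih j.1 j.2 (j.2.out.trans hi)
        exact ho.succ hal (max_lt h3 (hBs _ h3)))
      rw [eSeq]
      exact (Ordinal.iSup_le fun j => (hc' j).le).trans_lt hc
  obtain ⟨c, hc, hc'⟩ := ho.gen hsz (fun i => eSeq Bs i.1) (fun i => he i.1 i.2)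
  obtain ⟨y, hy⟩ : ∃ y, y = ⨆ i : Iio omega1, eSeq Bs i.1 := ⟨_, rfl⟩
  have hyo : y < o := by
    rw [hy]; exact (Ordinal.iSup_le fun j => (hc' j).le).trans_lt hc
  have hle : ∀ i < omega1, eSeq Bs i ≤ y := by
    intro i hi
    rw [hy]; exact Ordinal.le_iSup (fun i : Iio omega1 => eSeq Bs i.1) ⟨i, hi⟩
  have hcof : ∀ z < y, ∃ i < omega1, z < eSeq Bs i := by
    intro z hz
    rw [hy, Ordinal.lt_iSup_iff] at hz
    obtain ⟨i, hi⟩ := hz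
    exact ⟨i.1, i.2, hi⟩
  have hyc : Cof1 y := by
    refine ⟨eSeq Bs, fun i j hij hj => ?_, fun i hi => ?_, hcof⟩
    · rcases hij.lt_or_eq with h | rfl
      · exact (eSeq_lt h).1.le
      · exact le_rfl
    · exact (eSeq_lt (lt_add_one i)).1.trans_le (hle _ (reg_omega1.1.succ le_rfl hi))
  refine ⟨y, ⟨hyo, hyc⟩, fun ξ hξ hmem => ?_⟩
  obtain ⟨i, hi, hi'⟩ := hcof _ ((cc_spec hyc).2.1 ξ hξ)
  have h2 := hb' ξ hξ _ (he i hi) y hmem hyc hyo hi'.le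
  have h3 := hBs' _ (he i hi) ξ hξ
  have h4 := (eSeq_lt (Bs := Bs) (lt_add_one i)).2.trans_le (hle _ (reg_omega1.1.succ le_rfl hi))
  exact absurd (h3.trans h4) (not_lt.2 h2)

theorem S_stationary (lam : Cardinal.{0}) (mu : ℕ → Cardinal.{0})
    (hmu1 : ∀ n, aleph 1 ≤ mu n) (hmul : ∀ n, mu n < lam) (hmono : Monotone mu)
    (hcof : ∀ ν < lam, ∃ n, ν < mu n)
    (hpow1 : (aleph 1) ^ (ℵ₀ : Cardinal.{0}) ≤ lam) (κ : Ordinal.{0}) (hκ : κ = (Order.succ lam).ord)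
    (hbig : Order.succ lam < lam ^ (ℵ₀ : Cardinal.{0}))
    (g : ℕ → Ordinal.{0}) (f : Ordinal.{0} → ℕ → Ordinal.{0})
    (hg1 : ∀ m, g m < lam.ord) (hg2 : ∀ m, CofGt (g m) (mu m))
    (hA : ∀ ε : ℕ → Ordinal.{0}, (∀ m, ε m < g m) → ∃ α < κ, ∀ δ, α ≤ δ → δ < κ →
        {m | ε m ≤ f δ m ∧ f δ m < g m}.Infinite) :
    IsStationaryOmega (Iio κ) (Sset κ f) := by
  have hal1 : (ℵ₀ : Cardinal.{0}) ≤ aleph 1 := by simp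
  have hmu0 : ∀ n, ℵ₀ ≤ mu n := fun n => hal1.trans (hmu1 n)
  have hlam : ℵ₀ ≤ lam := (hmu0 0).trans (hmul 0).le
  have hal : aleph 1 ≤ lam := (hmu1 0).trans (hmul 0).le
  have hκc : CofGt κ lam := by
    subst hκ
    apply cofGt_of_lt_cof
    rw [(isRegular_succ hlam).cof_ord]
    exact Order.lt_succ lam
  have hlamκ : lam.ord < κ := by
    rw [hκ]; exact Cardinal.ord_lt_ord.2 (Order.lt_succ lam)
  have hcard : ∀ b < κ, b.card ≤ lam := fun b hb => by
    rw [hκ] at hb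
    exact Order.lt_succ_iff.1 (Cardinal.lt_ord.1 hb)
  intro C hC
  have hωκ : ω ≤ κ := by
    refine le_trans ?_ hlamκ.le
    rw [← Cardinal.ord_aleph0]; exact Cardinal.ord_le_ord.2 hlam
  obtain ⟨Φ, hΦ1, hΦ2, hΦ3⟩ := exists_system hωκ hC
  let Dom : Option ℕ → Set Ordinal.{0} := fun j => match j with
    | none => Iio κ
    | some n => {y | y < g n ∧ Cof1 y}
  let Idl : Option ℕ → Ordinal.{0} → Set (Set Ordinal.{0}) := fun j ξ => match j with
    | none => {B | ∃ b < κ, ∀ a ∈ B, a < b}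
    | some n => {B | ∀ ε < g n, ∃ b < g n, ∀ y ∈ B, Cof1 y → y < g n → cc y ξ ≤ ε → y ≤ b}
  obtain ⟨ξ, hξ, W, hW0, hW⟩ := game Dom Idl
    (fun ξ p => clo Φ (Iio ξ ∪ {a | a ∈ p}) ∩ Iio omega1 ⊆ Iio ξ)
    (by
      rintro (_ | n) ξ
      · exact ⟨0, hκc.pos, by simp⟩
      · intro ε hε
        exact ⟨0, (hg2 n).pos, by simp⟩)
    (by
      rintro (_ | n) B hB
      · simp only [Idl, mem_setOf_eq] at hB
        choose! b hb hb' using hB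
        obtain ⟨c, hc, hc'⟩ := (hκc.mono hal).gen (szLe_Iio (o := omega1) (by simp [omega1]))
          (fun ξ => b ξ) (fun ξ => hb ξ ξ.2)
        exact ⟨c, hc, fun ξ hξ hm => absurd ((hb' ξ hξ c hm).trans (hc' ⟨ξ, hξ⟩)) (lt_irrefl _)⟩
      · exact cover_some ((hg2 n).mono (hmu1 n)) B hB)
    (fun P hP => clo_ok hΦ1 P hP)
  have hWok : ∀ p ∈ W, clo Φ (Iio ξ ∪ {a | a ∈ p}) ∩ Iio omega1 ⊆ Iio ξ := fun p hp => (hW p hp).1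
  have hWn : ∀ p ∈ W, ∀ b < κ, ∃ a, a < κ ∧ a :: p ∈ W ∧ b ≤ a := by
    intro p hp b hb
    by_contra! hcon
    refine (hW p hp).2 none ⟨b, hb, fun a ha => hcon a ha.1 ha.2⟩
  have hWs : ∀ p ∈ W, ∀ n, ∃ ε < g n, ∀ b < g n, ∃ y, y :: p ∈ W ∧ Cof1 y ∧ y < g n ∧ cc y ξ ≤ ε ∧ b < y := by
    intro p hp n
    have := (hW p hp).2 (some n)
    simp only [Idl, Dom, mem_setOf_eq] at this
    push Not at this
    obtain ⟨ε, hε, h⟩ := this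
    refine ⟨ε, hε, fun b hb => ?_⟩
    obtain ⟨y, h1, h2, h3, h4, h5⟩ := h b hb
    exact ⟨y, h1.2, h2, h3, h4, h5⟩
  clear hW
  choose! D hD1 hD2 hD3 using hWn
  choose! E hE1 hE2 using hWs
  have hα : ∀ p ∈ W, ∃ α < κ, ∀ δ, α ≤ δ → δ < κ → {m | E p m ≤ f δ m ∧ f δ m < g m}.Infinite :=
    fun p hp => hA (E p) (hE1 p hp)
  choose! α hα1 hα2 using hα
  have hcloκ : ∀ A : Set Ordinal.{0}, A ⊆ Iio κ → clo Φ A ⊆ Iio κ := fun A hA' =>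
    clo_subset hA' (fun l _ => hΦ2 l)
  have hω1κ : omega1 < κ := by
    refine lt_of_le_of_lt ?_ hlamκ
    exact Cardinal.ord_le_ord.2 hal
  have hξκ : ξ < κ := hξ.trans hω1κ
  -- the sequence of δ's
  have hstep : ∀ b : Iio κ, ∃ b' : Iio κ, b < b' ∧ ∀ p, (∀ a ∈ p, a < b.1) → p ∈ W → α p < b'.1 ∧ D p b.1 < b'.1 ∧
      ∀ z ∈ clo Φ (Iio ξ ∪ {a | a ∈ p}), z < b'.1 := by
    rintro ⟨b, hb⟩
    have hz : ∀ p : {l : List Ordinal.{0} // ∀ a ∈ l, a < b}, ∃ c < κ, p.1 ∈ W → α p.1 < c ∧ D p.1 b < c ∧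
        ∀ z ∈ clo Φ (Iio ξ ∪ {a | a ∈ p.1}), z < c := by
      rintro ⟨p, hp⟩
      by_cases hpW : p ∈ W
      · have h1 : (Iio ξ ∪ {a | a ∈ p}).Countable := by
          have := countable_Iio_of_lt hξ
          exact (Set.to_countable _).union (List.finite_toSet p).countable
        have h2 := (clo_countable hΦ1 h1).to_subtype
        obtain ⟨c1, hc1, hc1'⟩ := hκc.gen (szLe_countable hlam) (fun z : clo Φ (Iio ξ ∪ {a | a ∈ p}) => z.1)
          (fun z => hcloκ _ (union_subset (Iio_subset_Iio hξκ.le) (fun a ha => (hp a ha).trans hb)) z.2)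
        obtain ⟨c2, hc2, h3, h4⟩ := hκc.two hlam (hα1 p hpW) (hD1 p hpW b hb)
        obtain ⟨c3, hc3, h5, h6⟩ := hκc.two hlam hc1 hc2
        exact ⟨c3, hc3, fun _ => ⟨h3.trans h6, h4.trans h6, fun z hz => (hc1' ⟨z, hz⟩).trans h5⟩⟩
      · exact ⟨0, hκc.pos, fun h => absurd h hpW⟩
    choose c hc hc' using hz
    obtain ⟨d, hd, hd'⟩ := hκc.gen (szLe_lists hlam (hcard b hb)) c hc
    obtain ⟨d', hd1, hd2, hd3⟩ := hκc.two hlam hb hd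
    refine ⟨⟨d', hd1⟩, hd2, fun p hp hpW => ?_⟩
    obtain ⟨h1, h2, h3⟩ := hc' ⟨p, hp⟩ hpW
    have h4 := (hd' ⟨p, hp⟩).trans hd3
    exact ⟨h1.trans h4, h2.trans h4, fun z hz => (h3 z hz).trans h4⟩
  choose nx hnx1 hnx2 using hstep
  let ds : ℕ → Iio κ := fun k => Nat.rec ⟨lam.ord, hlamκ⟩ (fun _ b => nx b) k
  let d : ℕ → Ordinal.{0} := fun k => (ds k).1
  have hds : ∀ k, ds (k + 1) = nx (ds k) := fun k => rfl
  have hdκ : ∀ k, d k < κ := fun k => (ds k).2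
  have hd0 : d 0 = lam.ord := rfl
  have hdlt : ∀ k, d k < d (k + 1) := fun k => hnx1 (ds k)
  have hdmono : StrictMono d := strictMono_nat_of_lt_succ hdlt
  have hdp : ∀ k p, (∀ a ∈ p, a < d k) → p ∈ W → α p < d (k+1) ∧ D p (d k) < d (k+1) ∧
      ∀ z ∈ clo Φ (Iio ξ ∪ {a | a ∈ p}), z < d (k+1) := fun k => hnx2 (ds k)
  have hgd : ∀ n k, g n < d k := fun n k => (hg1 n).trans_le (hdmono.monotone (Nat.zero_le k))
  obtain ⟨δ, hδ⟩ : ∃ δ, δ = ⨆ k, d k := ⟨_, rfl⟩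
  have hδκ : δ < κ := by
    obtain ⟨b, hb, hb'⟩ := hκc.nat hlam d hdκ
    rw [hδ]
    exact (Ordinal.iSup_le fun k => (hb' k).le).trans_lt hb
  have hdδ : ∀ k, d k < δ := fun k => (hdlt k).trans_le (by rw [hδ]; exact Ordinal.le_iSup d (k+1))
  have hlog : ∀ z < δ, ∃ k, z < d k := fun z hz => by
    rw [hδ, Ordinal.lt_iSup_iff] at hz; exact hz
  -- nn and ii
  have hnn : ∀ (q : List Ordinal.{0}) (N : ℕ), ∃ m, N ≤ m ∧ (q ∈ W → α q < δ → E q m ≤ f δ m ∧ f δ m < g m) := by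
    intro q N
    by_cases h : q ∈ W ∧ α q < δ
    · have := hα2 q h.1 δ h.2.le hδκ
      obtain ⟨m, hm, hm'⟩ := this.exists_gt N
      exact ⟨m, hm'.le, fun _ _ => hm⟩
    · exact ⟨N, le_rfl, fun h1 h2 => absurd ⟨h1, h2⟩ h⟩
  choose nn hnn1 hnn2 using hnn
  have hii : ∀ (q : List Ordinal.{0}) (m : ℕ), ∃ i : (mu m).out → Ordinal.{0}, q ∈ W → f δ m < g m →
      Function.Injective i ∧ ∀ x, i x :: q ∈ W ∧ Cof1 (i x) ∧ i x < g m ∧ cc (i x) ξ ≤ E q m ∧ f δ m < i x := by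
    intro q m
    by_cases h : q ∈ W ∧ f δ m < g m
    · obtain ⟨i, hi1, hi2⟩ := exists_inj_unbounded (hg2 m)
        {y | y :: q ∈ W ∧ Cof1 y ∧ y < g m ∧ cc y ξ ≤ E q m ∧ f δ m < y} (fun y hy => hy.2.2.1)
        (by
          intro b hb
          obtain ⟨y, h1, h2, h3, h4, h5⟩ := hE2 q h.1 m (max b (f δ m)) (max_lt hb h.2)
          exact ⟨y, ⟨h1, h2, h3, h4, (le_max_right _ _).trans_lt h5⟩, (le_max_left _ _).trans_lt h5⟩)
      exact ⟨i, fun _ _ => ⟨hi1, hi2⟩⟩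
    · exact ⟨fun _ => 0, fun h1 h2 => absurd ⟨h1, h2⟩ h⟩
  choose ii hii using hii
  obtain ⟨lab, hlab⟩ := exists_labels (lam := lam) hmu0 hmono hcof
  -- the run
  let qf : ℕ → List Ordinal.{0} × ℕ → List Ordinal.{0} := fun k st => D st.1 (d k) :: st.1
  let mf : ℕ → List Ordinal.{0} × ℕ → ℕ := fun k st => nn (qf k st) st.2
  let yf : (ℕ → lam.out) → ℕ → List Ordinal.{0} × ℕ → Ordinal.{0} := fun s k st =>
    ii (qf k st) (mf k st) (lab s (mf k st))
  let st : (ℕ → lam.out) → ℕ → List Ordinal.{0} × ℕ := fun s k =>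
    Nat.rec ([], 0) (fun k x => (yf s k x :: qf k x, mf k x + 1)) k
  have hst : ∀ s k, st s (k+1) = (yf s k (st s k) :: qf k (st s k), mf k (st s k) + 1) := fun s k => rfl
  have inv : ∀ s k, (st s k).1 ∈ W ∧ (∀ a ∈ (st s k).1, a < d k) ∧ k ≤ (st s k).2 ∧
      (qf k (st s k) ∈ W ∧ (E (qf k (st s k)) (mf k (st s k)) ≤ f δ (mf k (st s k)) ∧
        f δ (mf k (st s k)) < g (mf k (st s k))) ∧ D (st s k).1 (d k) < d (k+1) ∧ d k ≤ D (st s k).1 (d k)) := by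
    intro s k
    have aux : ∀ k, (st s k).1 ∈ W → (∀ a ∈ (st s k).1, a < d k) →
      (qf k (st s k) ∈ W ∧ (E (qf k (st s k)) (mf k (st s k)) ≤ f δ (mf k (st s k)) ∧
        f δ (mf k (st s k)) < g (mf k (st s k))) ∧ D (st s k).1 (d k) < d (k+1) ∧ d k ≤ D (st s k).1 (d k)) := by
      intro k h1 h2
      have h3 : qf k (st s k) ∈ W := hD2 _ h1 _ (hdκ k)
      have h4 := (hdp k _ h2 h1).2.1
      have h5 : ∀ a ∈ qf k (st s k), a < d (k+1) := by
        intro a ha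
        rcases List.mem_cons.1 ha with rfl | h
        · exact h4
        · exact (h2 a h).trans (hdlt k)
      have h6 := (hdp (k+1) _ h5 h3).1.trans (hdδ (k+1+1))
      exact ⟨h3, hnn2 _ _ h3 h6, h4, hD3 _ h1 _ (hdκ k)⟩
    suffices h : (st s k).1 ∈ W ∧ (∀ a ∈ (st s k).1, a < d k) ∧ k ≤ (st s k).2 from
      ⟨h.1, h.2.1, h.2.2, aux k h.1 h.2.1⟩
    induction k with
    | zero => exact ⟨hW0, by simp [st], le_rfl⟩
    | succ k ih =>
      obtain ⟨h1, h2, h3⟩ := ih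
      obtain ⟨h4, h5, h6, h7⟩ := aux k h1 h2
      have h8 := (hii _ _ h4 h5.2).2 (lab s (mf k (st s k)))
      rw [hst]
      refine ⟨h8.1, ?_, ?_⟩
      · intro a ha
        rcases List.mem_cons.1 ha with rfl | h
        · exact h8.2.2.1.trans (hgd (mf k (st s k)) (k+1))
        · rcases List.mem_cons.1 h with rfl | h
          · exact h6
          · exact (h2 a h).trans (hdlt k)
      · have := hnn1 (qf k (st s k)) (st s k).2
        simp only [mf]
        omega
  let m : (ℕ → lam.out) → ℕ → ℕ := fun s k => mf k (st s k)
  let y : (ℕ → lam.out) → ℕ → Ordinal.{0} := fun s k => yf s k (st s k)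
  have hmk : ∀ s k, k ≤ m s k := fun s k => (inv s k).2.2.1.trans (hnn1 _ _)
  have hmm : ∀ s, StrictMono (m s) := fun s => strictMono_nat_of_lt_succ fun k => by
    have h1 : (st s (k+1)).2 ≤ m s (k+1) := hnn1 _ _
    have h2 : (st s (k+1)).2 = m s k + 1 := rfl
    omega
  have hy : ∀ s k, Cof1 (y s k) ∧ cc (y s k) ξ ≤ f δ (m s k) ∧ f δ (m s k) < y s k := by
    intro s k
    obtain ⟨-, -, -, h4, h5, -⟩ := inv s k
    have h8 := (hii _ _ h4 h5.2).2 (lab s (mf k (st s k)))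
    exact ⟨h8.2.1, h8.2.2.2.1.trans h5.1, h8.2.2.2.2⟩
  by_contra hcon
  have hl : ∀ s, ∃ l ∈ LLs κ f, ∀ k, y s k = l (m s k) := by
    intro s
    by_contra! hl
    apply hcon
    let Pt : ℕ → Set Ordinal.{0} := fun k => Iio ξ ∪ {a | a ∈ (st s k).1}
    have hPm : Monotone Pt := monotone_nat_of_le_succ fun k => by
      refine union_subset_union_right _ fun a ha => ?_
      change a ∈ (st s (k+1)).1
      rw [hst]
      exact List.mem_cons_of_mem _ (List.mem_cons_of_mem _ ha)
    let M := clo Φ (⋃ k, Pt k)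
    have hMu : M ⊆ ⋃ k, clo Φ (Pt k) := clo_directed Pt
      (fun i j => ⟨max i j, hPm (le_max_left _ _), hPm (le_max_right _ _)⟩)
    have hsubM : ∀ k, ∀ a ∈ (st s k).1, a ∈ M := fun k a ha => subset_clo (mem_iUnion.2 ⟨k, Or.inr ha⟩)
    have hξM : Iio ξ ⊆ M := fun a ha => subset_clo (mem_iUnion.2 ⟨0, Or.inl ha⟩)
    have hMδ : M ⊆ Iio δ := by
      intro z hz
      obtain ⟨k, hk⟩ := mem_iUnion.1 (hMu hz)
      exact ((hdp k _ (inv s k).2.1 (inv s k).1).2.2 z hk).trans (hdδ (k+1))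
    have hMκ : M ⊆ Iio κ := hMδ.trans (Iio_subset_Iio hδκ.le)
    have hMc : M.Countable := by
      refine clo_countable hΦ1 (countable_iUnion fun k => ?_)
      have := countable_Iio_of_lt hξ
      exact (Set.to_countable _).union (List.finite_toSet _).countable
    have hMC : M ∈ C := hΦ3 M hMc hMκ closedU_clo
    refine ⟨M, ⟨hC.1 hMC, ξ, hξ, ?_, δ, hδκ, ?_, Set.range (m s), ?_⟩, hMC⟩
    · apply Subset.antisymm
      · rintro z ⟨hz, hz'⟩
        obtain ⟨k, hk⟩ := mem_iUnion.1 (hMu hz)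
        exact hWok _ (inv s k).1 ⟨hk, hz'⟩
      · exact fun z hz => ⟨hξM hz, (show z < ξ from hz).trans hξ⟩
    · intro a ha
      obtain ⟨k, hk⟩ := hlog a ha
      obtain ⟨-, -, -, -, -, h6, h7⟩ := inv s k
      refine ⟨D (st s k).1 (d k), hsubM (k+1) _ ?_, hk.le.trans h7, h6.trans (hdδ (k+1))⟩
      rw [hst]
      exact List.mem_cons_of_mem _ List.mem_cons_self
    · classical
      let yy : ℕ → Ordinal.{0} := fun n => if h : ∃ k, m s k = n then y s h.choose else 0
      have hyy : ∀ k, yy (m s k) = y s k := by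
        intro k
        have h : ∃ k', m s k' = m s k := ⟨k, rfl⟩
        simp only [yy, dif_pos h]
        rw [(hmm s).injective h.choose_spec]
      refine ⟨yy, ?_, ?_⟩
      · rintro _ ⟨k, rfl⟩
        rw [hyy]
        refine ⟨hsubM (k+1) _ ?_, hy s k⟩
        rw [hst]
        exact List.mem_cons_self
      · intro l hlL
        obtain ⟨k, hk⟩ := hl l hlL
        exact ⟨m s k, ⟨k, rfl⟩, by rwa [hyy]⟩
  choose l hlL hl using hl
  have hinj : Function.Injective (fun s => (⟨l s, hlL s⟩ : LLs κ f)) := by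
    intro s s' hss
    have hss : l s = l s' := congrArg Subtype.val hss
    have hlabeq : ∀ k, st s k = st s' k → lab s (m s k) = lab s' (m s k) := by
      intro k hk
      have h1 : y s k = y s' k := by
        rw [hl, hl, hss]
        simp only [m, hk]
      have h1 : yf s k (st s k) = yf s' k (st s k) := h1.trans (congrArg (yf s' k) hk.symm)
      obtain ⟨-, -, -, h4, h5, -⟩ := inv s k
      exact (hii _ _ h4 h5.2).1 h1
    have hsteq : ∀ k, st s k = st s' k := by
      intro k
      induction k with
      | zero => rfl
      | succ k ih =>
        have h1 := hlabeq k ih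
        rw [hst, hst]
        simp only [yf, ← ih]
        simp only [m] at h1
        rw [h1]
    exact hlab s s' fun N => ⟨m s N, hmk s N, hlabeq N (hsteq N)⟩
  have hsz : SzLe (LLs κ f) (Order.succ lam) := szLe_LLs (hlam.trans (Order.le_succ lam))
    (by rw [hκ]; simp) (hpow1.trans (Order.le_succ lam))
  have := szLe_iff.1 (hsz.of_inj _ hinj)
  rw [← Cardinal.power_def] at this
  simp only [Cardinal.mk_out, Cardinal.mk_nat] at this
  exact absurd hbig (not_lt.2 this)


theorem szLe_fun.{u, v} {I : Type u} {V : Type v} {μ θ ν : Cardinal.{0}} (hI : SzLe I θ)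
    (hV : SzLe V μ) (h0 : μ ≠ 0) (h : μ ^ θ ≤ ν) : SzLe (I → V) ν := by
  obtain ⟨I', e, hI'⟩ := hI.exists_type
  obtain ⟨V', e', hV'⟩ := hV.exists_type
  have : SzLe (I' → V') ν := by
    rw [szLe_iff, ← Cardinal.power_def]
    exact (Cardinal.power_le_power_right hV').trans
      ((Cardinal.power_le_power_left h0 hI').trans h)
  exact this.of_inj (Equiv.arrowCongr e e') (Equiv.arrowCongr e e').injective

theorem szLe_sigma.{u, v} {I : Type u} {V : I → Type v} {μ : Cardinal.{0}} (hμ : ℵ₀ ≤ μ)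
    (hI : SzLe I μ) (hV : ∀ i, SzLe (V i) μ) : SzLe (Σ i, V i) μ := by
  choose f hf using hV
  refine (szLe_prod hμ hI (szLe_iff.2 (by simp) : SzLe μ.out μ)).of_inj
    (fun x => (x.1, f x.1 x.2)) ?_
  rintro ⟨i, x⟩ ⟨j, y⟩ hxy
  obtain ⟨h1, h2⟩ := Prod.mk.inj hxy
  simp only at h1
  subst h1
  exact congrArg (Sigma.mk i) (hf i h2)

theorem exists_code.{u} {X : Type u} {c : Cardinal.{0}} (h : SzLe X c) :
    ∃ φ : X → Ordinal.{0}, Function.Injective φ ∧ ∀ x, φ x < c.ord := by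
  obtain ⟨f, hf⟩ := h
  have h0 : #c.out ≤ #c.ord.ToType := by simp
  obtain ⟨e⟩ := h0
  refine ⟨fun x => ((ToType.mk (o := c.ord)).symm (e (f x))).1, fun x x' h => ?_,
    fun x => ((ToType.mk (o := c.ord)).symm (e (f x))).2⟩
  exact hf (e.injective ((ToType.mk (o := c.ord)).symm.injective (Subtype.ext h)))

theorem pow_le_of_szLe {μ θ ν : Cardinal.{0}} (h : SzLe (θ.out → Iio μ.ord) ν) : μ ^ θ ≤ ν := by
  obtain ⟨φ, h1, h2⟩ := exists_code (szLe_iff.2 (by simp) : SzLe μ.out μ)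
  have : SzLe (θ.out → μ.out) ν := h.of_inj (fun f t => ⟨φ (f t), h2 _⟩) (by
    intro f f' hf
    funext t
    exact h1 (congrArg Subtype.val (congrFun hf t)))
  simpa using szLe_iff.1 this

theorem cof_seq {lam : Cardinal.{0}} (h : ℵ₀ ≤ lam) :
    ∃ a : Ordinal.{0} → Ordinal.{0}, (∀ j, a j < lam.ord) ∧
      ∀ o < lam.ord, ∃ j < lam.ord.cof.ord, o < a j := by
  obtain ⟨s, hs, hs'⟩ := Order.exists_cof_eq lam.ord.ToType
  rw [Ordinal.cof_toType] at hs'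
  have hsz : SzLe s lam.ord.cof := szLe_iff.2 hs'.le
  obtain ⟨φ, h1, h2⟩ := exists_code hsz
  have hlim := Cardinal.isSuccLimit_ord h
  have h0 : 0 < lam.ord := Cardinal.lt_ord.2 (by simpa using Cardinal.aleph0_pos.trans_le h)
  classical
  let a : Ordinal.{0} → Ordinal.{0} := fun j =>
    if h : ∃ x, φ x = j then ((ToType.mk (o := lam.ord)).symm h.choose.1).1 else 0
  refine ⟨a, fun j => ?_, fun o ho => ?_⟩
  · by_cases hj : ∃ x, φ x = j
    · simp only [a, dif_pos hj]
      exact ((ToType.mk (o := lam.ord)).symm _).2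
    · simp only [a, dif_neg hj]
      exact h0
  · have ho' : o + 1 < lam.ord := hlim.succ_lt ho
    obtain ⟨y, hy, hy'⟩ := hs (ToType.mk ⟨o + 1, ho'⟩)
    refine ⟨φ ⟨y, hy⟩, h2 _, ?_⟩
    have hj : ∃ x, φ x = φ ⟨y, hy⟩ := ⟨_, rfl⟩
    have h3 : hj.choose = ⟨y, hy⟩ := h1 hj.choose_spec
    simp only [a, dif_pos hj, h3]
    have h4 : (⟨o + 1, ho'⟩ : Iio lam.ord) ≤ (ToType.mk (o := lam.ord)).symm y := by
      rw [OrderIso.le_symm_apply]; exact hy'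
    exact (lt_add_one o).trans_le h4

open Classical in
def trO (b x : Ordinal.{0}) : Option (Iio b) := if h : x < b then some ⟨x, h⟩ else none

theorem trO_inj {b x y : Ordinal.{0}} (hx : x < b) (h : trO b x = trO b y) : x = y := by
  by_cases hy : y < b
  · simp only [trO, dif_pos hx, dif_pos hy, Option.some.injEq] at h
    exact congrArg (fun z : Iio b => z.1) h
  · simp [trO, dif_pos hx, dif_neg hy] at h

def GoodBelow (lam : Cardinal.{0}) : Prop :=
  ∀ μ < lam, ℵ₀ ≤ μ → ¬ μ.IsRegular → (2 : Cardinal) ^ μ.ord.cof < μ →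
    μ ^ μ.ord.cof = Order.succ μ

theorem pow_bound {θ lam : Cardinal.{0}} (hθ : ℵ₀ ≤ θ) (IH : GoodBelow lam) (μ : Cardinal.{0})
    (hμ : μ < lam) : μ ^ θ ≤ max ((2 : Cardinal) ^ θ) (Order.succ μ) := by
  induction μ using WellFoundedLT.induction with
  | ind μ ih =>
  have hθθ : θ * θ = θ := Cardinal.mul_eq_self hθ
  rcases le_or_gt μ ((2 : Cardinal) ^ θ) with h1 | h1
  · refine le_max_of_le_left ((Cardinal.power_le_power_right h1).trans ?_)
    rw [← Cardinal.power_mul, hθθ]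
  by_cases h2 : ∃ ν < μ, μ ≤ ν ^ θ
  · obtain ⟨ν, hν, hν'⟩ := h2
    calc μ ^ θ ≤ (ν ^ θ) ^ θ := Cardinal.power_le_power_right hν'
      _ = ν ^ θ := by rw [← Cardinal.power_mul, hθθ]
      _ ≤ max ((2 : Cardinal) ^ θ) (Order.succ ν) := ih ν hν (hν.trans hμ)
      _ ≤ _ := max_le_max le_rfl (Order.succ_le_succ hν.le)
  push Not at h2
  have hθμ : θ < μ := (Cardinal.cantor θ).trans h1
  have hμ0 : ℵ₀ ≤ μ := hθ.trans hθμ.le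
  have h3 : ∀ b : Ordinal.{0}, b < μ.ord → SzLe (θ.out → Option (Iio b)) μ := by
    intro b hb
    have h4 : max b.card ℵ₀ < μ := max_lt (Cardinal.lt_ord.1 hb) (hθ.trans_lt hθμ)
    refine szLe_fun (szLe_iff.2 (by simp)) (szLe_option (le_max_right _ _) (szLe_Iio (le_max_left _ _)))
      (Cardinal.aleph0_pos.trans_le (le_max_right _ _)).ne' (h2 _ h4).le
  refine le_max_of_le_right ?_
  rcases lt_or_ge θ μ.ord.cof with h4 | h4
  · refine le_trans (pow_le_of_szLe ?_) (Order.le_succ μ)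
    have h5 : ∀ f : θ.out → Iio μ.ord, ∃ b < μ.ord, ∀ t, (f t).1 < b := fun f =>
      (cofGt_of_lt_cof h4) _ (fun t => (f t).1) (by simp) (fun t => (f t).2)
    choose b hb hb' using h5
    have h6 : SzLe (Σ b : Iio μ.ord, (θ.out → Option (Iio b.1))) μ :=
      szLe_sigma hμ0 (szLe_Iio (by simp)) (fun b => h3 b.1 b.2)
    let R : (θ.out → Iio μ.ord) → (Σ b : Iio μ.ord, (θ.out → Option (Iio b.1))) → Prop :=
      fun f d => (∀ t, (f t).1 < d.1.1) ∧ ∀ t, d.2 t = trO d.1.1 (f t).1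
    let d : (θ.out → Iio μ.ord) → (Σ b : Iio μ.ord, (θ.out → Option (Iio b.1))) :=
      fun f => ⟨⟨b f, hb f⟩, fun t => trO (b f) (f t).1⟩
    have hd : ∀ f, R f (d f) := fun f => ⟨hb' f, fun t => rfl⟩
    refine h6.of_inj d fun f f' hff => ?_
    have h7 := hd f
    have h8 := hd f'
    rw [← hff] at h8
    funext t
    exact Subtype.ext (trO_inj (h7.1 t) ((h7.2 t).symm.trans (h8.2 t)))
  · have hreg : ¬ μ.IsRegular := fun h => absurd (h.le_cof_ord.trans h4) (not_le.2 hθμ)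
    have h5 : (2 : Cardinal) ^ μ.ord.cof < μ :=
      (Cardinal.power_le_power_left (by simp) h4).trans_lt h1
    rw [← IH μ hμ hμ0 hreg h5]
    apply pow_le_of_szLe
    obtain ⟨a, ha, ha'⟩ := cof_seq hμ0
    choose c hc using fun j => h3 (a j) (ha j)
    have h6 : SzLe (Iio μ.ord.cof.ord → μ.out) (μ ^ μ.ord.cof) :=
      szLe_fun (szLe_Iio (by simp)) (szLe_iff.2 (by simp) : SzLe μ.out μ)
        (Cardinal.aleph0_pos.trans_le hμ0).ne' le_rfl
    refine h6.of_inj (fun f j => c j.1 (fun t => trO (a j.1) (f t).1)) fun f f' hff => ?_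
    funext t
    obtain ⟨j, hj, hj'⟩ := ha' (f t).1 (f t).2
    have h7 := hc j (congrFun hff ⟨j, hj⟩)
    exact Subtype.ext (trO_inj hj' (congrFun h7 t))

theorem omega_case (hssr : ∀ lam : Cardinal.{0}, aleph 2 ≤ lam → SSR lam.ord) {lam : Cardinal.{0}}
    (h0 : ℵ₀ ≤ lam) (hcof : lam.ord.cof = ℵ₀) (h2 : (2 : Cardinal) ^ ℵ₀ < lam)
    (hsucc : ∀ ν < lam, Order.succ ν < lam) (hpow : ∀ ν < lam, ν ^ ℵ₀ ≤ lam) :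
    lam ^ ℵ₀ ≤ Order.succ lam := by
  by_contra! hbig
  obtain ⟨a, ha, ha'⟩ := cof_seq h0
  rw [hcof] at ha'
  have hl1 : aleph 1 < lam := by
    rw [← Cardinal.succ_aleph0]
    exact (Order.succ_le_of_lt (Cardinal.cantor ℵ₀)).trans_lt h2
  let mu : ℕ → Cardinal.{0} := fun n =>
    Nat.rec (aleph 1) (fun n x => max x (Order.succ (a n).card)) n
  have hms : ∀ n, mu (n + 1) = max (mu n) (Order.succ (a n).card) := fun n => rfl
  have hmono : Monotone mu := monotone_nat_of_le_succ fun n => by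
    rw [hms]; exact le_max_left _ _
  have hmu1 : ∀ n, aleph 1 ≤ mu n := fun n => hmono (Nat.zero_le n)
  have hmul : ∀ n, mu n < lam := by
    intro n
    induction n with
    | zero => exact hl1
    | succ n ih =>
      rw [hms]
      exact max_lt ih (hsucc _ (Cardinal.lt_ord.1 (ha n)))
  have hmc : ∀ ν < lam, ∃ n, ν < mu n := by
    intro ν hν
    obtain ⟨j, hj, hj'⟩ := ha' ν.ord (Cardinal.ord_lt_ord.2 hν)
    rw [Cardinal.ord_aleph0, Ordinal.lt_omega0] at hj
    obtain ⟨n, rfl⟩ := hj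
    refine ⟨n + 1, ?_⟩
    rw [hms]
    refine lt_max_of_lt_right (Order.lt_succ_of_le ?_)
    exact Cardinal.ord_le.1 hj'.le
  obtain ⟨g, f, hg1, hg2, hA⟩ := lemmaA lam mu
    (fun n => (Cardinal.aleph0_le_aleph 1).trans (hmu1 n)) hmul hmono hmc hsucc hpow _ rfl
  have hS := S_stationary lam mu hmu1 hmul hmono hmc (hpow _ hl1) _ rfl hbig g f hg1 hg2 hA
  have h3 : aleph 2 ≤ Order.succ lam := by
    have h4 : (aleph 2 : Cardinal.{0}) = Order.succ (aleph 1) := by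
      rw [← Cardinal.aleph_succ]
      congr 1
      rw [← one_add_one_eq_two]; rfl
    rw [h4]
    exact Order.succ_le_succ hl1.le
  obtain ⟨I, hI, hI1, hI2, hI3⟩ := hssr _ h3 (Sset _ f) (fun x hx => hx.1) (Sset_full _ f) hS
  refine no_reflect (cofGt_of_lt_cof ?_) f hI1 hI2 hI3
  rw [(Cardinal.isRegular_succ h0).cof_ord]
  exact hl1.trans (Order.lt_succ lam)

theorem silver {lam : Cardinal.{0}} (h0 : ℵ₀ ≤ lam) {θ : Cardinal.{0}} (hcof : lam.ord.cof = θ)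
    (hθ : ℵ₀ < θ) (hθl : θ < lam) (h2 : (2 : Cardinal) ^ θ < lam)
    (hQ : ∀ μ < lam, μ ^ θ ≤ max ((2 : Cardinal) ^ θ) (Order.succ μ))
    (hpow : ∀ ν < lam, ν ^ θ ≤ lam) :
    lam ^ θ ≤ Order.succ lam := by
  have hreg : Reg θ.ord := reg_ord ⟨hθ.le, by rw [← hcof, Ordinal.cof_ord_cof]⟩ hθ
  obtain ⟨a', ha', hac'⟩ := cof_seq h0
  rw [hcof] at hac'
  obtain ⟨a, ha, hac, ha2⟩ : ∃ a : Ordinal.{0} → Ordinal.{0}, (∀ j, a j < lam.ord) ∧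
      (∀ o < lam.ord, ∃ j < θ.ord, o < a j) ∧ ∀ j, ((2 : Cardinal.{0}) ^ θ).ord ≤ a j := by
    refine ⟨fun j => max (a' j) ((2 : Cardinal.{0}) ^ θ).ord, fun j => max_lt (ha' j)
      (Cardinal.ord_lt_ord.2 h2), fun o ho => ?_, fun j => le_max_right _ _⟩
    obtain ⟨j, hj, hj'⟩ := hac' o ho
    exact ⟨j, hj, lt_max_of_lt_left hj'⟩
  let L : Ordinal.{0} → Ordinal.{0} := fun i => ⨆ j : Iio i, a j.1
  have haL : ∀ i, ∀ j < i, a j ≤ L i := fun i j hj =>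
    Ordinal.le_iSup (fun j : Iio i => a j.1) ⟨j, hj⟩
  have hLx : ∀ i x, x < L i → ∃ j < i, x < a j := by
    intro i x hx
    obtain ⟨j, hj⟩ := Ordinal.lt_iSup_iff.1 hx
    exact ⟨j.1, j.2, hj⟩
  have hLl : ∀ i < θ.ord, L i < lam.ord := by
    intro i hi
    have h3 : CofGt lam.ord i.card := cofGt_of_lt_cof (by rw [hcof]; exact Cardinal.lt_ord.1 hi)
    obtain ⟨b, hb, hb'⟩ := h3.gen (szLe_Iio le_rfl) (fun j : Iio i => a j.1) (fun j => ha _)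
    exact (Ordinal.iSup_le fun j => (hb' j).le).trans_lt hb
  have hL2 : ∀ i, 0 < i → (2 : Cardinal) ^ θ ≤ (L i).card := fun i hi =>
    Cardinal.ord_le.1 ((ha2 0).trans (haL i 0 hi))
  have h2θ : ℵ₀ ≤ (2 : Cardinal) ^ θ := hθ.le.trans (Cardinal.cantor θ).le
  -- codes
  have hc : ∀ i, ∃ c : (θ.out → Option (Iio (L i))) → Ordinal.{0}, 0 < i → i < θ.ord →
      Function.Injective c ∧ ∀ x, c x < (Order.succ (L i).card).ord := by
    intro i
    by_cases hi : 0 < i ∧ i < θ.ord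
    · have h3 := hL2 i hi.1
      have h4 : SzLe (θ.out → Option (Iio (L i))) (Order.succ (L i).card) := by
        refine szLe_fun (θ := θ) (szLe_iff.2 (by simp)) (szLe_option (h2θ.trans h3) (szLe_Iio le_rfl))
          (Cardinal.aleph0_pos.trans_le (h2θ.trans h3)).ne' ?_
        refine (hQ _ (Cardinal.lt_ord.1 (hLl i hi.2))).trans (max_le (h3.trans (Order.le_succ _)) le_rfl)
      obtain ⟨c, hc1, hc2⟩ := exists_code h4
      exact ⟨c, fun _ _ => ⟨hc1, hc2⟩⟩
    · exact ⟨fun _ => 0, fun h h' => absurd ⟨h, h'⟩ hi⟩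
  choose c hc using hc
  obtain ⟨u, hu, hul⟩ := exists_code (szLe_iff.2 (by simp) : SzLe lam.out lam)
  let φ : (θ.out → lam.out) → Ordinal.{0} → Ordinal.{0} :=
    fun f i => c i (fun t => trO (L i) (u (f t)))
  let FF : (θ.out → lam.out) → Set (θ.out → lam.out) :=
    fun g => {f | Stat θ.ord {i | φ f i ≤ φ g i}}
  have hFF : ∀ g, SzLe (FF g) lam := by
    intro g
    have he : ∀ i, ∃ e : Ordinal.{0} → Ordinal.{0}, 0 < i → i < θ.ord →
        (∀ x ≤ φ g i, e x < L i) ∧ ∀ x ≤ φ g i, ∀ y ≤ φ g i, e x = e y → x = y := by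
      intro i
      by_cases hi : 0 < i ∧ i < θ.ord
      · have h3 : (φ g i).card < Order.succ (L i).card :=
          Cardinal.lt_ord.1 ((hc i hi.1 hi.2).2 _)
        have h3 : (φ g i).card ≤ (L i).card := Order.lt_succ_iff.1 h3
        have h4 : SzLe (Iio (φ g i + 1)) (L i).card := szLe_Iio (by
          rw [Ordinal.card_add_one]
          exact (add_le_add_left h3 1).trans
            (Cardinal.add_one_eq (h2θ.trans (hL2 i hi.1))).le)
        obtain ⟨e, he, he'⟩ := exists_code h4
        classical
        refine ⟨fun x => if h : x < φ g i + 1 then e ⟨x, h⟩ else 0, fun _ _ => ⟨fun x hx => ?_,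
          fun x hx y hy hxy => ?_⟩⟩
        · have hx' : x < φ g i + 1 := Order.lt_add_one_iff.2 hx
          simp only [dif_pos hx']
          exact (he' _).trans_le (Cardinal.ord_card_le _)
        · have hx' : x < φ g i + 1 := Order.lt_add_one_iff.2 hx
          have hy' : y < φ g i + 1 := Order.lt_add_one_iff.2 hy
          simp only [dif_pos hx', dif_pos hy'] at hxy
          exact congrArg Subtype.val (he hxy)
      · exact ⟨fun _ => 0, fun h h' => absurd ⟨h, h'⟩ hi⟩
    choose e he using he
    let DD := Σ j : Iio θ.ord, (Iio θ.ord → Option (Iio (a j.1)))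
    have hDD : SzLe DD lam := by
      refine szLe_sigma h0 (szLe_Iio (by simpa using hθl.le)) fun j => ?_
      have h4 : max (a j.1).card ℵ₀ < lam := max_lt (Cardinal.lt_ord.1 (ha j.1)) (hθ.trans hθl)
      exact szLe_fun (θ := θ) (szLe_Iio (by simp))
        (szLe_option (le_max_right _ _) (szLe_Iio (le_max_left _ _)))
        (Cardinal.aleph0_pos.trans_le (le_max_right _ _)).ne' (hpow _ h4)
    let R : FF g → DD → Prop := fun f d => ∃ T, Stat θ.ord T ∧
      (∀ i ∈ T, 0 < i ∧ i < θ.ord ∧ φ f.1 i ≤ φ g i) ∧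
      (∀ i : Iio θ.ord, i.1 ∈ T → (d.2 i).map (fun z => z.1) = some (e i.1 (φ f.1 i.1))) ∧
      (∀ i : Iio θ.ord, i.1 ∉ T → d.2 i = none)
    have hR : ∀ f, ∃ d, R f d := by
      intro f
      have hT : Stat θ.ord {i | φ f.1 i ≤ φ g i} := f.2
      have hr : ∀ i, ∃ j, φ f.1 i ≤ φ g i → 0 < i → i < θ.ord → j < i ∧ e i (φ f.1 i) < a j := by
        intro i
        by_cases hi : φ f.1 i ≤ φ g i ∧ 0 < i ∧ i < θ.ord
        · obtain ⟨j, hj, hj'⟩ := hLx i _ ((he i hi.2.1 hi.2.2).1 _ hi.1)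
          exact ⟨j, fun _ _ _ => ⟨hj, hj'⟩⟩
        · exact ⟨0, fun h1 h2 h3 => absurd ⟨h1, h2, h3⟩ hi⟩
      choose r hr using hr
      obtain ⟨j, hj, hT'⟩ := hT.fodor hreg r (fun i hi h1 h2 => (hr i hi h1 h2).1)
      have hT2 := hT'.mono (T' := {i | 0 < i ∧ i < θ.ord ∧ φ f.1 i ≤ φ g i ∧ e i (φ f.1 i) < a j})
        (fun i hi h1 h2 => ⟨h1, h2, hi.1, by rw [← hi.2]; exact (hr i hi.1 h1 h2).2⟩)
      classical
      refine ⟨⟨⟨j, hj⟩, fun i => if i.1 ∈ {i | 0 < i ∧ i < θ.ord ∧ φ f.1 i ≤ φ g i ∧ e i (φ f.1 i) < a j}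
        then trO (a j) (e i.1 (φ f.1 i.1)) else none⟩, _, hT2, fun i hi => ⟨hi.1, hi.2.1, hi.2.2.1⟩,
        fun i hi => ?_, fun i hi => if_neg hi⟩
      simp only [if_pos hi, trO, dif_pos hi.2.2.2, Option.map_some]
    choose d hd using hR
    refine hDD.of_inj d fun f f' hff => ?_
    obtain ⟨T, h3, h4, h5, h6⟩ := hd f
    obtain ⟨T', h3', h4', h5', h6'⟩ := hd f'
    rw [← hff] at h5' h6'
    apply Subtype.ext
    funext t
    obtain ⟨j, hj, hj'⟩ := hac _ (hul (f.1 t))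
    obtain ⟨i, hi, hji, hiθ⟩ := h3.exists hj
    have h7 := h5 ⟨i, hiθ⟩ hi
    have hi' : i ∈ T' := by
      by_contra hi'
      rw [h6' ⟨i, hiθ⟩ hi'] at h7
      simp at h7
    have h8 := h7.symm.trans (h5' ⟨i, hiθ⟩ hi')
    have h9 := (he i (h4 i hi).1 hiθ).2 _ (h4 i hi).2.2 _ (h4' i hi').2.2 (Option.some.inj h8)
    have h10 := (hc i (h4 i hi).1 hiθ).1 h9
    exact hu (trO_inj (hj'.trans_le (haL i j hji)) (congrFun h10 t))
  by_contra! hbig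
  have hX : #(θ.out → lam.out) = lam ^ θ := by simp
  rw [← hX] at hbig
  obtain ⟨G, hG⟩ := Cardinal.le_mk_iff_exists_set.1 hbig.le
  have hex : ∃ h, ∀ g ∈ G, h ∉ FF g := by
    by_contra! hno
    choose g hg hg' using hno
    have h3 : SzLe (Σ g : G, FF g.1) (Order.succ lam) :=
      szLe_sigma (h0.trans (Order.le_succ _)) (szLe_iff.2 hG.le)
        (fun g => (hFF g.1).mono (Order.le_succ _))
    have h4 : SzLe (θ.out → lam.out) (Order.succ lam) := h3.of_surj (fun x => x.2.1)
      (fun h => ⟨⟨⟨g h, hg h⟩, ⟨h, hg' h⟩⟩, rfl⟩)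
    exact absurd (szLe_iff.1 h4) (not_le.2 hbig)
  obtain ⟨h, hh⟩ := hex
  have hGF : G ⊆ FF h := by
    intro g hg
    have h3 : ¬ Stat θ.ord {i | φ h i ≤ φ g i} := hh g hg
    rcases (stat_univ hreg).or hreg (fun i => φ h i ≤ φ g i) with h4 | h4
    · exact absurd (h4.mono (T' := {i | φ h i ≤ φ g i}) fun i hi _ _ => hi.2) h3
    · exact h4.mono fun i hi _ _ => (not_le.1 hi.2).le
  have h5 : SzLe G lam := (hFF h).of_inj (Set.inclusion hGF) (Set.inclusion_injective hGF)
  have h6 := szLe_iff.1 h5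
  rw [hG] at h6
  exact absurd h6 (not_le.2 (Order.lt_succ lam))

/-- If `SSR(λ)` holds for every cardinal `λ ≥ ω₂`, then the Singular Cardinal
Hypothesis holds: `λ ^ cof(λ) = λ⁺` for every singular `λ` with `2 ^ cof(λ) < λ`. -/
theorem stmt12 (hssr : ∀ lam : Cardinal.{0}, aleph 2 ≤ lam → SSR lam.ord) :
    ∀ lam : Cardinal.{0}, ℵ₀ ≤ lam → ¬ lam.IsRegular →
      (2 : Cardinal) ^ lam.ord.cof < lam → lam ^ lam.ord.cof = Order.succ lam := by
  intro lam
  induction lam using WellFoundedLT.induction with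
  | ind lam ih =>
  intro h0 hreg h2
  have IH : GoodBelow lam := ih
  have hθ : ℵ₀ ≤ lam.ord.cof := Ordinal.aleph0_le_cof.2 (Cardinal.isSuccLimit_ord h0)
  have hθl : lam.ord.cof < lam := (Cardinal.cantor _).trans h2
  have hsucc : ∀ ν < lam, Order.succ ν < lam := by
    intro ν hν
    refine lt_of_le_of_ne (Order.succ_le_of_lt hν) fun h => ?_
    rcases le_or_gt ℵ₀ ν with h3 | h3
    · exact hreg (h ▸ Cardinal.isRegular_succ h3)
    · have : lam ≤ ℵ₀ := h ▸ Order.succ_le_of_lt h3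
      exact absurd (hθ.trans_lt hθl) (not_lt.2 this)
  have hQ : ∀ μ < lam, μ ^ lam.ord.cof ≤ max ((2 : Cardinal) ^ lam.ord.cof) (Order.succ μ) :=
    fun μ hμ => pow_bound hθ IH μ hμ
  have hpow : ∀ ν < lam, ν ^ lam.ord.cof ≤ lam := fun ν hν =>
    (hQ ν hν).trans (max_le h2.le (hsucc ν hν).le)
  refine le_antisymm ?_ (Order.succ_le_of_lt (Cardinal.lt_power_cof_ord h0))
  rcases hθ.eq_or_lt with h3 | h3
  · rw [← h3] at h2 hpow ⊢
    exact omega_case hssr h0 h3.symm h2 hsucc hpow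
  · exact silver h0 rfl h3 hθl h2 hQ hpow

end
end
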